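/- Let T be a contraction on a complex Hilbert space H. Then for every x ∈ H, the averages along the primes (1/n)∑_{j=1}^n T^{p_j} x converge in norm; moreover the limit equals lim_{N→∞} (1/N)∑_{j=1}^{π(N)} (log p_j) T^{p_j} x = lim_{N→∞} (1/N)∑_{k=1}^N Λ(k) T^k x, and this limit is 0 whenever x is a flight vector of T. -/

import Mathlib

open Filter Finset

/-!
The correlations `⟪x, T ^ n x⟫` of a contraction form a positive definite sequence, so by Herglotz
they are the Fourier coefficients of a measure `μ` on the circle, and `‖p(T) x‖² ≤ ∫ |p|² dμ` for
every polynomial `p`. Hence the averages `N⁻¹ ∑ Λ(k) T ^ k x` converge as soon as the scalar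
averages `N⁻¹ ∑ Λ(k) z ^ k` converge for every `z` on the circle.

At a root of unity this is the prime number theorem in arithmetic progressions, obtained from the
nonvanishing of Dirichlet `L`-functions by the Wiener–Ikehara theorem. At any other `z` the limit
is `0`, by Vinogradov's method without rates. Write `∑ Λ(k) z ^ k` as `∑ μ(d) log m · z ^ (d m)` and
split at `m = K`. For each of the finitely many `m ≤ K` the sum over `d` is `o(N)`, since `μ` is
multiplicative and bounded (Daboussi and Kátai, from the Turán–Kubilius inequality). For `m > K`
compare `z` with a nearby root of unity of order `q`: if `q ∤ d` the sum over `m` cancels, and the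
terms `d = q e` contribute `μ(q) ∑ (μ_q * log)(k) z ^ (q k)` over `k ≤ N / q`, where `μ_q` is `μ`
restricted to the integers coprime to `q`; as `μ_q * log ≥ 0` this is `O(N / √q)`, and `q → ∞`
with `N`.

A flight vector is orthogonal to all unimodular eigenvectors, so its `μ` has no point masses, does
not charge the roots of unity, and the limit is `0`. Finally, prime powers are negligible and the
weights `log p` are removed by Chebyshev-type estimates.
-/

section FejerKernel

variable {l : ℝ}

/-- The tent function of half-width `l`, the Fourier weight of the Fejér kernel. It is only used
on `[-l, l]`, where it is nonnegative. -/
noncomputable def tent (l t : ℝ) : ℝ := 1 - |t| / l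

/-- The Fejér kernel at scale `l`, that is `2 (1 - cos (l w)) / (l w ^ 2)`, used as a band-limited
approximate identity. Writing it through `sinc` gives the right value at `w = 0`. -/
noncomputable def fejerKernel (l w : ℝ) : ℝ := l * Real.sinc (l * w / 2) ^ 2

lemma continuous_tent (l : ℝ) : Continuous (tent l) := by
  unfold tent
  fun_prop

lemma abs_tent_le_one (hl : 0 < l) {t : ℝ} (ht : |t| ≤ l) : |tent l t| ≤ 1 := by
  have h₁ : |t| / l ≤ 1 := (div_le_one hl).2 ht
  have h₀ : 0 ≤ |t| / l := by positivity
  rw [tent, abs_le]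
  constructor <;> linarith

lemma continuous_fejerKernel (l : ℝ) : Continuous (fejerKernel l) := by
  have := Real.continuous_sinc
  unfold fejerKernel
  fun_prop

lemma fejerKernel_nonneg (hl : 0 < l) (w : ℝ) : 0 ≤ fejerKernel l w := by
  unfold fejerKernel
  positivity

lemma fejerKernel_le (hl : 0 < l) (w : ℝ) : fejerKernel l w ≤ l :=
  mul_le_of_le_one_right hl.le ((sq_le_one_iff_abs_le_one _).2 (Real.abs_sinc_le_one _))

lemma fejerKernel_mul_sq (hl : 0 < l) (w : ℝ) :
    fejerKernel l w * w ^ 2 = 4 / l * Real.sin (l * w / 2) ^ 2 := by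
  rcases eq_or_ne w 0 with rfl | hw
  · simp
  · rw [fejerKernel, Real.sinc_of_ne_zero (by positivity)]
    field_simp
    ring

lemma fejerKernel_mul_sq_le (hl : 0 < l) (w : ℝ) : fejerKernel l w * w ^ 2 ≤ 4 / l := by
  rw [fejerKernel_mul_sq hl]
  exact mul_le_of_le_one_right (by positivity) (Real.sin_sq_le_one _)

lemma fejerKernel_le_inv_one_add_sq (hl : 0 < l) (w : ℝ) :
    fejerKernel l w ≤ (l + 4 / l) * (1 + w ^ 2)⁻¹ := by
  rw [← div_eq_mul_inv, le_div_iff₀ (by positivity), mul_add, mul_one]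
  exact add_le_add (fejerKernel_le hl w) (fejerKernel_mul_sq_le hl w)

lemma fejerKernel_le_of_le_abs (hl : 0 < l) {c w : ℝ} (hc : 0 < c) (hw : c ≤ |w|) :
    fejerKernel l w ≤ 4 / l * (1 + 1 / c ^ 2) * (1 + w ^ 2)⁻¹ := by
  have hcw : c ^ 2 ≤ w ^ 2 := sq_abs w ▸ by gcongr
  have hw₀ : 0 < w ^ 2 := (by positivity : 0 < c ^ 2).trans_le hcw
  have hratio : 1 + w ^ 2 ≤ (1 + 1 / c ^ 2) * w ^ 2 := by
    have : 1 ≤ 1 / c ^ 2 * w ^ 2 := by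
      rwa [one_div_mul_eq_div, one_le_div (by positivity)]
    linarith
  calc fejerKernel l w ≤ 4 / l / w ^ 2 := (le_div_iff₀ hw₀).2 (fejerKernel_mul_sq_le hl w)
    _ ≤ 4 / l * (1 + 1 / c ^ 2) * (1 + w ^ 2)⁻¹ := by
      rw [← div_eq_mul_inv, div_le_div_iff₀ hw₀ (by positivity), mul_assoc]
      gcongr

lemma two_fifths_mul_le_fejerKernel (hl : 0 < l) {w : ℝ} (hw : |w| ≤ 1 / l) :
    2 / 5 * l ≤ fejerKernel l w := by
  rcases eq_or_ne w 0 with rfl | hw₀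
  · simp only [fejerKernel, mul_zero, zero_div, Real.sinc_zero, one_pow, mul_one]
    linarith
  have hπ := Real.pi_gt_three
  have hlw : |l * w / 2| ≤ Real.pi / 2 := by
    rw [le_div_iff₀ hl] at hw
    rw [abs_div, abs_mul, abs_of_pos hl, abs_two]
    linarith
  have hsinc : 2 / Real.pi ≤ |Real.sinc (l * w / 2)| := by
    have : l * w / 2 ≠ 0 := by positivity
    rw [Real.sinc_of_ne_zero this, abs_div, le_div_iff₀ (by positivity)]
    exact Real.mul_abs_le_abs_sin hlw
  have hconst : (2 : ℝ) / 5 ≤ (2 / Real.pi) ^ 2 := by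
    rw [div_pow, div_le_div_iff₀ (by norm_num) (by positivity)]
    nlinarith [Real.pi_lt_d2]
  calc 2 / 5 * l ≤ (2 / Real.pi) ^ 2 * l := by gcongr
    _ ≤ |Real.sinc (l * w / 2)| ^ 2 * l := by gcongr
    _ = fejerKernel l w := by rw [sq_abs, mul_comm, fejerKernel]

lemma two_mul_integral_mul_cos (hl : 0 < l) (w : ℝ) :
    ∫ t in 0..l, 2 * ((1 - t / l) * Real.cos (t * w)) = fejerKernel l w := by
  rcases eq_or_ne w 0 with rfl | hw
  · simp only [mul_zero, Real.cos_zero, mul_one, intervalIntegral.integral_const_mul,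
      intervalIntegrable_const, intervalIntegral.intervalIntegrable_id,
      IntervalIntegrable.div_const, intervalIntegral.integral_sub, intervalIntegral.integral_const,
      sub_zero, smul_eq_mul, intervalIntegral.integral_div, integral_id, ne_eq, OfNat.ofNat_ne_zero,
      not_false_eq_true, zero_pow, fejerKernel, zero_div, Real.sinc_zero, one_pow]
    field_simp
    ring
  · have hderiv (t : ℝ) : HasDerivAt
        (fun t ↦ 2 * ((1 - t / l) * (Real.sin (t * w) / w) - Real.cos (t * w) / (l * w ^ 2)))
        (2 * ((1 - t / l) * Real.cos (t * w))) t := by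
      have hlin : HasDerivAt (fun t ↦ t * w) w t := by simpa using (hasDerivAt_id t).mul_const w
      have htent : HasDerivAt (fun t ↦ 1 - t / l) (-(1 / l)) t :=
        ((hasDerivAt_id t).div_const l).const_sub 1
      refine (((htent.mul (hlin.sin.div_const w)).sub
        (hlin.cos.div_const (l * w ^ 2))).const_mul 2).congr_deriv ?_
      field_simp
      ring
    rw [intervalIntegral.integral_eq_sub_of_hasDerivAt (fun t _ ↦ hderiv t)
      (Continuous.intervalIntegrable (by fun_prop) _ _)]
    refine mul_right_cancel₀ (pow_ne_zero 2 hw) ?_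
    rw [fejerKernel_mul_sq hl, Real.sin_sq_eq_half_sub, mul_div_cancel₀ _ two_ne_zero]
    simp only [zero_mul, Real.sin_zero, Real.cos_zero]
    field_simp
    ring

lemma integral_tent_mul_exp (hl : 0 < l) (w : ℝ) :
    ∫ t in (-l)..l, (tent l t : ℂ) * Complex.exp (Complex.I * t * w) = fejerKernel l w := by
  set f : ℝ → ℂ := fun t ↦ (tent l t : ℂ) * Complex.exp (Complex.I * t * w) with hf
  have hcont : Continuous f := by
    have := continuous_tent l
    fun_prop
  have hreflect : ∫ t in (-l)..0, f t = ∫ t in 0..l, f (-t) := by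
    rw [intervalIntegral.integral_comp_neg, neg_zero]
  have hcont' : Continuous fun t ↦ f (-t) := hcont.comp continuous_neg
  rw [← intervalIntegral.integral_add_adjacent_intervals (hcont.intervalIntegrable _ 0)
    (hcont.intervalIntegrable 0 _), hreflect,
    ← intervalIntegral.integral_add (hcont'.intervalIntegrable _ _) (hcont.intervalIntegrable _ _),
    ← two_mul_integral_mul_cos hl, ← intervalIntegral.integral_ofReal]
  refine intervalIntegral.integral_congr fun t ht ↦ ?_
  rw [Set.uIcc_of_le hl.le] at ht
  simp only [hf, tent, abs_neg, abs_of_nonneg ht.1]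
  push_cast
  rw [Complex.cos]
  ring_nf

end FejerKernel

section WienerIkehara

open MeasureTheory
open scoped Topology

variable {D : ℝ → ℝ} {C l : ℝ}

lemma integrableOn_mul_fejerKernel (hD : Measurable D) (hC : ∀ u, |D u| ≤ C) (hl : 0 < l) (v : ℝ)
    (s : Set ℝ) : IntegrableOn (fun u ↦ D u * fejerKernel l (v - u)) s := by
  have hK : Measurable fun u ↦ fejerKernel l (v - u) :=
    (continuous_fejerKernel l).measurable.comp (measurable_const.sub measurable_id)
  have hdom : Integrable fun u : ℝ ↦ C * ((l + 4 / l) * (1 + (v - u) ^ 2)⁻¹) :=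
    ((integrable_inv_one_add_sq.comp_sub_left v).const_mul _).const_mul C
  refine (hdom.mono' (hD.mul hK).aestronglyMeasurable (.of_forall fun u ↦ ?_)).integrableOn
  rw [Pi.mul_apply, Real.norm_eq_abs, abs_mul, abs_of_nonneg (fejerKernel_nonneg hl _)]
  exact mul_le_mul (hC u) (fejerKernel_le_inv_one_add_sq hl _) (fejerKernel_nonneg hl _)
    ((abs_nonneg _).trans (hC u))

lemma integrable_tent_mul_exp_mul_laplace (hD : Measurable D) (hC : ∀ u, |D u| ≤ C) (hl : 0 < l)
    {ε : ℝ} (hε : 0 < ε) (v : ℝ) :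
    Integrable (Function.uncurry fun t u : ℝ ↦ (tent l t : ℂ) * Complex.exp (Complex.I * t * v) *
      ((D u : ℂ) * Complex.exp (-(ε + Complex.I * t) * u)))
      ((volume.restrict (Set.Ioc (-l) l)).prod (volume.restrict (Set.Ioi 0))) := by
  have hdom : Integrable (fun p : ℝ × ℝ ↦ (1 : ℝ) * (C * Real.exp (-ε * p.2)))
      ((volume.restrict (Set.Ioc (-l) l)).prod (volume.restrict (Set.Ioi 0))) :=
    (integrable_const 1).mul_prod ((exp_neg_integrableOn_Ioi 0 hε).const_mul C)
  refine hdom.mono' ?_ ?_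
  · have : Measurable fun p : ℝ × ℝ ↦ D p.2 := hD.comp measurable_snd
    have := (continuous_tent l).measurable
    unfold Function.uncurry
    exact Measurable.aestronglyMeasurable (by fun_prop)
  · rw [Measure.prod_restrict]
    refine (ae_restrict_iff' (measurableSet_Ioc.prod measurableSet_Ioi)).2 (.of_forall ?_)
    rintro ⟨t, u⟩ ⟨ht, -⟩
    have ht' : |tent l t| ≤ 1 := abs_tent_le_one hl (abs_le.2 ⟨ht.1.le, ht.2⟩)
    have h₁ : (Complex.I * t * v).re = 0 := by simp
    have h₂ : (-(ε + Complex.I * t) * u).re = -ε * u := by simp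
    simp only [Function.uncurry, norm_mul, Complex.norm_real, Real.norm_eq_abs, Complex.norm_exp,
      h₁, h₂, Real.exp_zero, mul_one]
    gcongr
    exact hC u

lemma integral_tent_mul_exp_mul_laplace (hD : Measurable D) (hC : ∀ u, |D u| ≤ C) (hl : 0 < l)
    {ε : ℝ} (hε : 0 < ε) (v : ℝ) :
    ∫ t in (-l)..l, (tent l t : ℂ) * Complex.exp (Complex.I * t * v) *
        ∫ u in Set.Ioi (0 : ℝ), (D u : ℂ) * Complex.exp (-(ε + Complex.I * t) * u) =
      ∫ u in Set.Ioi (0 : ℝ), ((Real.exp (-ε * u) * (D u * fejerKernel l (v - u)) : ℝ) : ℂ) := by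
  have hkernel (u : ℝ) : ((Real.exp (-ε * u) * (D u * fejerKernel l (v - u)) : ℝ) : ℂ) =
      ∫ t in (-l)..l, (tent l t : ℂ) * Complex.exp (Complex.I * t * v) *
        ((D u : ℂ) * Complex.exp (-(ε + Complex.I * t) * u)) := by
    push_cast
    rw [← integral_tent_mul_exp hl, ← intervalIntegral.integral_const_mul,
      ← intervalIntegral.integral_const_mul]
    refine intervalIntegral.integral_congr fun t _ ↦ ?_
    have hexp : Complex.exp (-ε * u) * Complex.exp (Complex.I * t * (v - u)) =
        Complex.exp (Complex.I * t * v) * Complex.exp (-(ε + Complex.I * t) * u) := by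
      rw [← Complex.exp_add, ← Complex.exp_add]
      congr 1
      ring
    push_cast
    linear_combination (D u * tent l t : ℂ) * hexp
  simp_rw [hkernel, intervalIntegral.integral_of_le (neg_le_self hl.le), ← integral_const_mul]
  exact integral_integral_swap (integrable_tent_mul_exp_mul_laplace hD hC hl hε v)

lemma tendsto_integral_exp_neg_mul {f : ℝ → ℝ} (hf : IntegrableOn f (Set.Ioi 0)) {e : ℕ → ℝ}
    (he₀ : ∀ n, 0 < e n) (he : Tendsto e atTop (𝓝 0)) :
    Tendsto (fun n ↦ ∫ u in Set.Ioi (0 : ℝ), ((Real.exp (-e n * u) * f u : ℝ) : ℂ)) atTop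
      (𝓝 (∫ u in Set.Ioi (0 : ℝ), (f u : ℂ))) := by
  refine tendsto_integral_of_dominated_convergence (fun u ↦ ‖f u‖) (fun n ↦ ?_) hf.norm
    (fun n ↦ ?_) (.of_forall fun u ↦ ?_)
  · have : Continuous fun u ↦ Real.exp (-e n * u) := by fun_prop
    exact Complex.continuous_ofReal.comp_aestronglyMeasurable (this.aestronglyMeasurable.mul hf.1)
  · refine (ae_restrict_iff' measurableSet_Ioi).2 (.of_forall fun u (hu : 0 < u) ↦ ?_)
    have : Real.exp (-e n * u) ≤ 1 := Real.exp_le_one_iff.2 (by nlinarith [mul_pos (he₀ n) hu])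
    rw [Complex.norm_real, norm_mul, Real.norm_eq_abs, abs_of_pos (Real.exp_pos _)]
    exact mul_le_of_le_one_left (norm_nonneg _) this
  · have hexp : Tendsto (fun n ↦ Real.exp (-e n * u)) atTop (𝓝 1) := by
      have : Tendsto (fun n ↦ -e n * u) atTop (𝓝 0) := by simpa using he.neg.mul_const u
      simpa only [Real.exp_zero, Function.comp_def] using (Real.continuous_exp.tendsto 0).comp this
    simpa only [one_mul, Function.comp_def] using
      (Complex.continuous_ofReal.tendsto _).comp (hexp.mul_const (f u))

lemma tendsto_integral_tent_mul_exp_mul {G : ℂ → ℂ} (hG : ContinuousOn G {s | 0 ≤ s.re})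
    (l v : ℝ) {e : ℕ → ℝ} (he₀ : ∀ n, 0 < e n) (he : Tendsto e atTop (𝓝 0)) :
    Tendsto (fun n ↦ ∫ t in (-l)..l, (tent l t : ℂ) * Complex.exp (Complex.I * t * v) *
      G (e n + Complex.I * t)) atTop
      (𝓝 (∫ t in (-l)..l, (tent l t : ℂ) * Complex.exp (Complex.I * t * v) *
        G (Complex.I * t))) := by
  have hGcont : Continuous fun p : Set.Ici (0 : ℝ) × ℝ ↦ G (p.1.1 + Complex.I * p.2) := by
    rw [← continuousOn_univ]
    refine hG.comp (by fun_prop) fun p _ ↦ ?_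
    have hp : (p.1.1 + Complex.I * p.2 : ℂ).re = p.1.1 := by simp
    exact hp.ge.trans' p.1.2
  have hcont : Continuous (Function.uncurry fun (a : Set.Ici (0 : ℝ)) (t : ℝ) ↦
      (tent l t : ℂ) * Complex.exp (Complex.I * t * v) * G (a.1 + Complex.I * t)) := by
    have := continuous_tent l
    exact Continuous.mul (by fun_prop) hGcont
  have he' : Tendsto (fun n ↦ (⟨e n, (he₀ n).le⟩ : Set.Ici (0 : ℝ))) atTop
      (𝓝 ⟨0, Set.self_mem_Ici⟩) :=
    tendsto_subtype_rng.2 he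
  have := (intervalIntegral.continuous_parametric_intervalIntegral_of_continuous'
    (μ := volume) hcont (-l) l).tendsto _ |>.comp he'
  simpa only [Function.comp_def, Complex.ofReal_zero, zero_add] using this

lemma tendsto_integral_mul_exp_atTop (a b : ℝ) (hab : a ≤ b) (g : ℝ → ℂ) :
    Tendsto (fun v : ℝ ↦ ∫ t in a..b, g t * Complex.exp (Complex.I * t * v)) atTop (𝓝 0) := by
  have hRL := Real.tendsto_integral_exp_smul_cocompact ((Set.Ioc a b).indicator g)
  have hv : Tendsto (fun v : ℝ ↦ -v / (2 * Real.pi)) atTop (cocompact ℝ) :=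
    (tendsto_neg_atTop_atBot.atBot_div_const (by positivity)).mono_right atBot_le_cocompact
  refine (hRL.comp hv).congr fun v ↦ ?_
  rw [intervalIntegral.integral_of_le hab, ← integral_indicator measurableSet_Ioc]
  refine integral_congr_ae (.of_forall fun t ↦ ?_)
  by_cases ht : t ∈ Set.Ioc a b
  · have hphase : 2 * Real.pi * -(t * (-v / (2 * Real.pi))) = t * v := by field_simp
    simp only [Set.indicator_of_mem ht, Circle.smul_def, Real.fourierChar_apply, smul_eq_mul,
      hphase, mul_comm (g t)]
    push_cast
    ring_nf
  · simp only [Set.indicator_of_notMem ht, smul_zero]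

theorem tendsto_integral_mul_fejerKernel (hD : Measurable D) (hC : ∀ u, |D u| ≤ C) {G : ℂ → ℂ}
    (hG : ContinuousOn G {s | 0 ≤ s.re})
    (hGD : ∀ s : ℂ, 0 < s.re → ∫ u in Set.Ioi (0 : ℝ), (D u : ℂ) * Complex.exp (-s * u) = G s)
    (hl : 0 < l) :
    Tendsto (fun v ↦ ∫ u in Set.Ioi (0 : ℝ), D u * fejerKernel l (v - u)) atTop (𝓝 0) := by
  have hboundary (v : ℝ) : ((∫ u in Set.Ioi (0 : ℝ), D u * fejerKernel l (v - u) : ℝ) : ℂ) =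
      ∫ t in (-l)..l, (tent l t : ℂ) * G (Complex.I * t) * Complex.exp (Complex.I * t * v) := by
    let e (n : ℕ) : ℝ := 1 / ((n : ℝ) + 1)
    have he₀ (n : ℕ) : 0 < e n := by positivity
    have he : Tendsto e atTop (𝓝 0) := tendsto_one_div_add_atTop_nhds_zero_nat
    have hright := tendsto_integral_exp_neg_mul
      (integrableOn_mul_fejerKernel hD hC hl v (Set.Ioi 0)) he₀ he
    have hleft := tendsto_integral_tent_mul_exp_mul hG l v he₀ he
    refine integral_ofReal.symm.trans ((tendsto_nhds_unique hright (hleft.congr fun n ↦ ?_)).trans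
      (intervalIntegral.integral_congr fun t _ ↦ mul_right_comm _ _ _))
    rw [← integral_tent_mul_exp_mul_laplace hD hC hl (he₀ n)]
    refine intervalIntegral.integral_congr fun t _ ↦ ?_
    simp only [hGD (e n + Complex.I * t) (by simpa using he₀ n)]
  have hlim := tendsto_integral_mul_exp_atTop (-l) l (neg_le_self hl.le)
    fun t ↦ (tent l t : ℂ) * G (Complex.I * t)
  simp only [← hboundary] at hlim
  simpa only [Function.comp_def, Complex.ofReal_re, Complex.zero_re] using
    (Complex.continuous_re.tendsto _).comp hlim

lemma indicator_sub_le_mul_fejerKernel (hl : 0 < l) {d c δ w : ℝ} (hd : |d| ≤ C) (hδ : 0 ≤ δ)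
    (hc : 0 < c) (hlc : 1 / l ≤ c) (hdδ : |w| ≤ c → δ ≤ d) :
    (Set.Icc (-(1 / l)) (1 / l)).indicator (fun _ ↦ δ * (2 / 5 * l)) w -
      C * (4 / l * (1 + 1 / c ^ 2)) * (1 + w ^ 2)⁻¹ ≤ d * fejerKernel l w := by
  have hK := fejerKernel_nonneg hl w
  have hC : 0 ≤ C := (abs_nonneg d).trans hd
  have htail : 0 ≤ C * (4 / l * (1 + 1 / c ^ 2)) * (1 + w ^ 2)⁻¹ := by positivity
  by_cases hw : |w| ≤ c
  · refine (sub_le_self _ htail).trans (Set.indicator_apply_le' (fun hwl ↦ ?_) fun _ ↦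
      mul_nonneg (hδ.trans (hdδ hw)) hK)
    exact mul_le_mul (hdδ hw) (two_fifths_mul_le_fejerKernel hl (abs_le.2 hwl)) (by positivity)
      (hδ.trans (hdδ hw))
  · have hwl : w ∉ Set.Icc (-(1 / l)) (1 / l) := fun h ↦ hw ((abs_le.2 h).trans hlc)
    rw [Set.indicator_of_notMem hwl, zero_sub, mul_assoc]
    calc -(C * (4 / l * (1 + 1 / c ^ 2) * (1 + w ^ 2)⁻¹)) ≤ -(C * fejerKernel l w) := by
          gcongr
          exact fejerKernel_le_of_le_abs hl hc (not_le.1 hw).le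
      _ ≤ d * fejerKernel l w := by
          rw [← neg_mul]
          exact mul_le_mul_of_nonneg_right (neg_le_of_abs_le hd) hK

lemma le_integral_mul_fejerKernel (hD : Measurable D) (hC : ∀ u, |D u| ≤ C) (hl : 0 < l)
    {c δ v : ℝ} (hδ : 0 ≤ δ) (hc : 0 < c) (hlc : 1 / l ≤ c) (hv : c < v)
    (hDδ : ∀ u, |u - v| ≤ c → δ ≤ D u) :
    4 / 5 * δ - C * (4 / l * (1 + 1 / c ^ 2)) * Real.pi ≤
      ∫ u in Set.Ioi 0, D u * fejerKernel l (v - u) := by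
  set E := C * (4 / l * (1 + 1 / c ^ 2))
  have hE₀ : 0 ≤ E := by
    have := (abs_nonneg (D 0)).trans (hC 0)
    positivity
  let peak : ℝ → ℝ := (Set.Icc (-(1 / l)) (1 / l)).indicator fun _ ↦ δ * (2 / 5 * l)
  have hpeak_int : Integrable fun u ↦ peak (v - u) := by
    refine Integrable.comp_sub_left (f := peak) ?_ v
    exact (integrable_indicator_iff measurableSet_Icc).2 (integrableOn_const (by simp))
  have htail_int : Integrable fun u ↦ E * (1 + (v - u) ^ 2)⁻¹ :=
    (integrable_inv_one_add_sq.comp_sub_left v).const_mul E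
  have hpeak : ∫ u in Set.Ioi 0, peak (v - u) = 4 / 5 * δ := by
    have hsupp : ∀ u ∉ Set.Ioi (0 : ℝ), peak (v - u) = 0 := fun u hu ↦
      Set.indicator_of_notMem (fun h ↦ hu (by
        simp only [Set.mem_Ioi]
        linarith [h.2])) _
    rw [setIntegral_eq_integral_of_forall_compl_eq_zero hsupp, integral_sub_left_eq_self peak,
      integral_indicator measurableSet_Icc, setIntegral_const, Real.volume_real_Icc,
      sub_neg_eq_add, max_eq_left (by positivity), smul_eq_mul]
    field_simp
    ring
  have htail : ∫ u in Set.Ioi 0, E * (1 + (v - u) ^ 2)⁻¹ ≤ E * Real.pi :=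
    calc ∫ u in Set.Ioi 0, E * (1 + (v - u) ^ 2)⁻¹ ≤ ∫ u, E * (1 + (v - u) ^ 2)⁻¹ :=
          setIntegral_le_integral htail_int (.of_forall fun u ↦ by
            simp only [Pi.zero_apply]
            positivity)
      _ = E * Real.pi := by
          rw [integral_const_mul, integral_sub_left_eq_self fun u : ℝ ↦ (1 + u ^ 2)⁻¹,
            integral_univ_inv_one_add_sq]
  calc 4 / 5 * δ - E * Real.pi
      ≤ ∫ u in Set.Ioi 0, (peak (v - u) - E * (1 + (v - u) ^ 2)⁻¹) := by
        rw [integral_sub hpeak_int.integrableOn htail_int.integrableOn, hpeak]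
        exact sub_le_sub_left htail _
    _ ≤ ∫ u in Set.Ioi 0, D u * fejerKernel l (v - u) :=
        setIntegral_mono (hpeak_int.sub htail_int).integrableOn
          (integrableOn_mul_fejerKernel hD hC hl v _) fun u ↦
            indicator_sub_le_mul_fejerKernel hl (hC u) hδ hc hlc fun h ↦
              hDδ u (by rwa [abs_sub_comm])

lemma eventually_exists_lt_of_tendsto_integral_mul_fejerKernel (hD : Measurable D)
    (hC : ∀ u, |D u| ≤ C)
    (hDK : ∀ l > 0, Tendsto (fun v ↦ ∫ u in Set.Ioi (0 : ℝ), D u * fejerKernel l (v - u))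
      atTop (𝓝 0)) {c δ : ℝ} (hc : 0 < c) (hδ : 0 < δ) :
    ∀ᶠ v in atTop, ∃ u, |u - v| ≤ c ∧ D u < δ := by
  set W := C * (4 * (1 + 1 / c ^ 2)) * Real.pi with hW
  obtain ⟨l, hlc, hWl, hl⟩ : ∃ l : ℝ, 1 / c ≤ l ∧ W * (5 / δ) ≤ l ∧ 0 < l :=
    ((eventually_ge_atTop (1 / c)).and
      ((eventually_ge_atTop (W * (5 / δ))).and (eventually_gt_atTop 0))).exists
  have hsmall : C * (4 / l * (1 + 1 / c ^ 2)) * Real.pi ≤ δ / 5 := by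
    calc C * (4 / l * (1 + 1 / c ^ 2)) * Real.pi = W / l := by rw [hW]; field_simp
      _ ≤ δ / 5 := by
        rw [div_le_iff₀ hl, ← div_le_iff₀' (by positivity), div_div_eq_mul_div]
        rwa [mul_div_assoc]
  filter_upwards [(hDK l hl).eventually_lt_const (by positivity : 0 < δ / 5),
    eventually_gt_atTop c] with v hint hv
  by_contra! hle
  have := le_integral_mul_fejerKernel hD hC hl hδ.le hc (one_div_le hl hc |>.2 hlc) hv hle
  linarith

section SlowlyDecreasing

variable {B : ℝ → ℝ} {A a : ℝ}

lemma eventually_const_lt_of_eventually_exists_near (hB₀ : ∀ u, 0 ≤ B u)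
    (hmono : ∀ u c, 0 ≤ u → 0 ≤ c → Real.exp (-c) * B u ≤ B (u + c))
    (hnear : ∀ c > 0, ∀ δ > 0, ∀ᶠ v in atTop, ∃ u, |u - v| ≤ c ∧ A - δ < B u) (ha : a < A) :
    ∀ᶠ v in atTop, a < B v := by
  obtain ⟨c, hc, hca⟩ : ∃ c > 0, Real.exp (2 * c) * a < A := by
    have hlim : Tendsto (fun c ↦ Real.exp (2 * c) * a) (𝓝[>] 0) (𝓝 a) := by
      have hcont : Continuous fun c ↦ Real.exp (2 * c) * a := by fun_prop
      simpa using (hcont.tendsto 0).mono_left nhdsWithin_le_nhds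
    exact (eventually_mem_nhdsWithin.and (hlim.eventually_lt_const ha)).exists
  filter_upwards [(tendsto_atTop_add_const_right _ (-c) tendsto_id).eventually
    (hnear c hc _ (sub_pos.2 hca)), eventually_ge_atTop (2 * c)] with v ⟨u, huv, hu⟩ hv
  obtain ⟨hlow, hupp⟩ := abs_le.1 huv
  simp only [id_eq, sub_sub_cancel] at hlow hupp hu
  by_contra! hBv
  have hBu : Real.exp (-(v - u)) * B u ≤ B v := by
    simpa using hmono u (v - u) (by linarith) (by linarith)
  have hle : B u ≤ Real.exp (2 * c) * a :=
    calc B u = Real.exp (v - u) * (Real.exp (-(v - u)) * B u) := by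
          rw [← mul_assoc, ← Real.exp_add, add_neg_cancel, Real.exp_zero, one_mul]
      _ ≤ Real.exp (2 * c) * a :=
        mul_le_mul (Real.exp_le_exp.2 (by linarith)) (hBu.trans hBv)
          (mul_nonneg (Real.exp_pos _).le (hB₀ u)) (Real.exp_pos _).le
  exact hle.not_gt hu

lemma eventually_lt_const_of_eventually_exists_near (hB₀ : ∀ u, 0 ≤ B u)
    (hmono : ∀ u c, 0 ≤ u → 0 ≤ c → Real.exp (-c) * B u ≤ B (u + c))
    (hnear : ∀ c > 0, ∀ δ > 0, ∀ᶠ v in atTop, ∃ u, |u - v| ≤ c ∧ B u < A + δ) (ha : A < a) :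
    ∀ᶠ v in atTop, B v < a := by
  obtain ⟨c, hc, hca⟩ : ∃ c > 0, A < Real.exp (-(2 * c)) * a := by
    have hlim : Tendsto (fun c ↦ Real.exp (-(2 * c)) * a) (𝓝[>] 0) (𝓝 a) := by
      have hcont : Continuous fun c ↦ Real.exp (-(2 * c)) * a := by fun_prop
      simpa using (hcont.tendsto 0).mono_left nhdsWithin_le_nhds
    exact (eventually_mem_nhdsWithin.and (hlim.eventually_const_lt ha)).exists
  filter_upwards [(tendsto_atTop_add_const_right _ c tendsto_id).eventually
    (hnear c hc _ (sub_pos.2 hca)), eventually_ge_atTop 0] with v ⟨u, huv, hu⟩ hv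
  obtain ⟨hlow, hupp⟩ := abs_le.1 huv
  simp only [id_eq, add_sub_cancel] at hlow hupp hu
  by_contra! hBv
  have hBv₀ := hB₀ v
  refine hu.not_ge ?_
  calc Real.exp (-(2 * c)) * a ≤ Real.exp (-(2 * c)) * B v := by gcongr
    _ ≤ Real.exp (-(u - v)) * B v := by
      gcongr
      linarith
    _ ≤ B u := by simpa using hmono v (u - v) hv (by linarith)

end SlowlyDecreasing

theorem tendsto_of_continuousOn_laplace {B : ℝ → ℝ} {A C : ℝ} (hB : Measurable B)
    (hB₀ : ∀ u, 0 ≤ B u) (hBC : ∀ u, B u ≤ C)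
    (hmono : ∀ u c, 0 ≤ u → 0 ≤ c → Real.exp (-c) * B u ≤ B (u + c))
    {G : ℂ → ℂ} (hG : ContinuousOn G {s | 0 ≤ s.re})
    (hGB : ∀ s : ℂ, 0 < s.re →
      ∫ u in Set.Ioi (0 : ℝ), ((B u - A : ℝ) : ℂ) * Complex.exp (-s * u) = G s) :
    Tendsto B atTop (𝓝 A) := by
  have hmeas : Measurable fun u ↦ B u - A := hB.sub_const A
  have hbound (u : ℝ) : |B u - A| ≤ C + |A| :=
    (abs_sub _ _).trans (add_le_add_left (by rw [abs_of_nonneg (hB₀ u)]; exact hBC u) _)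
  have hconv (l : ℝ) (hl : 0 < l) := tendsto_integral_mul_fejerKernel hmeas hbound hG hGB hl
  have hconv_neg (l : ℝ) (hl : 0 < l) : Tendsto
      (fun v ↦ ∫ u in Set.Ioi (0 : ℝ), -(B u - A) * fejerKernel l (v - u)) atTop (𝓝 0) := by
    simpa only [neg_mul, integral_neg, neg_zero] using (hconv l hl).neg
  refine tendsto_order.2 ⟨fun a ha ↦ ?_, fun a ha ↦ ?_⟩
  · refine eventually_const_lt_of_eventually_exists_near hB₀ hmono (fun c hc δ hδ ↦ ?_) ha
    filter_upwards [eventually_exists_lt_of_tendsto_integral_mul_fejerKernel hmeas.neg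
      (fun u ↦ (abs_neg _).trans_le (hbound u)) hconv_neg hc hδ] with v ⟨u, huv, hu⟩
    exact ⟨u, huv, by simp only [Pi.neg_apply] at hu; linarith⟩
  · refine eventually_lt_const_of_eventually_exists_near hB₀ hmono (fun c hc δ hδ ↦ ?_) ha
    filter_upwards [eventually_exists_lt_of_tendsto_integral_mul_fejerKernel hmeas hbound hconv
      hc hδ] with v ⟨u, huv, hu⟩
    exact ⟨u, huv, by linarith⟩

end WienerIkehara

section PrimesInProgressions

open MeasureTheory ArithmeticFunction
open scoped Topology

/-- The summatory function of `f` in logarithmic scale, `e⁻ᵘ ∑_{k ≤ eᵘ} f k`; its Laplace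
transform is the Dirichlet series of `f` up to the factor `1 + s`. -/
noncomputable def logScaleMean (f : ℕ → ℝ) (u : ℝ) : ℝ :=
  (∑ k ∈ Icc 1 ⌊Real.exp u⌋₊, f k) * Real.exp (-u)

variable {f : ℕ → ℝ} {A C : ℝ}

lemma logScaleMean_nonneg (hf : ∀ n, 0 ≤ f n) (u : ℝ) : 0 ≤ logScaleMean f u :=
  mul_nonneg (sum_nonneg fun k _ ↦ hf k) (Real.exp_pos _).le

lemma monotone_sum_Icc_floor (hf : ∀ n, 0 ≤ f n) : Monotone fun t : ℝ ↦ ∑ k ∈ Icc 1 ⌊t⌋₊, f k :=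
  fun _ _ hxy ↦ sum_le_sum_of_subset_of_nonneg (Icc_subset_Icc le_rfl (Nat.floor_mono hxy))
    fun k _ _ ↦ hf k

lemma measurable_logScaleMean (hf : ∀ n, 0 ≤ f n) : Measurable (logScaleMean f) :=
  ((monotone_sum_Icc_floor hf).measurable.comp Real.measurable_exp).mul (by fun_prop)

lemma logScaleMean_le (hC : ∀ N : ℕ, ∑ k ∈ Icc 1 N, f k ≤ C * N) (hC₀ : 0 ≤ C) (u : ℝ) :
    logScaleMean f u ≤ C :=
  calc logScaleMean f u ≤ C * Real.exp u * Real.exp (-u) := by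
        refine mul_le_mul_of_nonneg_right ((hC _).trans ?_) (Real.exp_pos _).le
        gcongr
        exact Nat.floor_le (Real.exp_pos u).le
    _ = C := by rw [mul_assoc, ← Real.exp_add, add_neg_cancel, Real.exp_zero, mul_one]

lemma exp_neg_mul_logScaleMean_le (hf : ∀ n, 0 ≤ f n) (u : ℝ) {c : ℝ} (hc : 0 ≤ c) :
    Real.exp (-c) * logScaleMean f u ≤ logScaleMean f (u + c) :=
  calc Real.exp (-c) * logScaleMean f u
      = (∑ k ∈ Icc 1 ⌊Real.exp u⌋₊, f k) * Real.exp (-(u + c)) := by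
        rw [logScaleMean, neg_add, Real.exp_add]
        ring
    _ ≤ logScaleMean f (u + c) :=
      mul_le_mul_of_nonneg_right
        (monotone_sum_Icc_floor hf (Real.exp_le_exp.2 (le_add_of_nonneg_right hc)))
        (Real.exp_pos _).le

lemma integral_logScaleMean_mul_exp (hf : ∀ n, 0 ≤ f n)
    (hC : ∀ N : ℕ, ∑ k ∈ Icc 1 N, f k ≤ C * N) {s : ℂ} (hs : 0 < s.re) :
    ∫ u in Set.Ioi (0 : ℝ), (logScaleMean f u : ℂ) * Complex.exp (-s * u) =
      LSeries (fun n ↦ (f n : ℂ)) (1 + s) / (1 + s) := by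
  have hs₁ : 1 + s ≠ 0 := fun h ↦ by
    have := congrArg Complex.re h
    simp only [Complex.add_re, Complex.one_re, Complex.zero_re] at this
    linarith
  have hO : (fun n : ℕ ↦ ∑ k ∈ Icc 1 n, f k) =O[atTop] fun n : ℕ ↦ (n : ℝ) ^ (1 : ℝ) := by
    refine Asymptotics.IsBigO.of_bound C (.of_forall fun n ↦ ?_)
    rw [Real.norm_eq_abs, abs_of_nonneg (sum_nonneg fun k _ ↦ hf k), Real.rpow_one,
      Real.norm_natCast]
    exact hC n
  rw [LSeries_eq_mul_integral_of_nonneg f zero_le_one (by simpa using hs) hO hf,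
    mul_div_cancel_left₀ _ hs₁]
  have hsubst := integral_comp_exp_Ioi
    (fun t : ℝ ↦ (∑ k ∈ Icc 1 ⌊t⌋₊, (f k : ℂ)) * (t : ℂ) ^ (-((1 + s) + 1))) 0
  rw [Real.exp_zero] at hsubst
  rw [← hsubst]
  congr 1 with u
  have hpow : ((Real.exp u : ℝ) : ℂ) ^ (-((1 + s) + 1)) =
      Complex.exp (-u) * Complex.exp (-u) * Complex.exp (-s * u) := by
    rw [Complex.ofReal_exp, ← Complex.exp_add, ← Complex.exp_add,
      Complex.cpow_def_of_ne_zero (Complex.exp_ne_zero _), ← Complex.ofReal_exp,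
      ← Complex.ofReal_log (Real.exp_pos u).le, Real.log_exp]
    ring_nf
  have hcancel : Complex.exp u * Complex.exp (-u) = 1 := by
    rw [← Complex.exp_add, add_neg_cancel, Complex.exp_zero]
  rw [hpow, Complex.real_smul, logScaleMean]
  push_cast
  linear_combination
    -(∑ k ∈ Icc 1 ⌊Real.exp u⌋₊, (f k : ℂ)) * Complex.exp (-u) * Complex.exp (-s * u) * hcancel

lemma integral_logScaleMean_sub_mul_exp (hf : ∀ n, 0 ≤ f n)
    (hC : ∀ N : ℕ, ∑ k ∈ Icc 1 N, f k ≤ C * N) (hC₀ : 0 ≤ C) (A : ℝ) {s : ℂ} (hs : 0 < s.re) :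
    ∫ u in Set.Ioi (0 : ℝ), ((logScaleMean f u - A : ℝ) : ℂ) * Complex.exp (-s * u) =
      LSeries (fun n ↦ (f n : ℂ)) (1 + s) / (1 + s) - A / s := by
  have hs' : (-s).re < 0 := by simpa using hs
  have hexp : IntegrableOn (fun u : ℝ ↦ Complex.exp (-s * u)) (Set.Ioi 0) :=
    integrableOn_exp_mul_complex_Ioi hs' 0
  have hexp_eq : ∫ u in Set.Ioi (0 : ℝ), Complex.exp (-s * u) = 1 / s := by
    rw [integral_exp_mul_complex_Ioi hs' 0]
    simp
  have hmean : IntegrableOn (fun u : ℝ ↦ (logScaleMean f u : ℂ) * Complex.exp (-s * u))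
      (Set.Ioi 0) := by
    refine hexp.bdd_mul (c := C) (Complex.measurable_ofReal.comp
      (measurable_logScaleMean hf)).aestronglyMeasurable (.of_forall fun u ↦ ?_)
    rw [Complex.norm_real, Real.norm_eq_abs, abs_of_nonneg (logScaleMean_nonneg hf u)]
    exact logScaleMean_le hC hC₀ u
  simp_rw [Complex.ofReal_sub, sub_mul]
  rw [integral_sub hmean (hexp.const_mul _), integral_const_mul, hexp_eq,
    integral_logScaleMean_mul_exp hf hC hs, mul_one_div]

/-- The Wiener–Ikehara theorem. -/
theorem tendsto_sum_div_of_continuousOn_LSeries (hf : ∀ n, 0 ≤ f n)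
    (hC : ∀ N : ℕ, ∑ k ∈ Icc 1 N, f k ≤ C * N) {G : ℂ → ℂ} (hG : ContinuousOn G {s | 1 ≤ s.re})
    (hGf : ∀ s : ℂ, 1 < s.re → LSeries (fun n ↦ (f n : ℂ)) s = G s + A / (s - 1)) :
    Tendsto (fun N : ℕ ↦ (∑ k ∈ Icc 1 N, f k) / N) atTop (𝓝 A) := by
  have hC₀ : 0 ≤ C := by simpa using (sum_nonneg fun k _ ↦ hf k).trans (hC 1)
  have hre {s : ℂ} (hs : 0 ≤ s.re) : 1 + s ≠ 0 := fun h ↦ by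
    have := congrArg Complex.re h
    simp only [Complex.add_re, Complex.one_re, Complex.zero_re] at this
    linarith
  have hGcont : ContinuousOn (fun s ↦ (G (1 + s) - A) / (1 + s)) {s | 0 ≤ s.re} := by
    refine ContinuousOn.div (ContinuousOn.sub ?_ continuousOn_const) (by fun_prop) fun s ↦ hre
    exact hG.comp (by fun_prop) fun s (hs : 0 ≤ s.re) ↦ by simpa using hs
  have hlim : Tendsto (logScaleMean f) atTop (𝓝 A) := by
    refine tendsto_of_continuousOn_laplace (measurable_logScaleMean hf) (logScaleMean_nonneg hf)
      (logScaleMean_le hC hC₀) (fun u c _ ↦ exp_neg_mul_logScaleMean_le hf u) hGcont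
      fun s hs ↦ ?_
    have hs₀ : s ≠ 0 := fun h ↦ by simp [h] at hs
    have hs₁ := hre hs.le
    rw [integral_logScaleMean_sub_mul_exp hf hC hC₀ A hs, hGf (1 + s) (by simpa using hs),
      add_sub_cancel_left]
    field_simp
    ring
  refine (hlim.comp (Real.tendsto_log_atTop.comp tendsto_natCast_atTop_atTop)).congr' ?_
  filter_upwards [eventually_gt_atTop 0] with N hN
  have hN' : (0 : ℝ) < N := mod_cast hN
  simp only [Function.comp_apply, logScaleMean, Real.exp_neg, Real.exp_log hN', Nat.floor_natCast,
    div_eq_mul_inv]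

lemma sum_vonMangoldt_eq_psi (N : ℕ) : ∑ k ∈ Icc 1 N, vonMangoldt k = Chebyshev.psi N := by
  rw [Chebyshev.psi, Nat.floor_natCast]
  rfl

variable {q : ℕ} [NeZero q]

theorem tendsto_sum_residueClass_div {a : ZMod q} (ha : IsUnit a) :
    Tendsto (fun N : ℕ ↦ (∑ k ∈ Icc 1 N, vonMangoldt.residueClass a k) / N) atTop
      (𝓝 (q.totient : ℝ)⁻¹) := by
  refine tendsto_sum_div_of_continuousOn_LSeries (vonMangoldt.residueClass_nonneg a)
    (C := Real.log 4 + 4) (fun N ↦ ?_) (vonMangoldt.continuousOn_LFunctionResidueClassAux a)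
    fun s hs ↦ ?_
  · calc ∑ k ∈ Icc 1 N, vonMangoldt.residueClass a k ≤ Chebyshev.psi N := by
          rw [← sum_vonMangoldt_eq_psi]
          exact sum_le_sum fun k _ ↦ vonMangoldt.residueClass_le a k
      _ ≤ (Real.log 4 + 4) * N := Chebyshev.psi_le_const_mul_self N.cast_nonneg
  · rw [vonMangoldt.eqOn_LFunctionResidueClassAux ha hs]
    push_cast
    ring

theorem tendsto_sum_vonMangoldt_div :
    Tendsto (fun N : ℕ ↦ (∑ k ∈ Icc 1 N, vonMangoldt k) / N) atTop (𝓝 1) := by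
  have h := tendsto_sum_residueClass_div (q := 1) (a := 1) isUnit_one
  rw [Nat.totient_one, Nat.cast_one, inv_one] at h
  refine h.congr fun N ↦ congrArg (· / (N : ℝ)) (sum_congr rfl fun k _ ↦ ?_)
  exact Set.indicator_of_mem (s := {n : ℕ | (n : ZMod 1) = 1}) (Subsingleton.elim _ _) _

lemma vonMangoldt_mul_eq_sum_residueClass (k : ℕ) (g : ZMod q → ℂ) :
    (vonMangoldt k : ℂ) * g k = ∑ a : ZMod q, (vonMangoldt.residueClass a k : ℂ) * g a := by
  rw [sum_eq_single (k : ZMod q)]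
  · rw [vonMangoldt.residueClass, Set.indicator_of_mem]
    rfl
  · intro b _ hb
    have hk : k ∉ {n : ℕ | (n : ZMod q) = b} := fun h ↦ hb h.symm
    rw [vonMangoldt.residueClass, Set.indicator_of_notMem hk, Complex.ofReal_zero,
      zero_mul]
  · exact fun h ↦ absurd (mem_univ _) h

lemma tendsto_sum_isUnit_residueClass_div [DecidablePred (IsUnit : ZMod q → Prop)] :
    Tendsto (fun N : ℕ ↦ ∑ b : ZMod q with IsUnit b,
      (∑ k ∈ Icc 1 N, vonMangoldt.residueClass b k) / N) atTop (𝓝 1) := by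
  have h := tendsto_finsetSum ({b : ZMod q | IsUnit b} : Finset (ZMod q)) fun b hb ↦
    tendsto_sum_residueClass_div (a := b) (mem_filter.1 hb).2
  have hcard : #{b : ZMod q | IsUnit b} = q.totient := by
    rw [← ZMod.card_units_eq_totient q, ← Fintype.card_subtype]
    exact Fintype.card_congr
      ⟨fun b ↦ b.2.unit, fun u ↦ ⟨u, u.isUnit⟩, fun _ ↦ rfl, fun u ↦ by ext; rfl⟩
  have hq : (q.totient : ℝ) ≠ 0 := mod_cast (Nat.totient_pos.2 (NeZero.pos q)).ne'
  rwa [sum_const, nsmul_eq_mul, hcard, mul_inv_cancel₀ hq] at h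

theorem tendsto_sum_residueClass_div_of_not_isUnit {a : ZMod q} (ha : ¬IsUnit a) :
    Tendsto (fun N : ℕ ↦ (∑ k ∈ Icc 1 N, vonMangoldt.residueClass a k) / N) atTop (𝓝 0) := by
  classical
  let m (b : ZMod q) (N : ℕ) : ℝ := (∑ k ∈ Icc 1 N, vonMangoldt.residueClass b k) / N
  have hm (b : ZMod q) (N : ℕ) : 0 ≤ m b N :=
    div_nonneg (sum_nonneg fun k _ ↦ vonMangoldt.residueClass_nonneg b k) N.cast_nonneg
  have hsplit (N : ℕ) : (∑ k ∈ Icc 1 N, vonMangoldt k) / N = ∑ b : ZMod q, m b N := by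
    rw [← sum_div, sum_comm]
    refine congrArg (· / (N : ℝ)) (sum_congr rfl fun k _ ↦ ?_)
    have := vonMangoldt_mul_eq_sum_residueClass (q := q) k fun _ ↦ 1
    simp only [mul_one] at this
    exact_mod_cast this
  have hrest : Tendsto (fun N ↦ ∑ b : ZMod q with ¬IsUnit b, m b N) atTop (𝓝 0) := by
    have h := tendsto_sum_vonMangoldt_div.sub (tendsto_sum_isUnit_residueClass_div (q := q))
    rw [sub_self] at h
    refine h.congr fun N ↦ ?_
    rw [hsplit, ← sum_filter_add_sum_filter_not univ (fun b : ZMod q ↦ IsUnit b),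
      add_sub_cancel_left]
  exact squeeze_zero (hm a) (fun N ↦ single_le_sum (f := fun b ↦ m b N) (fun b _ ↦ hm b N)
    (mem_filter.2 ⟨mem_univ a, ha⟩)) hrest

theorem exists_tendsto_sum_vonMangoldt_mul_pow {w : ℂ} (hw : w ^ q = 1) :
    ∃ L : ℂ, Tendsto (fun N : ℕ ↦ (N : ℂ)⁻¹ * ∑ k ∈ Icc 1 N, (vonMangoldt k : ℂ) * w ^ k)
      atTop (𝓝 L) := by
  have hlim (a : ZMod q) : ∃ d : ℝ,
      Tendsto (fun N : ℕ ↦ (∑ k ∈ Icc 1 N, vonMangoldt.residueClass a k) / N) atTop (𝓝 d) := by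
    by_cases ha : IsUnit a
    · exact ⟨_, tendsto_sum_residueClass_div ha⟩
    · exact ⟨0, tendsto_sum_residueClass_div_of_not_isUnit ha⟩
  choose d hd using hlim
  have hpow (k : ℕ) : w ^ k = w ^ (k : ZMod q).val := by
    rw [ZMod.val_natCast]
    conv_lhs => rw [← Nat.mod_add_div k q, pow_add, pow_mul, hw, one_pow, mul_one]
  refine ⟨∑ a : ZMod q, (d a : ℂ) * w ^ a.val, (tendsto_finsetSum univ fun a _ ↦
    ((Complex.continuous_ofReal.tendsto _).comp (hd a)).mul_const (w ^ a.val)).congr fun N ↦ ?_⟩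
  have hterm (k : ℕ) : (vonMangoldt k : ℂ) * w ^ k =
      ∑ a : ZMod q, (vonMangoldt.residueClass a k : ℂ) * w ^ a.val := by
    rw [hpow, vonMangoldt_mul_eq_sum_residueClass k fun a : ZMod q ↦ w ^ a.val]
  simp_rw [hterm]
  rw [sum_comm, mul_sum]
  refine sum_congr rfl fun a _ ↦ ?_
  rw [← sum_mul, Function.comp_apply]
  push_cast
  ring

end PrimesInProgressions

section ExponentialSums

lemma norm_sum_Ioc_pow_le {w : Circle} (hw : w ≠ 1) (u v : ℕ) :
    ‖∑ m ∈ Ioc u v, (w : ℂ) ^ m‖ ≤ 2 / ‖(w : ℂ) - 1‖ := by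
  obtain huv | huv := le_total v u
  · rw [Ioc_eq_empty_of_le huv, sum_empty, norm_zero]
    positivity
  have hw' : (w : ℂ) ≠ 1 := mt Circle.coe_eq_one.1 hw
  rw [← Ico_add_one_add_one_eq_Ioc, geom_sum_Ico hw' (by lia), norm_div]
  gcongr
  calc ‖(w : ℂ) ^ (v + 1) - (w : ℂ) ^ (u + 1)‖ ≤ ‖(w : ℂ) ^ (v + 1)‖ + ‖(w : ℂ) ^ (u + 1)‖ :=
        norm_sub_le _ _
    _ = 2 := by rw [norm_pow, norm_pow, Circle.norm_coe]; norm_num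

lemma norm_sum_Ioc_pow_le_sub (w : Circle) (u v : ℕ) :
    ‖∑ m ∈ Ioc u v, (w : ℂ) ^ m‖ ≤ (v - u : ℕ) := by
  refine (norm_sum_le_of_le _ (n := fun _ ↦ 1) fun m _ ↦ ?_).trans_eq (by simp)
  rw [norm_pow, Circle.norm_coe, one_pow]

lemma norm_sum_Ioc_smul_sub_le {E : Type*} [NormedAddCommGroup E] [NormedSpace ℝ E] {w : ℕ → ℝ}
    (hw : Monotone w) {z : ℕ → E} {B : ℝ} {u v : ℕ} (huv : u ≤ v)
    (hB : ∀ u, ‖∑ m ∈ Ioc u v, z m‖ ≤ B) :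
    ‖∑ m ∈ Ioc u v, w m • z m - w u • ∑ m ∈ Ioc u v, z m‖ ≤ (w v - w u) * B := by
  induction huv using Nat.decreasingInduction with
  | self => simp
  | of_succ u huv ih =>
    have hstep : 0 ≤ w (u + 1) - w u := sub_nonneg.2 (hw u.le_succ)
    have hrec : ∑ m ∈ Ioc u v, w m • z m - w u • ∑ m ∈ Ioc u v, z m =
        (∑ m ∈ Ioc (u + 1) v, w m • z m - w (u + 1) • ∑ m ∈ Ioc (u + 1) v, z m) +
          (w (u + 1) - w u) • ∑ m ∈ Ioc u v, z m := by
      simp only [← sum_Ioc_consecutive _ u.le_succ huv, Nat.succ_eq_add_one,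
        Nat.Ioc_succ_singleton, sum_singleton]
      module
    calc _ ≤ (w v - w (u + 1)) * B + (w (u + 1) - w u) * B := by
          rw [hrec]
          refine norm_add_le_of_le ih ?_
          rw [norm_smul, Real.norm_of_nonneg hstep]
          exact mul_le_mul_of_nonneg_left (hB u) hstep
      _ = (w v - w u) * B := by ring

lemma norm_sum_Ioc_smul_le {E : Type*} [NormedAddCommGroup E] [NormedSpace ℝ E] {w : ℕ → ℝ}
    (hw : Monotone w) (hw0 : ∀ m, 0 ≤ w m) {z : ℕ → E} {B : ℝ} {v : ℕ}
    (hB : ∀ u, ‖∑ m ∈ Ioc u v, z m‖ ≤ B) (u : ℕ) :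
    ‖∑ m ∈ Ioc u v, w m • z m‖ ≤ w v * B := by
  obtain huv | huv := le_total v u
  · rw [Ioc_eq_empty_of_le huv, sum_empty, norm_zero]
    exact mul_nonneg (hw0 v) ((norm_nonneg _).trans (hB u))
  calc ‖∑ m ∈ Ioc u v, w m • z m‖
      = ‖(∑ m ∈ Ioc u v, w m • z m - w u • ∑ m ∈ Ioc u v, z m) +
          w u • ∑ m ∈ Ioc u v, z m‖ := by rw [sub_add_cancel]
    _ ≤ (w v - w u) * B + w u * B := by
        refine norm_add_le_of_le (norm_sum_Ioc_smul_sub_le hw huv hB) ?_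
        rw [norm_smul, Real.norm_of_nonneg (hw0 u)]
        exact mul_le_mul_of_nonneg_left (hB u) (hw0 u)
    _ = w v * B := by ring

end ExponentialSums

section TuranKubilius

/-- `ω_P(n)`, the number of elements of `P` dividing `n`; real-valued, since it is compared with its
mean `∑ p ∈ P, 1 / p` over all `n`. -/
noncomputable def countDivisorsIn (P : Finset ℕ) (n : ℕ) : ℝ := ∑ p ∈ P, if p ∣ n then 1 else 0

variable (P : Finset ℕ)

lemma sum_countDivisorsIn_ge (X : ℕ) :
    X * ∑ p ∈ P, 1 / (p : ℝ) - #P ≤ ∑ n ∈ Ioc 0 X, countDivisorsIn P n := by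
  simp_rw [countDivisorsIn]
  rw [sum_comm, mul_sum, card_eq_sum_ones, Nat.cast_sum, ← sum_sub_distrib]
  refine sum_le_sum fun p _ ↦ ?_
  rw [sum_boole, Nat.Ioc_filter_dvd_card_eq_div, mul_one_div, Nat.cast_one,
    ← Nat.floor_div_eq_div (K := ℝ)]
  exact (Nat.sub_one_lt_floor _).le

lemma card_Ioc_filter_dvd_and_dvd_le {p p' : ℕ} (h : p ≠ p' → p.Coprime p') (X : ℕ) :
    (#{n ∈ Ioc 0 X | p ∣ n ∧ p' ∣ n} : ℝ) ≤
      X * (1 / p * (1 / p')) + if p = p' then X * (1 / (p : ℝ)) else 0 := by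
  split_ifs with hp
  · subst hp
    simp only [and_self, Nat.Ioc_filter_dvd_card_eq_div, mul_one_div]
    exact Nat.cast_div_le.trans (le_add_of_nonneg_left (by positivity))
  · have hmul (n : ℕ) : p ∣ n ∧ p' ∣ n ↔ p * p' ∣ n :=
      ⟨fun hn ↦ (h hp).mul_dvd_of_dvd_of_dvd hn.1 hn.2,
        fun hn ↦ ⟨dvd_of_mul_right_dvd hn, dvd_of_mul_left_dvd hn⟩⟩
    simp only [hmul, Nat.Ioc_filter_dvd_card_eq_div, add_zero]
    refine Nat.cast_div_le.trans_eq ?_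
    rw [one_div_mul_one_div, mul_one_div, Nat.cast_mul]

variable {P}

lemma sum_countDivisorsIn_sq_le (hP : (P : Set ℕ).Pairwise Nat.Coprime) (X : ℕ) :
    ∑ n ∈ Ioc 0 X, countDivisorsIn P n ^ 2 ≤
      X * (∑ p ∈ P, 1 / (p : ℝ)) ^ 2 + X * ∑ p ∈ P, 1 / (p : ℝ) := by
  have hsq (n : ℕ) : countDivisorsIn P n ^ 2 =
      ∑ p ∈ P, ∑ p' ∈ P, if p ∣ n ∧ p' ∣ n then 1 else 0 := by
    rw [sq, countDivisorsIn, sum_mul_sum]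
    refine sum_congr rfl fun p _ ↦ sum_congr rfl fun p' _ ↦ ?_
    rw [ite_and, ite_zero_mul_ite_zero, ite_and, mul_one]
  calc ∑ n ∈ Ioc 0 X, countDivisorsIn P n ^ 2
      = ∑ p ∈ P, ∑ p' ∈ P, (#{n ∈ Ioc 0 X | p ∣ n ∧ p' ∣ n} : ℝ) := by
        simp_rw [hsq]
        rw [sum_comm]
        refine sum_congr rfl fun p _ ↦ ?_
        rw [sum_comm]
        simp_rw [sum_boole]
    _ ≤ ∑ p ∈ P, ∑ p' ∈ P,
          (X * (1 / (p : ℝ) * (1 / p')) + if p = p' then X * (1 / (p : ℝ)) else 0) :=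
        sum_le_sum fun p hp ↦ sum_le_sum fun p' hp' ↦
          card_Ioc_filter_dvd_and_dvd_le (hP hp hp') X
    _ = _ := by
        simp only [sum_add_distrib, ← mul_sum, ← sum_mul, sum_ite_eq, sq]
        congr 1
        rw [sum_congr rfl fun p hp ↦ if_pos hp, mul_sum]

theorem turan_kubilius (hP : (P : Set ℕ).Pairwise Nat.Coprime) (X : ℕ) :
    ∑ n ∈ Ioc 0 X, (countDivisorsIn P n - ∑ p ∈ P, 1 / (p : ℝ)) ^ 2 ≤
      X * (∑ p ∈ P, 1 / (p : ℝ)) + 2 * (∑ p ∈ P, 1 / (p : ℝ)) * #P := by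
  set A := ∑ p ∈ P, 1 / (p : ℝ)
  have : 0 ≤ A := sum_nonneg fun p _ ↦ by positivity
  have hexpand : ∑ n ∈ Ioc 0 X, (countDivisorsIn P n - A) ^ 2 =
      ∑ n ∈ Ioc 0 X, countDivisorsIn P n ^ 2 - 2 * A * ∑ n ∈ Ioc 0 X, countDivisorsIn P n
        + X * A ^ 2 := by
    simp only [sub_sq, sum_add_distrib, sum_sub_distrib, ← sum_mul, ← mul_sum, sum_const,
      Nat.card_Ioc, tsub_zero, nsmul_eq_mul]
    ring
  calc _ ≤ (X * A ^ 2 + X * A) - 2 * A * (X * A - #P) + X * A ^ 2 := by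
        rw [hexpand]
        gcongr
        exacts [sum_countDivisorsIn_sq_le hP X, sum_countDivisorsIn_ge P X]
    _ = X * A + 2 * A * #P := by ring

end TuranKubilius

section DaboussiKatai

open ArithmeticFunction Topology

lemma sum_Ioc_filter_dvd {M : Type*} [AddCommMonoid M] {p : ℕ} (hp : 0 < p) (X : ℕ) (F : ℕ → M) :
    ∑ n ∈ Ioc 0 X with p ∣ n, F n = ∑ m ∈ Ioc 0 (X / p), F (p * m) := by
  refine (sum_bij (fun m _ ↦ p * m) (fun m hm ↦ ?_) (fun a _ b _ ↦ Nat.eq_of_mul_eq_mul_left hp)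
    (fun n hn ↦ ?_) fun _ _ ↦ rfl).symm
  · rw [mem_Ioc, Nat.le_div_iff_mul_le hp, mul_comm m] at hm
    exact mem_filter.2 ⟨mem_Ioc.2 ⟨Nat.mul_pos hp hm.1, hm.2⟩, dvd_mul_right p m⟩
  · obtain ⟨hn, m, rfl⟩ := mem_filter.1 hn
    rw [mem_Ioc, mul_comm p] at hn
    exact ⟨m, mem_Ioc.2 ⟨Nat.pos_of_mul_pos_right hn.1, (Nat.le_div_iff_mul_le hp).2 hn.2⟩, rfl⟩

lemma sum_sum_Ioc_div_comm {M : Type*} [AddCommMonoid M] (P : Finset ℕ) (X : ℕ)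
    (F : ℕ → ℕ → M) :
    ∑ p ∈ P, ∑ m ∈ Ioc 0 (X / p), F p m = ∑ m ∈ Ioc 0 X, ∑ p ∈ P with m ≤ X / p, F p m := by
  refine sum_comm' fun p m ↦ ?_
  have := Nat.div_le_self X p
  grind

lemma norm_sum_Ioc_min_pow_mul_inv_le {z : Circle} (hz : ¬IsOfFinOrder z) (X p p' : ℕ) :
    ‖∑ m ∈ Ioc 0 (min (X / p) (X / p')), ((z ^ p * (z ^ p')⁻¹ : Circle) : ℂ) ^ m‖ ≤
      (if p = p' then X * (1 / (p : ℝ)) else 0) +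
        2 / ‖((z ^ p * (z ^ p')⁻¹ : Circle) : ℂ) - 1‖ := by
  split_ifs with h
  · subst h
    refine (norm_sum_Ioc_pow_le_sub _ _ _).trans (le_add_of_le_of_nonneg ?_ (by positivity))
    rw [min_self, tsub_zero, mul_one_div]
    exact Nat.cast_div_le
  · rw [zero_add]
    refine norm_sum_Ioc_pow_le (fun h' ↦ h ?_) _ _
    exact injective_pow_iff_not_isOfFinOrder.2 hz (mul_inv_eq_one.1 h')

/-- `∑ p, c p * z ^ (p * m)` over the `p ∈ P` with `p * m ≤ X`: the exponential sum that is dual to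
the weights `c` in the argument of Kátai. -/
noncomputable def dilateSum (P : Finset ℕ) (c : ℕ → ℂ) (z : Circle) (X m : ℕ) : ℂ :=
  ∑ p ∈ P with m ≤ X / p, c p * z ^ (p * m)

lemma ofReal_sum_norm_dilateSum_sq (P : Finset ℕ) (c : ℕ → ℂ) (z : Circle) (X : ℕ) :
    ((∑ m ∈ Ioc 0 X, ‖dilateSum P c z X m‖ ^ 2 : ℝ) : ℂ) =
      ∑ p ∈ P, ∑ p' ∈ P, c p * (starRingEnd ℂ) (c p') *
        ∑ m ∈ Ioc 0 (min (X / p) (X / p')), ((z ^ p * (z ^ p')⁻¹ : Circle) : ℂ) ^ m := by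
  have hsq (m : ℕ) : ((‖dilateSum P c z X m‖ ^ 2 : ℝ) : ℂ) =
      ∑ p ∈ P with m ≤ X / p, ∑ p' ∈ P with m ≤ X / p', c p * (starRingEnd ℂ) (c p') *
        ((z ^ p * (z ^ p')⁻¹ : Circle) : ℂ) ^ m := by
    rw [Complex.ofReal_pow, ← Complex.mul_conj', dilateSum, map_sum, sum_mul_sum]
    refine sum_congr rfl fun p _ ↦ sum_congr rfl fun p' _ ↦ ?_
    simp only [map_mul, map_pow, Circle.coe_mul, Circle.coe_pow, Circle.coe_inv_eq_conj, mul_pow,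
      ← pow_mul]
    ring
  rw [Complex.ofReal_sum, sum_congr rfl fun m _ ↦ hsq m, ← sum_sum_Ioc_div_comm]
  refine sum_congr rfl fun p _ ↦ ?_
  simp_rw [mul_sum]
  exact sum_comm' fun m p' ↦ by grind

lemma exists_sum_norm_dilateSum_sq_le {z : Circle} (hz : ¬IsOfFinOrder z) (P : Finset ℕ) {c : ℕ → ℂ}
    (hc : ∀ p, ‖c p‖ ≤ 1) :
    ∃ C, 0 ≤ C ∧ ∀ X : ℕ, ∑ m ∈ Ioc 0 X, ‖dilateSum P c z X m‖ ^ 2 ≤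
      X * (∑ p ∈ P, 1 / (p : ℝ)) + C := by
  refine ⟨∑ p ∈ P, ∑ p' ∈ P, 2 / ‖((z ^ p * (z ^ p')⁻¹ : Circle) : ℂ) - 1‖,
    sum_nonneg fun p _ ↦ sum_nonneg fun p' _ ↦ by positivity, fun X ↦ ?_⟩
  have hpair (p p' : ℕ) : ‖c p * (starRingEnd ℂ) (c p') *
      ∑ m ∈ Ioc 0 (min (X / p) (X / p')), ((z ^ p * (z ^ p')⁻¹ : Circle) : ℂ) ^ m‖ ≤
      (if p = p' then X * (1 / (p : ℝ)) else 0) +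
        2 / ‖((z ^ p * (z ^ p')⁻¹ : Circle) : ℂ) - 1‖ := by
    rw [norm_mul, norm_mul, RCLike.norm_conj]
    exact (mul_le_of_le_one_left (norm_nonneg _)
      (mul_le_one₀ (hc p) (norm_nonneg _) (hc p'))).trans
      (norm_sum_Ioc_min_pow_mul_inv_le hz X p p')
  calc ∑ m ∈ Ioc 0 X, ‖dilateSum P c z X m‖ ^ 2
      ≤ ‖((∑ m ∈ Ioc 0 X, ‖dilateSum P c z X m‖ ^ 2 : ℝ) : ℂ)‖ := by
        rw [Complex.norm_real]
        exact Real.le_norm_self _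
    _ ≤ ∑ p ∈ P, ∑ p' ∈ P, ((if p = p' then X * (1 / (p : ℝ)) else 0) +
          2 / ‖((z ^ p * (z ^ p')⁻¹ : Circle) : ℂ) - 1‖) := by
        rw [ofReal_sum_norm_dilateSum_sq]
        exact norm_sum_le_of_le _ fun p _ ↦ norm_sum_le_of_le _ fun p' _ ↦ hpair p p'
    _ = _ := by
        simp only [sum_add_distrib, sum_ite_eq]
        rw [sum_congr rfl fun p hp ↦ if_pos hp, mul_sum]

lemma sum_abs_le_sqrt_card_mul {ι : Type*} (s : Finset ι) (f : ι → ℝ) {B : ℝ}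
    (h : ∑ i ∈ s, f i ^ 2 ≤ B) : ∑ i ∈ s, |f i| ≤ √(#s * B) := by
  refine Real.le_sqrt_of_sq_le (sq_sum_le_card_mul_sum_sq.trans ?_)
  simp_rw [sq_abs]
  gcongr

lemma norm_sum_countDivisorsIn_sub_mul_le {P : Finset ℕ} (hP : (P : Set ℕ).Pairwise Nat.Coprime)
    {g : ℕ → ℂ} (hg : ∀ n, ‖g n‖ ≤ 1) (X : ℕ) :
    ‖∑ n ∈ Ioc 0 X, countDivisorsIn P n * g n - (∑ p ∈ P, 1 / (p : ℝ) : ℝ) * ∑ n ∈ Ioc 0 X, g n‖ ≤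
      √(X * (X * (∑ p ∈ P, 1 / (p : ℝ)) + 2 * (∑ p ∈ P, 1 / (p : ℝ)) * #P)) := by
  set A := ∑ p ∈ P, 1 / (p : ℝ)
  calc _ ≤ ∑ n ∈ Ioc 0 X, |countDivisorsIn P n - A| := by
        rw [mul_sum, ← sum_sub_distrib]
        refine norm_sum_le_of_le _ fun n _ ↦ ?_
        rw [← sub_mul, ← Complex.ofReal_sub, norm_mul, Complex.norm_real]
        exact mul_le_of_le_one_right (norm_nonneg _) (hg n)
    _ ≤ √(#(Ioc 0 X) * (X * A + 2 * A * #P)) := sum_abs_le_sqrt_card_mul _ _ (turan_kubilius hP X)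
    _ = _ := by rw [Nat.card_Ioc, tsub_zero]

lemma exists_primes_lt_sum_one_div (B : ℝ) :
    ∃ P : Finset ℕ, (∀ p ∈ P, p.Prime) ∧ B < ∑ p ∈ P, 1 / (p : ℝ) := by
  have hdiv := (not_summable_iff_tendsto_nat_atTop_of_nonneg
    (Set.indicator_nonneg fun n _ ↦ by positivity)).1 not_summable_one_div_on_primes
  obtain ⟨k, hk⟩ := (hdiv.eventually_gt_atTop B).exists
  refine ⟨{p ∈ range k | p.Prime}, fun p hp ↦ (mem_filter.1 hp).2, ?_⟩
  simpa only [sum_filter, Set.indicator_apply, Set.mem_ofPred_eq] using hk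

lemma tendsto_two_mul_sqrt_add_div (σ : ℝ) :
    Tendsto (fun A : ℝ ↦ (2 * √A + 2 * σ) / A) atTop (𝓝 0) := by
  have h : Tendsto (fun A : ℝ ↦ 2 * (√A)⁻¹ + 2 * σ * A⁻¹) atTop (𝓝 (2 * 0 + 2 * σ * 0)) :=
    ((tendsto_inv_atTop_zero.comp Real.tendsto_sqrt_atTop).const_mul 2).add
      (tendsto_inv_atTop_zero.const_mul _)
  simp only [mul_zero, add_zero] at h
  refine h.congr fun A ↦ ?_
  rw [add_div, mul_div_assoc, Real.sqrt_div_self', one_div]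
  ring

variable {f : ArithmeticFunction ℂ}

lemma norm_map_prime_mul_sub_le (hf : f.IsMultiplicative) (hf1 : ∀ n, ‖f n‖ ≤ 1) {p : ℕ}
    (hp : p.Prime) (m : ℕ) :
    ‖f (p * m) - f p * f m‖ ≤ if p ∣ m then 2 else 0 := by
  split_ifs with h
  · calc ‖f (p * m) - f p * f m‖ ≤ ‖f (p * m)‖ + ‖f p‖ * ‖f m‖ :=
          (norm_sub_le _ _).trans_eq (by rw [norm_mul])
      _ ≤ 1 + 1 * 1 := by gcongr <;> exact hf1 _
      _ = 2 := by norm_num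
  · rw [hf.map_mul_of_coprime (hp.coprime_iff_not_dvd.2 h), sub_self, norm_zero]

lemma norm_sum_countDivisorsIn_mul_sub_le (hf : f.IsMultiplicative) (hf1 : ∀ n, ‖f n‖ ≤ 1)
    {P : Finset ℕ} (hP : ∀ p ∈ P, p.Prime) (z : Circle) (X : ℕ) :
    ‖∑ n ∈ Ioc 0 X, countDivisorsIn P n * (f n * (z : ℂ) ^ n) -
        ∑ m ∈ Ioc 0 X, f m * dilateSum P f z X m‖ ≤ 2 * X * ∑ p ∈ P, 1 / (p : ℝ) ^ 2 := by
  have hleft : ∑ n ∈ Ioc 0 X, countDivisorsIn P n * (f n * (z : ℂ) ^ n) =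
      ∑ p ∈ P, ∑ m ∈ Ioc 0 (X / p), f (p * m) * (z : ℂ) ^ (p * m) := by
    simp only [countDivisorsIn, Complex.ofReal_sum, sum_mul]
    rw [sum_comm]
    refine sum_congr rfl fun p hp ↦ ?_
    rw [← sum_Ioc_filter_dvd (hP p hp).pos X fun n ↦ f n * (z : ℂ) ^ n, sum_filter]
    exact sum_congr rfl fun n _ ↦ by split_ifs <;> simp
  have hright : ∑ m ∈ Ioc 0 X, f m * dilateSum P f z X m =
      ∑ p ∈ P, ∑ m ∈ Ioc 0 (X / p), f p * f m * (z : ℂ) ^ (p * m) := by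
    rw [sum_sum_Ioc_div_comm]
    simp only [dilateSum, mul_sum]
    exact sum_congr rfl fun m _ ↦ sum_congr rfl fun p _ ↦ by ring
  rw [hleft, hright, ← sum_sub_distrib, mul_sum]
  refine norm_sum_le_of_le _ fun p hp ↦ ?_
  calc ‖∑ m ∈ Ioc 0 (X / p), f (p * m) * (z : ℂ) ^ (p * m) -
        ∑ m ∈ Ioc 0 (X / p), f p * f m * (z : ℂ) ^ (p * m)‖
      ≤ ∑ m ∈ Ioc 0 (X / p), if p ∣ m then 2 else 0 := by
        rw [← sum_sub_distrib]
        refine norm_sum_le_of_le _ fun m _ ↦ ?_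
        rw [← sub_mul, norm_mul, norm_pow, Circle.norm_coe, one_pow, mul_one]
        exact norm_map_prime_mul_sub_le hf hf1 (hP p hp) m
    _ = 2 * (X / p / p : ℕ) := by
        rw [← sum_filter, sum_const, Nat.Ioc_filter_dvd_card_eq_div, nsmul_eq_mul, mul_comm]
    _ ≤ 2 * (X * (1 / (p : ℝ) ^ 2)) := by
        rw [Nat.div_div_eq_div_mul, ← sq, mul_one_div]
        gcongr
        exact_mod_cast Nat.cast_div_le
    _ = 2 * X * (1 / (p : ℝ) ^ 2) := by ring

lemma exists_norm_sum_mul_pow_le (hf : f.IsMultiplicative) (hf1 : ∀ n, ‖f n‖ ≤ 1)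
    {z : Circle} (hz : ¬IsOfFinOrder z) {P : Finset ℕ} (hP : ∀ p ∈ P, p.Prime) :
    ∃ C, 0 ≤ C ∧ ∀ X : ℕ, (∑ p ∈ P, 1 / (p : ℝ)) * ‖∑ n ∈ Ioc 0 X, f n * (z : ℂ) ^ n‖ ≤
      2 * √(X * (X * (∑ p ∈ P, 1 / (p : ℝ)) + C)) + 2 * X * ∑ p ∈ P, 1 / (p : ℝ) ^ 2 := by
  obtain ⟨C, hC0, hC⟩ := exists_sum_norm_dilateSum_sq_le hz P hf1
  set A := ∑ p ∈ P, 1 / (p : ℝ)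
  have hA : 0 ≤ A := sum_nonneg fun p _ ↦ by positivity
  have hcop : (P : Set ℕ).Pairwise Nat.Coprime := fun p hp p' hp' ↦
    (Nat.coprime_primes (hP p hp) (hP p' hp')).2
  refine ⟨C + 2 * A * #P, by positivity, fun X ↦ ?_⟩
  set R := √(X * (X * A + (C + 2 * A * #P)))
  set S := ∑ n ∈ Ioc 0 X, f n * (z : ℂ) ^ n
  set W := ∑ n ∈ Ioc 0 X, countDivisorsIn P n * (f n * (z : ℂ) ^ n)
  set D := ∑ m ∈ Ioc 0 X, f m * dilateSum P f z X m
  have hterm (n : ℕ) : ‖f n * (z : ℂ) ^ n‖ ≤ 1 := by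
    rw [norm_mul, norm_pow, Circle.norm_coe, one_pow, mul_one]
    exact hf1 n
  have hconcentrated : ‖W - A * S‖ ≤ R := by
    refine (norm_sum_countDivisorsIn_sub_mul_le hcop hterm X).trans (Real.sqrt_le_sqrt ?_)
    gcongr
    linarith
  have hdual : ‖D‖ ≤ R := by
    calc ‖D‖ ≤ ∑ m ∈ Ioc 0 X, |‖dilateSum P f z X m‖| := by
          refine norm_sum_le_of_le _ fun m _ ↦ ?_
          rw [norm_mul, abs_norm]
          exact mul_le_of_le_one_left (norm_nonneg _) (hf1 m)
      _ ≤ √(#(Ioc 0 X) * (X * A + C)) := sum_abs_le_sqrt_card_mul _ _ (hC X)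
      _ ≤ R := by
          rw [Nat.card_Ioc, tsub_zero]
          refine Real.sqrt_le_sqrt ?_
          gcongr
          linarith [show 0 ≤ 2 * A * #P by positivity]
  calc A * ‖S‖ = ‖(W - D) - (W - A * S) + D‖ := by
        rw [show (W - D) - (W - A * S) + D = A * S by ring, norm_mul, Complex.norm_real,
          Real.norm_of_nonneg hA]
    _ ≤ 2 * X * ∑ p ∈ P, 1 / (p : ℝ) ^ 2 + R + R :=
        norm_add_le_of_le (norm_sub_le_of_le
          (norm_sum_countDivisorsIn_mul_sub_le hf hf1 hP z X) hconcentrated) hdual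
    _ = 2 * R + 2 * X * ∑ p ∈ P, 1 / (p : ℝ) ^ 2 := by ring

theorem tendsto_norm_sum_mul_pow_div (hf : f.IsMultiplicative) (hf1 : ∀ n, ‖f n‖ ≤ 1)
    {z : Circle} (hz : ¬IsOfFinOrder z) :
    Tendsto (fun X : ℕ ↦ ‖∑ n ∈ Ioc 0 X, f n * (z : ℂ) ^ n‖ / X) atTop (𝓝 0) := by
  have hsum : Summable fun n : ℕ ↦ 1 / (n : ℝ) ^ 2 := Real.summable_one_div_nat_pow.2 one_lt_two
  set σ := ∑' n : ℕ, 1 / (n : ℝ) ^ 2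
  refine tendsto_order.2 ⟨fun b hb ↦ .of_forall fun X ↦ hb.trans_le (by positivity), fun ε hε ↦ ?_⟩
  obtain ⟨A₀, hA₀⟩ := eventually_atTop.1 ((eventually_gt_atTop 0).and
    ((tendsto_two_mul_sqrt_add_div σ).eventually_lt_const hε))
  obtain ⟨P, hP, hPA⟩ := exists_primes_lt_sum_one_div A₀
  obtain ⟨C, -, hC⟩ := exists_norm_sum_mul_pow_le hf hf1 hz hP
  set A := ∑ p ∈ P, 1 / (p : ℝ)
  obtain ⟨hA0, hAε⟩ := hA₀ A hPA.le
  have hlim : Tendsto (fun X : ℕ ↦ (2 * √(A + C / X) + 2 * σ) / A) atTop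
      (𝓝 ((2 * √(A + 0) + 2 * σ) / A)) :=
    (((tendsto_const_nhds.add (tendsto_const_div_atTop_nhds_zero_nat C)).sqrt.const_mul 2).add_const
      _).div_const A
  rw [add_zero] at hlim
  filter_upwards [hlim.eventually_lt_const hAε, eventually_gt_atTop 0] with X hX hX0
  refine lt_of_le_of_lt ?_ hX
  have hX0' : (0 : ℝ) < X := mod_cast hX0
  have hsqrt : √(X * (X * A + C)) = X * √(A + C / X) := by
    rw [← Real.sqrt_mul_self hX0'.le, ← Real.sqrt_mul (by positivity), Real.sqrt_mul_self hX0'.le]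
    congr 1
    field_simp
  rw [div_le_div_iff₀ hX0' hA0]
  calc ‖∑ n ∈ Ioc 0 X, f n * (z : ℂ) ^ n‖ * A
      ≤ 2 * √(X * (X * A + C)) + 2 * X * ∑ p ∈ P, 1 / (p : ℝ) ^ 2 := by
        rw [mul_comm]
        exact hC X
    _ ≤ 2 * (X * √(A + C / X)) + 2 * X * σ := by
        rw [hsqrt]
        gcongr
        exact hsum.sum_le_tsum P fun n _ ↦ by positivity
    _ = (2 * √(A + C / X) + 2 * σ) * X := by ring

end DaboussiKatai

section WeightedExponentialSums

open scoped FourierTransform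

lemma four_mul_norm_coe_le_norm_fourierChar_sub_one (x : ℝ) :
    4 * ‖(x : UnitAddCircle)‖ ≤ ‖(𝐞 x : ℂ) - 1‖ := by
  have hexp : (𝐞 x : ℂ) = Complex.exp (Complex.I * ↑(2 * Real.pi * (x - round x))) := by
    rw [Real.fourierChar_apply, ← Complex.exp_periodic.sub_int_mul_eq (round x)]
    congr 1
    push_cast
    ring
  have hsin := Real.mul_abs_le_abs_sin (x := Real.pi * (x - round x)) (by
    rw [abs_mul, abs_of_pos Real.pi_pos]
    nlinarith [Real.pi_pos, abs_sub_round x])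
  rw [hexp, Complex.norm_exp_I_mul_ofReal_sub_one, UnitAddCircle.norm_eq, Real.norm_eq_abs, abs_mul,
    abs_two, mul_assoc, mul_div_cancel_left₀ _ two_ne_zero]
  calc 4 * |x - round x| = 2 * (2 / Real.pi * |Real.pi * (x - round x)|) := by
        rw [abs_mul, abs_of_pos Real.pi_pos]
        field_simp
        ring
    _ ≤ 2 * |Real.sin (Real.pi * (x - round x))| := by gcongr

lemma norm_sum_Ioc_fourierChar_pow_le {x : ℝ} (hx : (x : UnitAddCircle) ≠ 0) (u v : ℕ) :
    ‖∑ m ∈ Ioc u v, (𝐞 x : ℂ) ^ m‖ ≤ min (v : ℝ) (1 / ‖(x : UnitAddCircle)‖) := by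
  have hx0 : 0 < ‖(x : UnitAddCircle)‖ := norm_pos_iff.2 hx
  have h4 := four_mul_norm_coe_le_norm_fourierChar_sub_one x
  have hne : 𝐞 x ≠ 1 := fun h ↦ by
    rw [h, Circle.coe_one, sub_self, norm_zero] at h4
    linarith
  refine le_min ((norm_sum_Ioc_pow_le_sub _ u v).trans (mod_cast Nat.sub_le v u)) ?_
  refine (norm_sum_Ioc_pow_le hne u v).trans ?_
  rw [div_le_div_iff₀ (by linarith) hx0]
  linarith

lemma norm_sum_Ioc_log_smul_fourierChar_pow_le {x : ℝ} (hx : (x : UnitAddCircle) ≠ 0) (u v : ℕ) :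
    ‖∑ m ∈ Ioc u v, Real.log m • (𝐞 x : ℂ) ^ m‖ ≤
      Real.log v * min (v : ℝ) (1 / ‖(x : UnitAddCircle)‖) :=
  norm_sum_Ioc_smul_le (w := fun m ↦ Real.log m)
    (monotone_nat_of_le_succ fun n ↦ by
      obtain rfl | hn := n.eq_zero_or_pos
      · simp
      · gcongr
        simp)
    (fun m ↦ Real.log_natCast_nonneg m) (fun u ↦ norm_sum_Ioc_fourierChar_pow_le hx u v) u

end WeightedExponentialSums

section Spacing

lemma card_filter_norm_le_of_separated {ι : Type*} {I : Finset ι} {θ : ι → ℝ} {s δ : ℝ}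
    (hs : 0 < s) (hδ : 0 ≤ δ)
    (hsep : ∀ d ∈ I, ∀ d' ∈ I, d ≠ d' → s ≤ ‖((θ d - θ d' : ℝ) : UnitAddCircle)‖) :
    (#{d ∈ I | ‖(θ d : UnitAddCircle)‖ ≤ δ} : ℝ) ≤ 2 * δ / s + 1 := by
  let cell (d : ι) : ℕ := ⌊(θ d - round (θ d) + δ) / s⌋₊
  have hcard : #{d ∈ I | ‖(θ d : UnitAddCircle)‖ ≤ δ} ≤ #(range (⌊2 * δ / s⌋₊ + 1)) := by
    refine card_le_card_of_injOn cell (fun d hd ↦ ?_) fun d hd d' hd' hcell ↦ ?_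
    · have hd := (mem_filter.1 hd).2
      rw [UnitAddCircle.norm_eq, abs_le] at hd
      refine mem_coe.2 (mem_range_succ_iff.2 (Nat.floor_mono ?_))
      gcongr
      linarith
    · rw [mem_coe, mem_filter, UnitAddCircle.norm_eq, abs_le] at hd hd'
      by_contra hne
      have hlt : |(θ d - round (θ d) + δ) / s - (θ d' - round (θ d') + δ) / s| < 1 := by
        refine Int.abs_sub_lt_one_of_floor_eq_floor ?_
        rw [← Int.natCast_floor_eq_floor, ← Int.natCast_floor_eq_floor]
        · exact congrArg _ hcell
        · exact div_nonneg (by linarith) hs.le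
        · exact div_nonneg (by linarith) hs.le
      rw [← sub_div, abs_div, abs_of_pos hs, div_lt_one hs] at hlt
      have hround := round_le (θ d - θ d') (round (θ d) - round (θ d'))
      have hsd := hsep d hd.1 d' hd'.1 hne
      rw [UnitAddCircle.norm_eq] at hsd
      push_cast at hround
      rw [show θ d - θ d' - (round (θ d) - round (θ d') : ℝ) =
        θ d - round (θ d) + δ - (θ d' - round (θ d') + δ) by ring] at hround
      linarith
  calc (#{d ∈ I | ‖(θ d : UnitAddCircle)‖ ≤ δ} : ℝ) ≤ (⌊2 * δ / s⌋₊ + 1 : ℕ) := by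
        rw [card_range] at hcard
        exact_mod_cast hcard
    _ ≤ 2 * δ / s + 1 := by
        push_cast
        gcongr
        exact Nat.floor_le (by positivity)

lemma card_filter_norm_le_of_separated_of_le {ι : Type*} {I : Finset ι} {θ : ι → ℝ} {s δ : ℝ}
    (hs : 0 < s) (hδ : 0 ≤ δ)
    (hsep : ∀ d ∈ I, ∀ d' ∈ I, d ≠ d' → s ≤ ‖((θ d - θ d' : ℝ) : UnitAddCircle)‖)
    (hle : ∀ d ∈ I, s ≤ ‖(θ d : UnitAddCircle)‖) :
    (#{d ∈ I | ‖(θ d : UnitAddCircle)‖ ≤ δ} : ℝ) ≤ 3 * δ / s := by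
  obtain hδs | hδs := lt_or_ge δ s
  · rw [filter_false_of_mem fun d hd hdδ ↦ ((hle d hd).trans hdδ).not_gt hδs, card_empty,
      Nat.cast_zero]
    positivity
  · have hone : 1 ≤ δ / s := (one_le_div hs).2 hδs
    calc (#{d ∈ I | ‖(θ d : UnitAddCircle)‖ ≤ δ} : ℝ) ≤ 2 * δ / s + 1 :=
          card_filter_norm_le_of_separated hs hδ hsep
      _ ≤ 2 * δ / s + δ / s := by gcongr
      _ = 3 * δ / s := by ring

lemma card_filter_Ioc_le_of_forall_block {P : ℕ → Prop} [DecidablePred P] {m : ℕ} (hm : 0 < m)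
    {B : ℝ} (hB : ∀ u, (#{d ∈ Ioc u (u + m) | P d} : ℝ) ≤ B) (n : ℕ) :
    (#{d ∈ Ioc 0 n | P d} : ℝ) ≤ (n / m + 1) * B := by
  have hmul (k : ℕ) : (#{d ∈ Ioc 0 (k * m) | P d} : ℝ) ≤ k * B := by
    induction k with
    | zero => simp
    | succ k ih =>
      have hunion : {d ∈ Ioc 0 ((k + 1) * m) | P d} ⊆
          {d ∈ Ioc 0 (k * m) | P d} ∪ {d ∈ Ioc (k * m) (k * m + m) | P d} := by
        intro d hd
        rw [add_one_mul] at hd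
        grind
      have hle : (#{d ∈ Ioc 0 ((k + 1) * m) | P d} : ℝ) ≤
          #{d ∈ Ioc 0 (k * m) | P d} + #{d ∈ Ioc (k * m) (k * m + m) | P d} :=
        mod_cast (card_le_card hunion).trans (card_union_le _ _)
      push_cast
      linarith [hB (k * m)]
  have hn : n ≤ (n / m + 1) * m := by
    rw [add_one_mul]
    exact (Nat.lt_div_mul_add hm).le
  calc (#{d ∈ Ioc 0 n | P d} : ℝ) ≤ #{d ∈ Ioc 0 ((n / m + 1) * m) | P d} := by gcongr
    _ ≤ (n / m + 1 : ℕ) * B := hmul _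
    _ ≤ (n / m + 1) * B := by
        have hB0 : 0 ≤ B := (Nat.cast_nonneg _).trans (hB 0)
        push_cast
        gcongr
        exact Nat.cast_div_le

lemma exists_le_min_two_pow_one_div_le {t : ℝ} (ht0 : 0 ≤ t) (ht1 : t ≤ 1) (k : ℕ) :
    ∃ i ≤ k, t ≤ (1 / 2) ^ i ∧ min (2 ^ k) (1 / t) ≤ 2 ^ (i + 1) := by
  have hk : min (2 ^ k) (1 / t) ≤ 2 ^ (k + 1) :=
    (min_le_left _ _).trans (pow_le_pow_right₀ one_le_two k.le_succ)
  obtain rfl | ht0 := ht0.eq_or_lt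
  · exact ⟨k, le_rfl, by positivity, hk⟩
  obtain ⟨n, hnt, htn⟩ := exists_nat_pow_near_of_lt_one ht0 ht1 (one_half_pos (α := ℝ))
    one_half_lt_one
  obtain hnk | hkn := le_total n k
  · refine ⟨n, hnk, htn, (min_le_right _ _).trans ?_⟩
    rw [one_div_pow] at hnt
    exact ((one_div_lt (by positivity) ht0).1 hnt).le
  · exact ⟨k, le_rfl, htn.trans (pow_le_pow_of_le_one (by norm_num) (by norm_num) hkn), hk⟩

lemma sum_min_two_pow_one_div_le {ι : Type*} {I : Finset ι} {t : ι → ℝ}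
    (ht0 : ∀ d ∈ I, 0 ≤ t d) (ht1 : ∀ d ∈ I, t d ≤ 1) {A B : ℝ} (hB : 0 ≤ B)
    (hcard : ∀ δ, 0 ≤ δ → (#{d ∈ I | t d ≤ δ} : ℝ) ≤ A * δ + B) (k : ℕ) :
    ∑ d ∈ I, min (2 ^ k) (1 / t d) ≤ 2 * (k + 1) * A + 2 ^ (k + 2) * B := by
  calc ∑ d ∈ I, min (2 ^ k) (1 / t d)
      ≤ ∑ d ∈ I, ∑ i ∈ range (k + 1), if t d ≤ (1 / 2) ^ i then (2 : ℝ) ^ (i + 1) else 0 := by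
        refine sum_le_sum fun d hd ↦ ?_
        obtain ⟨i, hik, hti, hmin⟩ := exists_le_min_two_pow_one_div_le (ht0 d hd) (ht1 d hd) k
        refine hmin.trans ?_
        rw [← if_pos hti (c := t d ≤ (1 / 2) ^ i) (t := (2 : ℝ) ^ (i + 1)) (e := 0)]
        exact single_le_sum (f := fun i ↦ if t d ≤ (1 / 2) ^ i then (2 : ℝ) ^ (i + 1) else 0)
          (fun i _ ↦ by positivity) (mem_range_succ_iff.2 hik)
    _ = ∑ i ∈ range (k + 1), 2 ^ (i + 1) * (#{d ∈ I | t d ≤ (1 / 2) ^ i} : ℝ) := by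
        rw [sum_comm]
        refine sum_congr rfl fun i _ ↦ ?_
        rw [← sum_filter, sum_const, nsmul_eq_mul, mul_comm]
    _ ≤ ∑ i ∈ range (k + 1), 2 ^ (i + 1) * (A * (1 / 2) ^ i + B) := by
        gcongr with i
        exact hcard _ (by positivity)
    _ = ∑ i ∈ range (k + 1), (2 * A + 2 * B * 2 ^ i) := by
        refine sum_congr rfl fun i _ ↦ ?_
        rw [one_div_pow]
        field_simp
        ring
    _ = 2 * (k + 1) * A + 2 * B * (2 ^ (k + 1) - 1) := by
        rw [sum_add_distrib, ← mul_sum _ _ (2 * B), geom_sum_eq (by norm_num), sum_const,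
          card_range, nsmul_eq_mul]
        push_cast
        ring
    _ ≤ 2 * (k + 1) * A + 2 ^ (k + 2) * B := by
        rw [pow_succ _ (k + 1)]
        linarith

end Spacing

section RationalApproximation

open scoped FourierTransform

variable {α : ℝ} {q : ℕ} {a : ℤ}

lemma one_div_two_mul_le_norm_coe_mul (hq : 0 < q) (hqa : IsCoprime (q : ℤ) a) {e : ℤ}
    (he : ¬ (q : ℤ) ∣ e) (heα : |(e : ℝ)| * |q * α - a| ≤ 1 / 2) :
    1 / (2 * q) ≤ ‖((e * α : ℝ) : UnitAddCircle)‖ := by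
  have : (0 : ℝ) < q := mod_cast hq
  set r := round (e * α) with hr
  have hne : e * a - q * r ≠ 0 := fun h ↦
    he (hqa.dvd_of_dvd_mul_right ⟨r, by linarith⟩)
  have hone : (1 : ℝ) ≤ |e * a - q * r| := mod_cast Int.one_le_abs hne
  have hsplit : q * (e * α - r) = e * (q * α - a) + (e * a - q * r) := by ring
  have htri := abs_sub_abs_le_abs_add (e * a - q * r : ℝ) (e * (q * α - a))
  rw [add_comm, ← hsplit, abs_mul, abs_mul, Nat.abs_cast] at htri
  push_cast at hone
  rw [UnitAddCircle.norm_eq, ← hr, div_le_iff₀ (by positivity)]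
  linarith

lemma abs_sub_div_two_le_norm_coe_mul (hq : 0 < q) (hqa : IsCoprime (q : ℤ) a)
    (hα : |q * α - a| * q ≤ 1) {e : ℤ} (he : e ≠ 0) (heα : |(e : ℝ)| * |q * α - a| ≤ 1 / 2) :
    |q * α - a| / 2 ≤ ‖((e * α : ℝ) : UnitAddCircle)‖ := by
  have hq1 : (1 : ℝ) ≤ q := mod_cast hq
  by_cases hdvd : (q : ℤ) ∣ e
  · obtain ⟨j, rfl⟩ := hdvd
    have hj : (1 : ℝ) ≤ |(j : ℝ)| := mod_cast Int.one_le_abs (right_ne_zero_of_mul he)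
    have hjb : |q * α - a| ≤ |j * (q * α - a)| := by
      rw [abs_mul]
      exact le_mul_of_one_le_left (abs_nonneg _) hj
    have hsmall : |j * (q * α - a)| ≤ 1 / 2 := by
      refine le_trans ?_ heα
      push_cast
      rw [abs_mul, abs_mul, Nat.abs_cast]
      gcongr
      exact le_mul_of_one_le_left (abs_nonneg _) hq1
    have hcoe : (((q * j : ℤ) * α : ℝ) : UnitAddCircle) = (j * (q * α - a) : ℝ) := by
      rw [← sub_eq_zero, ← AddCircle.coe_sub, AddCircle.coe_eq_zero_iff]
      exact ⟨j * a, by push_cast [zsmul_eq_mul]; ring⟩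
    rw [hcoe, (AddCircle.norm_coe_eq_abs_iff 1 one_ne_zero).2 (by rwa [abs_one])]
    linarith [abs_nonneg (q * α - a)]
  · refine le_trans ?_ (one_div_two_mul_le_norm_coe_mul hq hqa hdvd heα)
    rw [div_le_div_iff₀ two_pos (by positivity)]
    linarith

lemma card_filter_near_le (hq : 0 < q) (hqa : IsCoprime (q : ℤ) a) {δ : ℝ} (hδ : 0 ≤ δ) (n : ℕ) :
    (#{d ∈ Ioc 0 n | (¬ q ∣ d ∧ d * |q * α - a| ≤ 1 / 2) ∧
      ‖((d * α : ℝ) : UnitAddCircle)‖ ≤ δ} : ℝ) ≤ 6 * (n + q) * δ := by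
  have : (0 : ℝ) < q := mod_cast hq
  suffices hblock : ∀ u, (#{d ∈ Ioc u (u + q) | (¬ q ∣ d ∧ d * |q * α - a| ≤ 1 / 2) ∧
      ‖((d * α : ℝ) : UnitAddCircle)‖ ≤ δ} : ℝ) ≤ 6 * q * δ by
    refine (card_filter_Ioc_le_of_forall_block hq hblock n).trans_eq ?_
    field_simp
  intro u
  rw [← filter_filter]
  refine (card_filter_norm_le_of_separated_of_le (s := 1 / (2 * q)) (by positivity) hδ
    (fun d hd d' hd' hne ↦ ?_) fun d hd ↦ ?_).trans_eq (by field_simp; ring)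
  · rw [mem_filter, mem_Ioc] at hd hd'
    rw [← sub_mul]
    have hsub : |(d - d' : ℝ)| * |q * α - a| ≤ 1 / 2 := by
      obtain h | h := le_total (d : ℝ) d'
      · rw [abs_of_nonpos (by linarith)]
        nlinarith [abs_nonneg (q * α - a)]
      · rw [abs_of_nonneg (by linarith)]
        nlinarith [abs_nonneg (q * α - a)]
    have hndvd : ¬ (q : ℤ) ∣ d - d' := fun h ↦ by
      have := Int.eq_zero_of_abs_lt_dvd h (by rw [abs_lt]; constructor <;> lia)
      lia
    exact_mod_cast one_div_two_mul_le_norm_coe_mul hq hqa hndvd (mod_cast hsub)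
  · obtain ⟨-, hqd, hdb⟩ := mem_filter.1 hd
    exact_mod_cast
      one_div_two_mul_le_norm_coe_mul (e := d) hq hqa (mod_cast hqd) (by simpa using hdb)

lemma card_filter_norm_coe_mul_le (hq : 0 < q) (hqa : IsCoprime (q : ℤ) a)
    (hα0 : 0 < |q * α - a|) (hα : |q * α - a| * q ≤ 1) (hα2 : |q * α - a| ≤ 1 / 2)
    {δ : ℝ} (hδ : 0 ≤ δ) (n : ℕ) :
    (#{d ∈ Ioc 0 n | ‖(((d : ℕ) * α : ℝ) : UnitAddCircle)‖ ≤ δ} : ℝ) ≤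
      (4 * |q * α - a| * n + 1) * (4 * δ / |q * α - a| + 1) := by
  set b := |q * α - a|
  set m := ⌊1 / (2 * b)⌋₊
  have hm0 : 0 < m := Nat.floor_pos.2 (by rw [le_div_iff₀ (by positivity)]; linarith)
  have hmb : (m : ℝ) ≤ 1 / (2 * b) := Nat.floor_le (by positivity)
  have hbm : 1 ≤ 4 * b * m := by
    have hlt : 1 / (2 * b) < m + 1 := Nat.lt_floor_add_one _
    have hm1 : (1 : ℝ) ≤ m := mod_cast hm0
    rw [div_lt_iff₀ (by positivity)] at hlt
    nlinarith
  have hblock (u : ℕ) : (#{d ∈ Ioc u (u + m) | ‖(((d : ℕ) * α : ℝ) : UnitAddCircle)‖ ≤ δ} : ℝ) ≤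
      4 * δ / b + 1 := by
    refine (card_filter_norm_le_of_separated (s := b / 2) (by positivity) hδ ?_).trans_eq ?_
    · intro d hd d' hd' hne
      rw [mem_Ioc] at hd hd'
      rw [← sub_mul]
      have hsub : |(d - d' : ℝ)| ≤ m := by
        have : |(d - d' : ℤ)| ≤ m := by rw [abs_le]; constructor <;> lia
        exact_mod_cast this
      have := abs_sub_div_two_le_norm_coe_mul (e := (d - d' : ℤ)) hq hqa hα (by lia) (by
        push_cast
        calc |(d - d' : ℝ)| * b ≤ 1 / (2 * b) * b := by gcongr; exact hsub.trans hmb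
          _ = 1 / 2 := by field_simp)
      exact_mod_cast this
    · field_simp
      ring
  refine (card_filter_Ioc_le_of_forall_block hm0 hblock n).trans ?_
  gcongr
  rw [div_le_iff₀ (mod_cast hm0)]
  nlinarith [n.cast_nonneg (α := ℝ)]

lemma card_filter_not_dvd_norm_coe_mul_le (hq : 0 < q) (hqa : IsCoprime (q : ℤ) a)
    (hα0 : 0 < |q * α - a|) (hα : |q * α - a| * q ≤ 1) (hα2 : |q * α - a| ≤ 1 / 2)
    {δ : ℝ} (hδ : 0 ≤ δ) (n : ℕ) :
    (#{d ∈ Ioc 0 n | ¬ q ∣ d ∧ ‖((d * α : ℝ) : UnitAddCircle)‖ ≤ δ} : ℝ) ≤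
      (30 * n + 6 * q) * δ + 6 * |q * α - a| * n := by
  have hnear := card_filter_near_le (α := α) hq hqa hδ n
  obtain hbn | hbn := le_or_gt (n * |q * α - a|) (1 / 2)
  · have hsub : {d ∈ Ioc 0 n | ¬ q ∣ d ∧ ‖((d * α : ℝ) : UnitAddCircle)‖ ≤ δ} ⊆
        {d ∈ Ioc 0 n | (¬ q ∣ d ∧ d * |q * α - a| ≤ 1 / 2) ∧
          ‖((d * α : ℝ) : UnitAddCircle)‖ ≤ δ} := by
      intro d hd
      obtain ⟨hdn, hqd, hdδ⟩ := mem_filter.1 hd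
      refine mem_filter.2 ⟨hdn, ⟨hqd, le_trans ?_ hbn⟩, hdδ⟩
      gcongr
      exact (mem_Ioc.1 hdn).2
    refine le_trans (mod_cast card_le_card hsub) (hnear.trans ?_)
    have : 0 ≤ 24 * n * δ + 6 * |q * α - a| * n := by positivity
    linarith
  · calc (#{d ∈ Ioc 0 n | ¬ q ∣ d ∧ ‖((d * α : ℝ) : UnitAddCircle)‖ ≤ δ} : ℝ)
        ≤ #{d ∈ Ioc 0 n | ‖(((d : ℕ) * α : ℝ) : UnitAddCircle)‖ ≤ δ} := by
          gcongr with d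
          exact And.right
      _ ≤ (4 * |q * α - a| * n + 1) * (4 * δ / |q * α - a| + 1) :=
          card_filter_norm_coe_mul_le hq hqa hα0 hα hα2 hδ n
      _ ≤ (6 * |q * α - a| * n) * (4 * δ / |q * α - a| + 1) := by gcongr; linarith
      _ = 24 * n * δ + 6 * |q * α - a| * n := by field_simp; ring
      _ ≤ (30 * n + 6 * q) * δ + 6 * |q * α - a| * n := by
          have : 0 ≤ (6 * n + 6 * q) * δ := by positivity
          linarith

lemma sum_min_two_pow_one_div_norm_le (hq : 0 < q) (hqa : IsCoprime (q : ℤ) a)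
    (hα0 : 0 < |q * α - a|) (hα : |q * α - a| * q ≤ 1) (hα2 : |q * α - a| ≤ 1 / 2) (N i : ℕ) :
    ∑ d ∈ Ioc 0 (N / 2 ^ i) with ¬ q ∣ d,
        min ((2 : ℝ) ^ (i + 1)) (1 / ‖((d * α : ℝ) : UnitAddCircle)‖) ≤
      (i + 2) * (60 * (N / 2 ^ i) + 12 * q) + 48 * |q * α - a| * N := by
  have hN : ((N / 2 ^ i : ℕ) : ℝ) ≤ N / 2 ^ i := by
    simpa using Nat.cast_div_le (α := ℝ) (m := N) (n := 2 ^ i)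
  refine (sum_min_two_pow_one_div_le (A := 30 * (N / 2 ^ i) + 6 * q)
    (B := 6 * |q * α - a| * (N / 2 ^ i)) (fun d _ ↦ norm_nonneg _) (fun d _ ↦ ?_) (by positivity)
    (fun δ hδ ↦ ?_) (i + 1)).trans_eq ?_
  · have := AddCircle.norm_le_half_period 1 one_ne_zero (x := ((d * α : ℝ) : UnitAddCircle))
    rw [abs_one] at this
    linarith
  · rw [filter_filter]
    refine (card_filter_not_dvd_norm_coe_mul_le hq hqa hα0 hα hα2 hδ _).trans ?_
    gcongr
  · push_cast
    rw [add_assoc i, pow_add]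
    field_simp
    ring

lemma add_one_mul_sum_min_two_pow_one_div_norm_le (hq : 0 < q) (hqa : IsCoprime (q : ℤ) a)
    (hα0 : 0 < |q * α - a|) (hα : |q * α - a| * q ≤ 1) (hα2 : |q * α - a| ≤ 1 / 2) (N i : ℕ) :
    (i + 1) * ∑ d ∈ Ioc 0 (N / 2 ^ i) with ¬ q ∣ d,
        min ((2 : ℝ) ^ (i + 1)) (1 / ‖((d * α : ℝ) : UnitAddCircle)‖) ≤
      60 * N * (((i : ℝ) + 2) ^ 2 / 2 ^ i) + (12 * q + 48 * |q * α - a| * N) * (i + 2) ^ 2 := by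
  have hi : (1 : ℝ) ≤ i + 2 := by linarith [i.cast_nonneg (α := ℝ)]
  calc (i + 1) * ∑ d ∈ Ioc 0 (N / 2 ^ i) with ¬ q ∣ d,
        min ((2 : ℝ) ^ (i + 1)) (1 / ‖((d * α : ℝ) : UnitAddCircle)‖)
      ≤ (i + 1) * ((i + 2) * (60 * (N / 2 ^ i) + 12 * q) + 48 * |q * α - a| * N) := by
        gcongr
        exact sum_min_two_pow_one_div_norm_le hq hqa hα0 hα hα2 N i
    _ ≤ (i + 2) * ((i + 2) * (60 * (N / 2 ^ i) + 12 * q) +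
          (i + 2) * (48 * |q * α - a| * N)) := by
        gcongr ?_ * (_ + ?_)
        · linarith
        · exact le_mul_of_one_le_left (by positivity) hi
    _ = _ := by ring

lemma norm_sum_log_smul_fourierChar_pow_le_sum (hα : Irrational α) {N d : ℕ} (hd : d ∈ Ioc 0 N)
    (i₀ : ℕ) :
    ‖∑ m ∈ Ioc (2 ^ i₀) (N / d), Real.log m • (𝐞 (d * α) : ℂ) ^ m‖ ≤
      ∑ i ∈ Ico i₀ (Nat.log 2 N + 1) with d ≤ N / 2 ^ i,
        (i + 1) * min ((2 : ℝ) ^ (i + 1)) (1 / ‖((d * α : ℝ) : UnitAddCircle)‖) := by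
  have hd0 := (mem_Ioc.1 hd).1
  obtain hM | hM := le_or_gt (N / d) (2 ^ i₀)
  · rw [Ioc_eq_empty_of_le hM, sum_empty, norm_zero]
    positivity
  set i := Nat.log 2 (N / d)
  have hM0 : N / d ≠ 0 := hM.ne_bot
  have hlo : 2 ^ i ≤ N / d := Nat.pow_log_le_self 2 hM0
  have hhi : ((N / d : ℕ) : ℝ) ≤ 2 ^ (i + 1) := mod_cast (Nat.lt_pow_succ_log_self one_lt_two _).le
  have hmem : i ∈ {i ∈ Ico i₀ (Nat.log 2 N + 1) | d ≤ N / 2 ^ i} := by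
    rw [mem_filter, mem_Ico, Nat.lt_add_one_iff, Nat.le_div_iff_mul_le (by positivity), mul_comm]
    exact ⟨⟨(Nat.le_log_iff_pow_le one_lt_two hM0).2 hM.le,
      Nat.log_mono_right (Nat.div_le_self N d)⟩, (Nat.le_div_iff_mul_le hd0).1 hlo⟩
  have hlog : Real.log (N / d : ℕ) ≤ i + 1 := by
    calc Real.log (N / d : ℕ) ≤ Real.log (2 ^ (i + 1)) := by gcongr
      _ = (i + 1) * Real.log 2 := by rw [Real.log_pow]; push_cast; rfl
      _ ≤ (i + 1) * 1 := by gcongr; linarith [Real.log_two_lt_d9]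
      _ = i + 1 := mul_one _
  have hdα : ((d * α : ℝ) : UnitAddCircle) ≠ 0 := fun h ↦ by
    obtain ⟨n, hn⟩ := (AddCircle.coe_eq_zero_iff 1).1 h
    refine (hα.natCast_mul hd0.ne').ne_int n ?_
    simpa using hn.symm
  calc ‖∑ m ∈ Ioc (2 ^ i₀) (N / d), Real.log m • (𝐞 (d * α) : ℂ) ^ m‖
      ≤ Real.log (N / d : ℕ) * min ((N / d : ℕ) : ℝ) (1 / ‖((d * α : ℝ) : UnitAddCircle)‖) :=
        norm_sum_Ioc_log_smul_fourierChar_pow_le hdα _ _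
    _ ≤ (i + 1) * min ((2 : ℝ) ^ (i + 1)) (1 / ‖((d * α : ℝ) : UnitAddCircle)‖) := by gcongr
    _ ≤ _ := single_le_sum (f := fun i : ℕ ↦
        (i + 1) * min ((2 : ℝ) ^ (i + 1)) (1 / ‖((d * α : ℝ) : UnitAddCircle)‖))
        (fun i _ ↦ by positivity) hmem

lemma sum_norm_sum_log_smul_fourierChar_pow_le (hα : Irrational α) (hq : 2 ≤ q)
    (hqa : IsCoprime (q : ℤ) a) (hαq : |q * α - a| * q ≤ 1) (N i₀ : ℕ) :
    ∑ d ∈ Ioc 0 N with ¬ q ∣ d,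
        ‖∑ m ∈ Ioc (2 ^ i₀) (N / d), Real.log m • (𝐞 (d * α) : ℂ) ^ m‖ ≤
      60 * N * ∑ i ∈ Ico i₀ (Nat.log 2 N + 1), ((i : ℝ) + 2) ^ 2 / 2 ^ i +
        (12 * q + 48 * |q * α - a| * N) * (Nat.log 2 N + 2) ^ 3 := by
  have hα0 : 0 < |q * α - a| :=
    abs_pos.2 (sub_ne_zero.2 ((hα.natCast_mul (by lia)).ne_int a))
  have hα2 : |q * α - a| ≤ 1 / 2 := by
    have : (2 : ℝ) ≤ q := mod_cast hq
    nlinarith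
  set b := |q * α - a|
  set L := Nat.log 2 N
  calc ∑ d ∈ Ioc 0 N with ¬ q ∣ d,
        ‖∑ m ∈ Ioc (2 ^ i₀) (N / d), Real.log m • (𝐞 (d * α) : ℂ) ^ m‖
      ≤ ∑ d ∈ Ioc 0 N with ¬ q ∣ d, ∑ i ∈ Ico i₀ (L + 1) with d ≤ N / 2 ^ i,
          (i + 1) * min ((2 : ℝ) ^ (i + 1)) (1 / ‖((d * α : ℝ) : UnitAddCircle)‖) :=
        sum_le_sum fun d hd ↦
          norm_sum_log_smul_fourierChar_pow_le_sum hα (mem_filter.1 hd).1 i₀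
    _ = ∑ i ∈ Ico i₀ (L + 1), (i + 1) * ∑ d ∈ Ioc 0 (N / 2 ^ i) with ¬ q ∣ d,
          min ((2 : ℝ) ^ (i + 1)) (1 / ‖((d * α : ℝ) : UnitAddCircle)‖) := by
        simp_rw [mul_sum]
        refine sum_comm' fun d i ↦ ?_
        have := Nat.div_le_self N (2 ^ i)
        grind
    _ ≤ ∑ i ∈ Ico i₀ (L + 1),
          (60 * N * (((i : ℝ) + 2) ^ 2 / 2 ^ i) + (12 * q + 48 * b * N) * (L + 2) ^ 2) := by
        refine sum_le_sum fun i hi ↦ ?_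
        have hiL : (i : ℝ) ≤ L := mod_cast Nat.lt_add_one_iff.1 (mem_Ico.1 hi).2
        refine (add_one_mul_sum_min_two_pow_one_div_norm_le (by lia) hqa hα0 hαq hα2 N i).trans ?_
        gcongr
    _ = 60 * N * ∑ i ∈ Ico i₀ (L + 1), ((i : ℝ) + 2) ^ 2 / 2 ^ i +
          (L + 1 - i₀ : ℕ) * ((12 * q + 48 * b * N) * (L + 2) ^ 2) := by
        rw [sum_add_distrib, ← mul_sum, sum_const, nsmul_eq_mul, Nat.card_Ico]
    _ ≤ 60 * N * ∑ i ∈ Ico i₀ (L + 1), ((i : ℝ) + 2) ^ 2 / 2 ^ i +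
          (L + 2) * ((12 * q + 48 * b * N) * (L + 2) ^ 2) := by
        gcongr
        exact_mod_cast (by lia : L + 1 - i₀ ≤ L + 2)
    _ = _ := by ring

end RationalApproximation

section CoprimeMoebius

open ArithmeticFunction
open scoped ArithmeticFunction.Moebius ArithmeticFunction.zeta

lemma sum_Ioc_sum_divisorsAntidiagonal {M : Type*} [AddCommMonoid M] (F : ℕ → ℕ → M) (N : ℕ) :
    ∑ n ∈ Ioc 0 N, ∑ x ∈ n.divisorsAntidiagonal, F x.1 x.2 =
      ∑ d ∈ Ioc 0 N, ∑ m ∈ Ioc 0 (N / d), F d m := by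
  rw [sum_sigma', sum_sigma']
  refine sum_bij' (fun x _ ↦ ⟨x.2.1, x.2.2⟩) (fun x _ ↦ ⟨x.1 * x.2, (x.1, x.2)⟩) ?_ ?_ ?_ ?_ ?_
  · rintro ⟨n, d, m⟩ h
    simp only [mem_sigma, mem_Ioc, Nat.mem_divisorsAntidiagonal] at h ⊢
    obtain ⟨⟨hn, hnN⟩, rfl, -⟩ := h
    have hd : 0 < d := Nat.pos_of_mul_pos_right hn
    have hm : 0 < m := Nat.pos_of_mul_pos_left hn
    rw [Nat.le_div_iff_mul_le hd, mul_comm m]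
    exact ⟨⟨hd, (Nat.le_mul_of_pos_right d hm).trans hnN⟩, hm, hnN⟩
  · rintro ⟨d, m⟩ h
    simp only [mem_sigma, mem_Ioc, Nat.mem_divisorsAntidiagonal] at h ⊢
    obtain ⟨⟨hd, -⟩, hm, hmN⟩ := h
    rw [Nat.le_div_iff_mul_le hd, mul_comm] at hmN
    exact ⟨⟨Nat.mul_pos hd hm, hmN⟩, trivial, (Nat.mul_pos hd hm).ne'⟩
  · rintro ⟨n, d, m⟩ h
    simp only [mem_sigma, Nat.mem_divisorsAntidiagonal] at h
    obtain ⟨-, rfl, -⟩ := h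
    rfl
  · exact fun _ _ ↦ rfl
  · exact fun _ _ ↦ rfl

/-- The Möbius function restricted to the integers coprime to `q`, that is `μ · 1_{(n, q) = 1}`. -/
noncomputable def coprimeMoebius (q : ℕ) : ArithmeticFunction ℝ :=
  ⟨fun n ↦ if n.Coprime q then (μ n : ℝ) else 0, by simp⟩

open Classical in
/-- The indicator function of the integers all of whose prime factors divide `q`. It is the
convolution of `coprimeMoebius q` with `ζ`. -/
noncomputable def factoredIndicator (q : ℕ) : ArithmeticFunction ℝ :=
  ⟨fun n ↦ if n ∈ Nat.factoredNumbers q.primeFactors then 1 else 0, by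
    simp [Nat.mem_factoredNumbers]⟩

lemma coprimeMoebius_apply (q n : ℕ) :
    coprimeMoebius q n = if n.Coprime q then (μ n : ℝ) else 0 := rfl

open Classical in
lemma factoredIndicator_apply (q n : ℕ) :
    factoredIndicator q n = if n ∈ Nat.factoredNumbers q.primeFactors then 1 else 0 := rfl

lemma factoredIndicator_nonneg (q n : ℕ) : 0 ≤ factoredIndicator q n := by
  rw [factoredIndicator_apply]
  positivity

lemma isMultiplicative_coprimeMoebius (q : ℕ) : (coprimeMoebius q).IsMultiplicative := by
  refine IsMultiplicative.iff_ne_zero.2 ⟨by simp [coprimeMoebius_apply], fun {m n} _ _ hmn ↦ ?_⟩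
  simp only [coprimeMoebius_apply, Nat.coprime_mul_iff_left,
    isMultiplicative_moebius.map_mul_of_coprime hmn]
  split_ifs <;> simp_all

lemma isMultiplicative_factoredIndicator (q : ℕ) : (factoredIndicator q).IsMultiplicative := by
  refine IsMultiplicative.iff_ne_zero.2
    ⟨by simp [factoredIndicator_apply, Nat.mem_factoredNumbers], fun {m n} _ _ _ ↦ ?_⟩
  have hmul : m * n ∈ Nat.factoredNumbers q.primeFactors ↔
      m ∈ Nat.factoredNumbers q.primeFactors ∧ n ∈ Nat.factoredNumbers q.primeFactors := by
    simp only [Nat.mem_factoredNumbers']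
    grind [Nat.Prime.dvd_mul]
  simp only [factoredIndicator_apply, hmul]
  split_ifs <;> simp_all

lemma factoredIndicator_prime_pow {q p k : ℕ} (hq : 0 < q) (hp : p.Prime) :
    factoredIndicator q (p ^ (k + 1)) = if p ∣ q then 1 else 0 := by
  have hmem : p ^ (k + 1) ∈ Nat.factoredNumbers q.primeFactors ↔ p ∣ q := by
    rw [Nat.mem_factoredNumbers_iff_primeFactors_subset,
      Nat.primeFactors_prime_pow k.succ_ne_zero hp]
    simp [hp, hp.ne_zero, hq.ne']
  simp only [factoredIndicator_apply, hmem]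

lemma coprimeMoebius_mul_zeta {q : ℕ} (hq : 0 < q) :
    coprimeMoebius q * (ζ : ArithmeticFunction ℝ) = factoredIndicator q := by
  rw [IsMultiplicative.eq_iff_eq_on_prime_powers _
    ((isMultiplicative_coprimeMoebius q).mul isMultiplicative_zeta.natCast) _
    (isMultiplicative_factoredIndicator q)]
  intro p k hp
  rw [coe_mul_zeta_apply, Nat.sum_divisors_prime_pow hp]
  obtain _ | k := k
  · simp [coprimeMoebius_apply, factoredIndicator_apply, Nat.mem_factoredNumbers]
  have hhigh : ∑ j ∈ range k, coprimeMoebius q (p ^ (j + 1 + 1)) = 0 := sum_eq_zero fun j _ ↦ by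
    simp [coprimeMoebius_apply, moebius_apply_prime_pow hp]
  rw [factoredIndicator_prime_pow hq hp, sum_range_succ', sum_range_succ', hhigh]
  simp only [zero_add, pow_one, pow_zero, coprimeMoebius_apply, moebius_apply_prime hp,
    hp.coprime_iff_not_dvd]
  split_ifs <;> simp_all

lemma coprimeMoebius_mul_log {q : ℕ} (hq : 0 < q) :
    coprimeMoebius q * log = factoredIndicator q * vonMangoldt := by
  rw [← vonMangoldt_mul_zeta, ← coprimeMoebius_mul_zeta hq, mul_comm vonMangoldt, mul_assoc]

lemma coprimeMoebius_mul_log_nonneg {q : ℕ} (hq : 0 < q) (n : ℕ) :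
    0 ≤ (coprimeMoebius q * log) n := by
  rw [coprimeMoebius_mul_log hq, mul_apply]
  exact sum_nonneg fun x _ ↦ mul_nonneg (factoredIndicator_nonneg _ _) vonMangoldt_nonneg

lemma moebius_mul_eq_mul_coprimeMoebius (q e : ℕ) : (μ (q * e) : ℝ) = μ q * coprimeMoebius q e := by
  rw [coprimeMoebius_apply]
  split_ifs with h
  · rw [isMultiplicative_moebius.map_mul_of_coprime h.symm, Int.cast_mul]
  · rw [mul_zero, moebius_eq_zero_of_not_squarefree fun hs ↦ h (Nat.squarefree_mul_iff.1 hs).1.symm,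
      Int.cast_zero]

lemma inv_one_sub_inv_le_ite_mul_sqrt {p : ℕ} (hp : p.Prime) :
    (1 - (p : ℝ)⁻¹)⁻¹ ≤ (if p = 2 then 2 else 1) * √p := by
  split_ifs with h2
  · subst h2
    have := Real.one_le_sqrt.2 one_le_two
    push_cast
    norm_num
  · have hp3 : (3 : ℝ) ≤ p := mod_cast hp.two_le.lt_of_ne' h2
    have hs : (3 / 2 : ℝ) < √p := Real.lt_sqrt_of_sq_lt (by linarith)
    have : √(p : ℝ) * √p = p := Real.mul_self_sqrt (by linarith)
    have hp1 : (1 : ℝ) - (p : ℝ)⁻¹ = (p - 1) / p := by field_simp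
    rw [hp1, inv_div, one_mul, div_le_iff₀ (by linarith)]
    nlinarith

lemma sum_factoredIndicator_div_le (q N : ℕ) :
    ∑ n ∈ Ioc 0 N, factoredIndicator q n / n ≤ ∏ p ∈ q.primeFactors, (1 - (p : ℝ)⁻¹)⁻¹ := by
  classical
  let f : ℕ →* ℝ := ((invMonoidWithZeroHom : ℝ →*₀ ℝ) : ℝ →* ℝ).comp (Nat.castRingHom ℝ : ℕ →* ℝ)
  have hf (n : ℕ) : f n = (n : ℝ)⁻¹ := rfl
  have hsum := (EulerProduct.summable_and_hasSum_factoredNumbers_prod_filter_prime_geometric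
    (f := f) (fun {p} hp ↦ by
      rw [hf, norm_inv, Real.norm_natCast]
      exact inv_lt_one_of_one_lt₀ (mod_cast hp.one_lt)) q.primeFactors).2
  rw [filter_true_of_mem fun p ↦ Nat.prime_of_mem_primeFactors] at hsum
  have hind := hasSum_subtype_iff_indicator.1 hsum
  calc ∑ n ∈ Ioc 0 N, factoredIndicator q n / n
      = ∑ n ∈ Ioc 0 N, (Nat.factoredNumbers q.primeFactors).indicator f n := by
        refine sum_congr rfl fun n _ ↦ ?_
        rw [factoredIndicator_apply, Set.indicator_apply, ite_div, zero_div, one_div, hf]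
    _ ≤ ∑' n, (Nat.factoredNumbers q.primeFactors).indicator f n :=
        hind.summable.sum_le_tsum _ fun n _ ↦
          Set.indicator_nonneg (fun n _ ↦ by rw [hf]; positivity) n
    _ = ∏ p ∈ q.primeFactors, (1 - (p : ℝ)⁻¹)⁻¹ := hind.tsum_eq

lemma prod_primeFactors_inv_one_sub_inv_le {q : ℕ} (hq : 0 < q) :
    ∏ p ∈ q.primeFactors, (1 - (p : ℝ)⁻¹)⁻¹ ≤ 2 * √q := by
  calc ∏ p ∈ q.primeFactors, (1 - (p : ℝ)⁻¹)⁻¹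
      ≤ ∏ p ∈ q.primeFactors, ((if p = 2 then 2 else 1) * √(p : ℝ)) := by
        refine prod_le_prod (fun p _ ↦ ?_) fun p hp ↦
          inv_one_sub_inv_le_ite_mul_sqrt (Nat.prime_of_mem_primeFactors hp)
        exact inv_nonneg.2 (sub_nonneg.2 (Nat.cast_inv_le_one p))
    _ = (if 2 ∈ q.primeFactors then 2 else 1) * √(∏ p ∈ q.primeFactors, p : ℕ) := by
        rw [prod_mul_distrib, prod_ite_eq', Nat.cast_prod, Real.sqrt_prod _ fun p _ ↦ by positivity]
    _ ≤ 2 * √q := by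
        gcongr
        · split_ifs <;> norm_num
        · exact Nat.le_of_dvd hq (Nat.prod_primeFactors_dvd q)

lemma sum_coprimeMoebius_mul_log_le {q : ℕ} (hq : 0 < q) (N : ℕ) :
    ∑ n ∈ Ioc 0 N, (coprimeMoebius q * log) n ≤ (Real.log 4 + 4) * N * (2 * √q) := by
  have hψ (M : ℕ) : ∑ m ∈ Ioc 0 M, vonMangoldt m ≤ (Real.log 4 + 4) * M := by
    simpa [Chebyshev.psi] using Chebyshev.psi_le_const_mul_self (x := M) (by positivity)
  rw [coprimeMoebius_mul_log hq, sum_Ioc_mul_eq_sum_sum]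
  calc ∑ n ∈ Ioc 0 N, factoredIndicator q n * ∑ m ∈ Ioc 0 (N / n), vonMangoldt m
      ≤ ∑ n ∈ Ioc 0 N, factoredIndicator q n * ((Real.log 4 + 4) * (N / n)) := by
        gcongr with n
        · exact factoredIndicator_nonneg q n
        · refine (hψ _).trans ?_
          gcongr
          exact Nat.cast_div_le
    _ = (Real.log 4 + 4) * N * ∑ n ∈ Ioc 0 N, factoredIndicator q n / n := by
        rw [mul_sum]
        exact sum_congr rfl fun n _ ↦ by ring
    _ ≤ (Real.log 4 + 4) * N * (2 * √q) := by
        gcongr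
        exact (sum_factoredIndicator_div_le q N).trans (prod_primeFactors_inv_one_sub_inv_le hq)

lemma sum_filter_dvd_moebius_mul_sum_log_smul_pow {q : ℕ} (hq : 0 < q) (N : ℕ) (z : ℂ) :
    ∑ d ∈ Ioc 0 N with q ∣ d, (μ d : ℂ) * ∑ m ∈ Ioc 0 (N / d), Real.log m • z ^ (d * m) =
      μ q * ∑ k ∈ Ioc 0 (N / q), (coprimeMoebius q * log) k • z ^ (q * k) := by
  have hconv (k : ℕ) : (coprimeMoebius q * log) k • z ^ (q * k) =
      ∑ x ∈ k.divisorsAntidiagonal,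
        (coprimeMoebius q x.1 * Real.log x.2) • z ^ (q * x.1 * x.2) := by
    rw [mul_apply, sum_smul]
    refine sum_congr rfl fun x hx ↦ ?_
    rw [mul_assoc q, (Nat.mem_divisorsAntidiagonal.1 hx).1, log_apply]
  simp_rw [hconv]
  rw [sum_Ioc_filter_dvd hq, sum_Ioc_sum_divisorsAntidiagonal
    (fun d m ↦ (coprimeMoebius q d * Real.log m) • z ^ (q * d * m)), mul_sum]
  refine sum_congr rfl fun e _ ↦ ?_
  have hμ : ((μ (q * e) : ℤ) : ℂ) = μ q * (coprimeMoebius q e : ℂ) := by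
    exact_mod_cast congrArg Complex.ofReal (moebius_mul_eq_mul_coprimeMoebius q e)
  simp_rw [hμ, Nat.div_div_eq_div_mul, mul_smul, ← smul_sum, Complex.real_smul, mul_assoc]

-- Factoring `μ q` out of the terms `d = q e` leaves the nonnegative function
-- `coprimeMoebius q * log`, so that the exponentials can be bounded trivially.
lemma norm_sum_filter_dvd_moebius_mul_sum_log_smul_pow_le {q : ℕ} (hq : 0 < q) (N : ℕ)
    (z : Circle) :
    ‖∑ d ∈ Ioc 0 N with q ∣ d,
        (μ d : ℂ) * ∑ m ∈ Ioc 0 (N / d), Real.log m • (z : ℂ) ^ (d * m)‖ ≤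
      (Real.log 4 + 4) * (N / q) * (2 * √q) := by
  rw [sum_filter_dvd_moebius_mul_sum_log_smul_pow hq, norm_mul]
  calc ‖((μ q : ℤ) : ℂ)‖ * ‖∑ k ∈ Ioc 0 (N / q), (coprimeMoebius q * log) k • (z : ℂ) ^ (q * k)‖
      ≤ 1 * ∑ k ∈ Ioc 0 (N / q), (coprimeMoebius q * log) k := by
        gcongr
        · rw [Complex.norm_intCast]
          exact_mod_cast abs_moebius_le_one
        · refine norm_sum_le_of_le _ fun k _ ↦ ?_
          rw [norm_smul, norm_pow, Circle.norm_coe, one_pow, mul_one,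
            Real.norm_of_nonneg (coprimeMoebius_mul_log_nonneg hq k)]
    _ ≤ (Real.log 4 + 4) * (N / q : ℕ) * (2 * √q) := by
        rw [one_mul]
        exact sum_coprimeMoebius_mul_log_le hq _
    _ ≤ (Real.log 4 + 4) * (N / q) * (2 * √q) := by
        gcongr
        exact Nat.cast_div_le

end CoprimeMoebius

section Vinogradov

open ArithmeticFunction Topology
open scoped ArithmeticFunction.Moebius FourierTransform

/-- The part `m ≤ K` of the double sum `∑ μ(d) log m · z ^ (d m)` over `d m ≤ N`, which is what the
identity `Λ = μ * log` turns `∑ Λ(k) z ^ k` into. -/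
noncomputable def moebiusLogSum (z : ℂ) (K N : ℕ) : ℂ :=
  ∑ d ∈ Ioc 0 N, (μ d : ℂ) * ∑ m ∈ Ioc 0 (min K (N / d)), Real.log m • z ^ (d * m)

lemma norm_moebius_mul_le (d : ℕ) (w : ℂ) : ‖(μ d : ℂ) * w‖ ≤ ‖w‖ := by
  rw [norm_mul, Complex.norm_intCast]
  exact mul_le_of_le_one_left (norm_nonneg w) (mod_cast abs_moebius_le_one)

lemma sum_vonMangoldt_mul_pow (z : ℂ) (N : ℕ) :
    ∑ k ∈ Ioc 0 N, (vonMangoldt k : ℂ) * z ^ k =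
      ∑ d ∈ Ioc 0 N, (μ d : ℂ) * ∑ m ∈ Ioc 0 (N / d), Real.log m • z ^ (d * m) := by
  simp_rw [mul_sum]
  rw [← sum_Ioc_sum_divisorsAntidiagonal fun d m ↦ (μ d : ℂ) * Real.log m • z ^ (d * m)]
  refine sum_congr rfl fun k _ ↦ ?_
  rw [← moebius_mul_log_eq_vonMangoldt, mul_apply, Complex.ofReal_sum, sum_mul]
  refine sum_congr rfl fun x hx ↦ ?_
  rw [(Nat.mem_divisorsAntidiagonal.1 hx).1, log_apply, intCoe_apply, Complex.ofReal_mul,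
    Complex.ofReal_intCast, Complex.real_smul, mul_assoc]

lemma moebiusLogSum_eq (z : ℂ) (K N : ℕ) :
    moebiusLogSum z K N =
      ∑ m ∈ Ioc 0 K, Real.log m • ∑ d ∈ Ioc 0 (N / m), (μ d : ℂ) * (z ^ m) ^ d := by
  simp_rw [moebiusLogSum, mul_sum, smul_sum]
  rw [sum_comm' (t' := Ioc 0 K) (s' := fun m ↦ Ioc 0 (N / m))]
  · refine sum_congr rfl fun m _ ↦ sum_congr rfl fun d _ ↦ ?_
    rw [mul_smul_comm, ← pow_mul, mul_comm m]
  · intro d m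
    simp only [mem_Ioc, le_min_iff]
    constructor
    · rintro ⟨⟨hd, -⟩, hm, hmK, hmN⟩
      rw [Nat.le_div_iff_mul_le hd, mul_comm] at hmN
      exact ⟨⟨hd, (Nat.le_div_iff_mul_le hm).2 hmN⟩, hm, hmK⟩
    · rintro ⟨⟨hd, hdN⟩, hm, hmK⟩
      rw [Nat.le_div_iff_mul_le hm] at hdN
      exact ⟨⟨hd, (Nat.le_mul_of_pos_right d hm).trans hdN⟩, hm, hmK,
        (Nat.le_div_iff_mul_le hd).2 (mul_comm d m ▸ hdN)⟩

lemma tendsto_norm_moebiusLogSum_div {z : Circle} (hz : ¬IsOfFinOrder z) (K : ℕ) :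
    Tendsto (fun N : ℕ ↦ ‖moebiusLogSum z K N‖ / N) atTop (𝓝 0) := by
  have hlim : Tendsto (fun N : ℕ ↦ ∑ m ∈ Ioc 0 K, Real.log m *
      (‖∑ d ∈ Ioc 0 (N / m), (μ d : ℂ) * ((z ^ m : Circle) : ℂ) ^ d‖ / (N / m : ℕ)))
      atTop (𝓝 (∑ m ∈ Ioc 0 K, Real.log m * 0)) := by
    refine tendsto_finsetSum _ fun m hm ↦ Tendsto.const_mul _ ?_
    have hm0 : m ≠ 0 := (mem_Ioc.1 hm).1.ne'
    have hzm : ¬IsOfFinOrder (z ^ m) := by simpa [isOfFinOrder_pow, hm0] using hz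
    have hμ := tendsto_norm_sum_mul_pow_div
      (f := ((μ : ArithmeticFunction ℤ) : ArithmeticFunction ℂ))
      isMultiplicative_moebius.intCast (fun n ↦ by simpa using norm_moebius_mul_le n 1) hzm
    simpa only [intCoe_apply, Function.comp_def] using hμ.comp (Nat.tendsto_div_const_atTop hm0)
  simp only [mul_zero, sum_const_zero] at hlim
  refine squeeze_zero (fun N ↦ by positivity) (fun N ↦ ?_) hlim
  rw [moebiusLogSum_eq]
  calc ‖∑ m ∈ Ioc 0 K, Real.log m • ∑ d ∈ Ioc 0 (N / m), (μ d : ℂ) * ((z : ℂ) ^ m) ^ d‖ / N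
      ≤ (∑ m ∈ Ioc 0 K,
          Real.log m * ‖∑ d ∈ Ioc 0 (N / m), (μ d : ℂ) * ((z ^ m : Circle) : ℂ) ^ d‖) / N := by
        gcongr
        refine norm_sum_le_of_le _ fun m _ ↦ ?_
        rw [norm_smul, Real.norm_of_nonneg (Real.log_natCast_nonneg m), Circle.coe_pow]
    _ ≤ _ := by
        simp_rw [sum_div, mul_div_assoc]
        refine sum_le_sum fun m _ ↦
          mul_le_mul_of_nonneg_left ?_ (Real.log_natCast_nonneg m)
        rcases Nat.eq_zero_or_pos (N / m) with h | h
        · simp [h]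
        · exact div_le_div_of_nonneg_left (norm_nonneg _) (mod_cast h)
            (mod_cast Nat.div_le_self N m)

lemma norm_sum_Ioc_min_log_smul_pow_le (z : Circle) (K d M : ℕ) :
    ‖∑ m ∈ Ioc 0 (min K M), Real.log m • (z : ℂ) ^ (d * m)‖ ≤ K * K := by
  calc ‖∑ m ∈ Ioc 0 (min K M), Real.log m • (z : ℂ) ^ (d * m)‖
      ≤ ∑ _m ∈ Ioc 0 (min K M), (K : ℝ) := by
        refine norm_sum_le_of_le _ fun m hm ↦ ?_
        have hmK : m ≤ K := (mem_Ioc.1 hm).2.trans (min_le_left _ _)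
        rw [norm_smul, norm_pow, Circle.norm_coe, one_pow, mul_one,
          Real.norm_of_nonneg (Real.log_natCast_nonneg m)]
        exact (Real.log_le_self m.cast_nonneg).trans (mod_cast hmK)
    _ ≤ K * K := by
        rw [sum_const, nsmul_eq_mul, Nat.card_Ioc, Nat.sub_zero]
        gcongr
        exact min_le_left _ _

lemma sum_vonMangoldt_mul_pow_eq_moebiusLogSum_sub_add_add (z : ℂ) (q K N : ℕ) :
    ∑ k ∈ Ioc 0 N, (vonMangoldt k : ℂ) * z ^ k =
      moebiusLogSum z K N -
        ∑ d ∈ Ioc 0 N with q ∣ d,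
          (μ d : ℂ) * ∑ m ∈ Ioc 0 (min K (N / d)), Real.log m • z ^ (d * m) +
        ∑ d ∈ Ioc 0 N with ¬ q ∣ d, (μ d : ℂ) * ∑ m ∈ Ioc K (N / d), Real.log m • z ^ (d * m) +
        ∑ d ∈ Ioc 0 N with q ∣ d, (μ d : ℂ) * ∑ m ∈ Ioc 0 (N / d), Real.log m • z ^ (d * m) := by
  have hcut (d : ℕ) : ∑ m ∈ Ioc 0 (N / d), Real.log m • z ^ (d * m) =
      ∑ m ∈ Ioc 0 (min K (N / d)), Real.log m • z ^ (d * m) +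
        ∑ m ∈ Ioc K (N / d), Real.log m • z ^ (d * m) := by
    rcases le_total K (N / d) with h | h
    · rw [min_eq_left h, sum_Ioc_consecutive _ K.zero_le h]
    · rw [min_eq_right h, Ioc_eq_empty (a := K) h.not_gt, sum_empty, add_zero]
  rw [sum_vonMangoldt_mul_pow, moebiusLogSum, ← sum_filter_add_sum_filter_not (Ioc 0 N) (q ∣ ·),
    ← sum_filter_add_sum_filter_not (Ioc 0 N) (q ∣ ·)]
  simp_rw [hcut, mul_add, sum_add_distrib]
  ring

lemma norm_sum_vonMangoldt_mul_fourierChar_pow_le {α : ℝ} {q : ℕ} {a : ℤ} (hα : Irrational α)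
    (hq : 2 ≤ q) (hqa : IsCoprime (q : ℤ) a) (hαq : |q * α - a| * q ≤ 1) (N i₀ : ℕ) :
    ‖∑ k ∈ Ioc 0 N, (vonMangoldt k : ℂ) * (𝐞 α : ℂ) ^ k‖ ≤
      ‖moebiusLogSum (𝐞 α) (2 ^ i₀) N‖ + (N / q) * (2 ^ i₀ * 2 ^ i₀) +
        (60 * N * ∑ i ∈ Ico i₀ (Nat.log 2 N + 1), ((i : ℝ) + 2) ^ 2 / 2 ^ i +
          (12 * q + 48 * |q * α - a| * N) * (Nat.log 2 N + 2) ^ 3) +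
        (Real.log 4 + 4) * (N / q) * (2 * √q) := by
  rw [sum_vonMangoldt_mul_pow_eq_moebiusLogSum_sub_add_add _ q (2 ^ i₀)]
  refine norm_add_le_of_le (norm_add_le_of_le (norm_sub_le_of_le le_rfl ?_) ?_) ?_
  · calc ‖∑ d ∈ Ioc 0 N with q ∣ d, (μ d : ℂ) *
          ∑ m ∈ Ioc 0 (min (2 ^ i₀) (N / d)), Real.log m • (𝐞 α : ℂ) ^ (d * m)‖
        ≤ ∑ d ∈ Ioc 0 N with q ∣ d, ((2 ^ i₀ : ℕ) * (2 ^ i₀ : ℕ) : ℝ) :=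
          norm_sum_le_of_le _ fun d _ ↦
            (norm_moebius_mul_le d _).trans (norm_sum_Ioc_min_log_smul_pow_le _ _ _ _)
      _ = (N / q : ℕ) * (2 ^ i₀ * 2 ^ i₀) := by
          rw [sum_const, nsmul_eq_mul, Nat.Ioc_filter_dvd_card_eq_div, Nat.cast_pow, Nat.cast_ofNat]
      _ ≤ (N / q) * (2 ^ i₀ * 2 ^ i₀) := by
          gcongr
          exact Nat.cast_div_le
  · refine le_trans ?_ (sum_norm_sum_log_smul_fourierChar_pow_le hα hq hqa hαq N i₀)
    refine norm_sum_le_of_le _ fun d _ ↦ (norm_moebius_mul_le d _).trans_eq ?_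
    have hd : (𝐞 (d * α) : ℂ) = (𝐞 α : ℂ) ^ d := by
      rw [← nsmul_eq_mul, AddChar.map_nsmul_eq_pow, Circle.coe_pow]
    simp_rw [hd, pow_mul]
  · exact norm_sum_filter_dvd_moebius_mul_sum_log_smul_pow_le (by lia) N (𝐞 α)

lemma exists_isCoprime_abs_mul_sub_le_one_div_sqrt (α : ℝ) {N : ℕ} (hN : 0 < N) :
    ∃ (q : ℕ) (a : ℤ), 0 < q ∧ IsCoprime (q : ℤ) a ∧ (q : ℝ) ≤ √N ∧ |q * α - a| ≤ 1 / √N := by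
  obtain ⟨r, hr, hden⟩ := Real.exists_rat_abs_sub_le_and_den_le α (Nat.sqrt_pos.2 hN)
  have hden0 : (0 : ℝ) < r.den := mod_cast r.den_pos
  refine ⟨r.den, r.num, r.den_pos, ?_, ?_, ?_⟩
  · rw [Int.isCoprime_iff_gcd_eq_one, Int.gcd_comm]
    exact r.reduced
  · exact (Nat.cast_le.2 hden).trans Real.nat_sqrt_le_real_sqrt
  · have hnum : (r.den : ℝ) * α - r.num = r.den * (α - r) := by
      rw [mul_sub, mul_comm _ (r : ℝ)]
      exact_mod_cast congrArg (fun x : ℚ ↦ (r.den * α - x : ℝ)) (Rat.mul_den_eq_num r).symm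
    calc |r.den * α - r.num| = r.den * |α - r| := by rw [hnum, abs_mul, abs_of_pos hden0]
      _ ≤ r.den * (1 / ((Nat.sqrt N + 1) * r.den)) := by gcongr
      _ = 1 / (Nat.sqrt N + 1) := by field_simp
      _ ≤ 1 / √N := by
          gcongr
          exact Real.real_sqrt_le_nat_sqrt_succ

lemma tendsto_atTop_of_tendsto_abs_mul_sub {ι : Type*} {l : Filter ι} {α : ℝ} (hα : Irrational α)
    {q : ι → ℕ} {a : ι → ℤ} (hq : ∀ᶠ i in l, 0 < q i)
    (h : Tendsto (fun i ↦ |q i * α - a i|) l (𝓝 0)) : Tendsto q l atTop := by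
  have hne {j : ℕ} (hj : 0 < j) : ∀ᶠ i in l, q i ≠ j := by
    have hpos : 0 < |j * α - round (j * α)| :=
      abs_pos.2 (sub_ne_zero.2 ((hα.natCast_mul hj.ne').ne_int _))
    filter_upwards [h.eventually_lt_const hpos] with i hi hij
    rw [hij] at hi
    exact (round_le (j * α) (a i)).not_gt hi
  refine tendsto_atTop.2 fun Q ↦ ?_
  have hall : ∀ᶠ i in l, ∀ j ∈ Ico 1 Q, q i ≠ j :=
    (eventually_all_finset _).2 fun j hj ↦ hne (mem_Ico.1 hj).1
  filter_upwards [hq, hall] with i hi hQ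
  by_contra! hlt
  exact hQ (q i) (mem_Ico.2 ⟨hi, hlt⟩) rfl

lemma exists_tendsto_atTop_abs_mul_sub_le_one_div_sqrt {α : ℝ} (hα : Irrational α) :
    ∃ (q : ℕ → ℕ) (a : ℕ → ℤ), Tendsto q atTop atTop ∧ ∀ N, 0 < N →
      IsCoprime (q N : ℤ) (a N) ∧ (q N : ℝ) ≤ √N ∧ |q N * α - a N| ≤ 1 / √N := by
  choose! q a hq hqa using fun N hN ↦ exists_isCoprime_abs_mul_sub_le_one_div_sqrt α (N := N) hN
  refine ⟨q, a, tendsto_atTop_of_tendsto_abs_mul_sub (a := a) hα ?_ ?_, hqa⟩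
  · filter_upwards [eventually_gt_atTop 0] with N hN using hq N hN
  · refine squeeze_zero' (Eventually.of_forall fun N ↦ abs_nonneg _) ?_
      ((tendsto_const_nhds (x := (1 : ℝ))).div_atTop
        (Real.tendsto_sqrt_atTop.comp tendsto_natCast_atTop_atTop))
    filter_upwards [eventually_gt_atTop 0] with N hN using (hqa N hN).2.2

lemma tendsto_log_two_add_two_cube_div_sqrt :
    Tendsto (fun N : ℕ ↦ ((Nat.log 2 N : ℝ) + 2) ^ 3 / √N) atTop (𝓝 0) := by
  have hsqrt : (1 : ℝ) < √2 := Real.lt_sqrt_of_sq_lt (by norm_num)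
  have hlog : Tendsto (fun N ↦ Nat.log 2 N + 2) atTop atTop :=
    tendsto_atTop_atTop.2 fun b ↦ ⟨2 ^ b, fun N hN ↦
      (Nat.le_log_of_pow_le one_lt_two hN).trans (Nat.le_add_right _ _)⟩
  have hlim := ((tendsto_pow_const_div_const_pow_of_one_lt 3 hsqrt).comp hlog).const_mul 2
  rw [mul_zero] at hlim
  refine squeeze_zero' (Eventually.of_forall fun N ↦ by positivity) ?_ hlim
  filter_upwards [eventually_gt_atTop 0] with N hN
  have hpow : √2 ^ Nat.log 2 N ≤ √(N : ℝ) := by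
    refine Real.le_sqrt_of_sq_le ?_
    rw [← pow_mul, mul_comm, pow_mul, Real.sq_sqrt zero_le_two]
    exact_mod_cast Nat.pow_log_le_self 2 hN.ne'
  calc ((Nat.log 2 N : ℝ) + 2) ^ 3 / √N
      ≤ ((Nat.log 2 N : ℝ) + 2) ^ 3 / √2 ^ Nat.log 2 N := by gcongr
    _ = 2 * (((Nat.log 2 N + 2 : ℕ) : ℝ) ^ 3 / √2 ^ (Nat.log 2 N + 2)) := by
        rw [pow_add (√2), Real.sq_sqrt zero_le_two]
        push_cast
        field_simp

lemma summable_add_two_sq_div_two_pow : Summable fun i : ℕ ↦ ((i : ℝ) + 2) ^ 2 / 2 ^ i := by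
  have h := (summable_pow_mul_geometric_of_norm_lt_one 2 (r := (1 / 2 : ℝ)) (by norm_num))
  refine (((summable_nat_add_iff 2).2 h).mul_left 4).congr fun i ↦ ?_
  push_cast
  rw [pow_add, one_div, inv_pow, div_eq_mul_inv]
  ring

lemma norm_sum_vonMangoldt_mul_fourierChar_pow_div_le {α : ℝ} {q : ℕ} {a : ℤ}
    (hα : Irrational α) (hq : 2 ≤ q) (hqa : IsCoprime (q : ℤ) a) {N : ℕ} (hqN : (q : ℝ) ≤ √N)
    (hαN : |q * α - a| ≤ 1 / √N) (i₀ : ℕ) :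
    ‖∑ k ∈ Ioc 0 N, (vonMangoldt k : ℂ) * (𝐞 α : ℂ) ^ k‖ / N ≤
      60 * ∑ i ∈ Ico i₀ (Nat.log 2 N + 1), ((i : ℝ) + 2) ^ 2 / 2 ^ i +
        (‖moebiusLogSum (𝐞 α) (2 ^ i₀) N‖ / N + 2 ^ i₀ * 2 ^ i₀ / q +
          60 * ((Nat.log 2 N + 2) ^ 3 / √N) + 2 * (Real.log 4 + 4) / √q) := by
  have hq0 : (0 : ℝ) < q := mod_cast (by lia : 0 < q)
  have hN0 : (0 : ℝ) < √N := hq0.trans_le hqN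
  have hαq : |q * α - a| * q ≤ 1 := by
    calc |q * α - a| * q ≤ 1 / √N * √N := by gcongr
      _ = 1 := one_div_mul_cancel hN0.ne'
  have hN : (N : ℝ) = √N * √N := (Real.mul_self_sqrt N.cast_nonneg).symm
  have hNN : (0 : ℝ) < N := hN ▸ mul_pos hN0 hN0
  have hsum : 12 * q + 48 * |q * α - a| * N ≤ 60 * √N := by
    calc 12 * q + 48 * |q * α - a| * N ≤ 12 * √N + 48 * (1 / √N) * N := by gcongr
      _ = 60 * √N := by
          nth_rw 3 [hN]
          field_simp
          ring
  calc ‖∑ k ∈ Ioc 0 N, (vonMangoldt k : ℂ) * (𝐞 α : ℂ) ^ k‖ / N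
      ≤ (‖moebiusLogSum (𝐞 α) (2 ^ i₀) N‖ + (N / q) * (2 ^ i₀ * 2 ^ i₀) +
          (60 * N * ∑ i ∈ Ico i₀ (Nat.log 2 N + 1), ((i : ℝ) + 2) ^ 2 / 2 ^ i +
            60 * √N * (Nat.log 2 N + 2) ^ 3) +
          (Real.log 4 + 4) * (N / q) * (2 * √q)) / N := by
        gcongr
        refine (norm_sum_vonMangoldt_mul_fourierChar_pow_le hα hq hqa hαq N i₀).trans ?_
        gcongr
    _ = _ := by
        have hsqrtN : √(N : ℝ) / N = 1 / √N := by rw [Real.sqrt_div_self, one_div]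
        have hsqrtq : √(q : ℝ) / q = 1 / √q := by rw [Real.sqrt_div_self, one_div]
        calc _ = 60 * (∑ i ∈ Ico i₀ (Nat.log 2 N + 1), ((i : ℝ) + 2) ^ 2 / 2 ^ i) * (N / N) +
              (‖moebiusLogSum (𝐞 α) (2 ^ i₀) N‖ / N + 2 ^ i₀ * 2 ^ i₀ / q * (N / N) +
                60 * ((Nat.log 2 N + 2) ^ 3 * (√(N : ℝ) / N)) +
                2 * (Real.log 4 + 4) * (√(q : ℝ) / q) * (N / N)) := by ring
          _ = _ := by
              rw [hsqrtN, hsqrtq, div_self hNN.ne']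
              ring

lemma exists_fourierChar_eq (z : Circle) : ∃ α : ℝ, 𝐞 α = z := by
  refine ⟨Complex.arg z / (2 * Real.pi), ?_⟩
  rw [Real.fourierChar_apply', mul_div_cancel₀ _ Real.two_pi_pos.ne', Circle.exp_arg]

lemma irrational_of_not_isOfFinOrder_fourierChar {α : ℝ} (h : ¬IsOfFinOrder (𝐞 α)) :
    Irrational α := by
  rintro ⟨r, rfl⟩
  refine h (isOfFinOrder_iff_pow_eq_one.2 ⟨r.den, r.den_pos, ?_⟩)
  have hnum : (r.den : ℝ) * r = r.num := by
    rw [mul_comm]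
    exact_mod_cast r.mul_den_eq_num
  rw [← AddChar.map_nsmul_eq_pow, nsmul_eq_mul, hnum, Real.fourierChar_apply', mul_comm,
    Circle.exp_int_mul_two_pi]

theorem tendsto_norm_sum_vonMangoldt_mul_pow_div {z : Circle} (hz : ¬IsOfFinOrder z) :
    Tendsto (fun N : ℕ ↦ ‖∑ k ∈ Ioc 0 N, (vonMangoldt k : ℂ) * (z : ℂ) ^ k‖ / N) atTop (𝓝 0) := by
  obtain ⟨α, rfl⟩ := exists_fourierChar_eq z
  have hα := irrational_of_not_isOfFinOrder_fourierChar hz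
  obtain ⟨q, a, hqtop, hqa⟩ := exists_tendsto_atTop_abs_mul_sub_le_one_div_sqrt hα
  have hqR : Tendsto (fun N ↦ (q N : ℝ)) atTop atTop := tendsto_natCast_atTop_atTop.comp hqtop
  have herror (i₀ : ℕ) : Tendsto (fun N : ℕ ↦ ‖moebiusLogSum (𝐞 α) (2 ^ i₀) N‖ / N +
      2 ^ i₀ * 2 ^ i₀ / (q N : ℝ) + 60 * (((Nat.log 2 N : ℝ) + 2) ^ 3 / √N) +
      2 * (Real.log 4 + 4) / √(q N)) atTop (𝓝 0) := by
    simpa using (((tendsto_norm_moebiusLogSum_div hz (2 ^ i₀)).add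
      (tendsto_const_nhds.div_atTop hqR)).add
      (tendsto_log_two_add_two_cube_div_sqrt.const_mul 60)).add
      (tendsto_const_nhds.div_atTop (Real.tendsto_sqrt_atTop.comp hqR))
  rw [NormedAddGroup.tendsto_nhds_zero]
  intro ε hε
  obtain ⟨i₀, hi₀⟩ := ((tendsto_sum_nat_add fun i : ℕ ↦ ((i : ℝ) + 2) ^ 2 / 2 ^ i)
    |>.eventually_lt_const (show (0 : ℝ) < ε / 120 by positivity)).exists
  filter_upwards [eventually_gt_atTop 0, hqtop.eventually_ge_atTop 2,
    (herror i₀).eventually_lt_const (half_pos hε)] with N hN hq2 herr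
  have htail : ∑ i ∈ Ico i₀ (Nat.log 2 N + 1), ((i : ℝ) + 2) ^ 2 / 2 ^ i ≤
      ∑' i : ℕ, (((i + i₀ : ℕ) : ℝ) + 2) ^ 2 / 2 ^ (i + i₀) := by
    rw [sum_Ico_eq_sum_range]
    simp_rw [add_comm i₀]
    exact ((summable_nat_add_iff i₀).2 summable_add_two_sq_div_two_pow).sum_le_tsum _
      fun i _ ↦ by positivity
  obtain ⟨hcop, hqN, hαN⟩ := hqa N hN
  have hmain := norm_sum_vonMangoldt_mul_fourierChar_pow_div_le hα hq2 hcop hqN hαN i₀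
  rw [Real.norm_of_nonneg (by positivity)]
  linarith

end Vinogradov

section Herglotz

open MeasureTheory Topology ComplexConjugate
open scoped ComplexOrder

lemma sum_primitiveRoot_pow_zpow {K : Type*} [Field K] {ζ : K} {M : ℕ}
    (hζ : IsPrimitiveRoot ζ M) {n : ℤ} (hn : |n| < M) :
    ∑ l ∈ range M, (ζ ^ l) ^ n = if n = 0 then (M : K) else 0 := by
  split_ifs with h
  · simp [h]
  · have hne : ζ ^ n ≠ 1 := fun h1 ↦
      h (Int.eq_zero_of_abs_lt_dvd ((hζ.zpow_eq_one_iff_dvd n).1 h1) hn)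
    have hpow : (ζ ^ n) ^ M = 1 := by
      rw [← zpow_natCast, zpow_comm, zpow_natCast, hζ.pow_eq_one, one_zpow]
    simp_rw [← zpow_natCast ζ, zpow_comm ζ _ n, zpow_natCast]
    rw [geom_sum_eq hne, hpow, sub_self, zero_div]

lemma card_filter_sub_eq (N : ℕ) (n : ℤ) :
    #{p ∈ range N ×ˢ range N | (p.1 : ℤ) - p.2 = n} = N - n.natAbs := by
  rw [← card_range (N - n.natAbs)]
  symm
  refine card_nbij' (fun k ↦ (k + n.toNat, k + (-n).toNat)) (fun p ↦ min p.1 p.2) ?_ ?_ ?_ ?_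
  · intro k hk
    simp only [coe_range, Set.mem_Iio, coe_filter, mem_product, mem_range,
      Set.mem_ofPred_eq] at hk ⊢
    omega
  · rintro ⟨i, j⟩ h
    simp only [coe_range, Set.mem_Iio, coe_filter, mem_product, mem_range,
      Set.mem_ofPred_eq] at h ⊢
    omega
  · intro k _
    dsimp only
    omega
  · rintro ⟨i, j⟩ h
    simp only [coe_filter, mem_product, mem_range, Set.mem_ofPred_eq, Prod.mk.injEq] at h ⊢
    omega

/-- The `N × N` Toeplitz form with symbol `m`, evaluated at the coefficients `c`. -/
noncomputable def toeplitzForm (m : ℤ → ℂ) (N : ℕ) (c : ℕ → ℂ) : ℂ :=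
  ∑ i ∈ range N, ∑ j ∈ range N, c i * conj (c j) * m (i - j)

/-- Positive definiteness of a sequence indexed by `ℤ`: all its Toeplitz forms are nonnegative. -/
def IsPositiveDefiniteSeq (m : ℤ → ℂ) : Prop :=
  ∀ N c, 0 ≤ toeplitzForm m N c

lemma zpow_mul_toeplitzForm {z : ℂ} (hz : ‖z‖ = 1) (m : ℤ → ℂ) (N : ℕ) (n : ℤ) :
    z ^ n * toeplitzForm m N (fun i ↦ z⁻¹ ^ i) =
      ∑ p ∈ range N ×ˢ range N, z ^ (n - (p.1 - p.2)) * m (p.1 - p.2) := by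
  have hz0 : z ≠ 0 := by
    rintro rfl
    simp at hz
  have hconj : conj z⁻¹ = z := by rw [Complex.inv_eq_conj hz, Complex.conj_conj]
  rw [toeplitzForm, sum_product, mul_sum]
  refine sum_congr rfl fun i _ ↦ ?_
  rw [mul_sum]
  refine sum_congr rfl fun j _ ↦ ?_
  rw [map_pow, hconj, sub_sub_eq_add_sub, zpow_sub₀ hz0, zpow_add₀ hz0, zpow_natCast,
    zpow_natCast, inv_pow]
  field_simp

lemma sum_zpow_mul_toeplitzForm {N : ℕ} (hN : N ≠ 0) {ζ : ℂ} (hζ : IsPrimitiveRoot ζ (2 * N))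
    (m : ℤ → ℂ) {n : ℤ} (hn : n.natAbs ≤ N) :
    ∑ l ∈ range (2 * N), (ζ ^ l) ^ n * toeplitzForm m N (fun i ↦ (ζ ^ l)⁻¹ ^ i) =
      2 * N * (N - n.natAbs) * m n := by
  have hnorm (l : ℕ) : ‖ζ ^ l‖ = 1 := by
    rw [norm_pow, hζ.norm'_eq_one (by omega), one_pow]
  have horth : ∀ p ∈ range N ×ˢ range N,
      ∑ l ∈ range (2 * N), (ζ ^ l) ^ (n - (p.1 - p.2)) * m (p.1 - p.2) =
        if (p.1 : ℤ) - p.2 = n then 2 * N * m n else 0 := by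
    rintro ⟨i, j⟩ hp
    rw [mem_product, mem_range, mem_range] at hp
    dsimp only at hp ⊢
    rw [← sum_mul, sum_primitiveRoot_pow_zpow hζ (by rw [abs_lt]; omega)]
    simp only [sub_eq_zero, eq_comm (a := n)]
    split_ifs with h
    · rw [h]
      push_cast
      rfl
    · rw [zero_mul]
  simp_rw [zpow_mul_toeplitzForm (hnorm _)]
  rw [sum_comm, sum_congr rfl horth, ← sum_filter, sum_const, card_filter_sub_eq, nsmul_eq_mul,
    Nat.cast_sub hn]
  ring

noncomputable instance measurableSpaceCircle : MeasurableSpace Circle := borel Circle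

instance borelSpaceCircle : BorelSpace Circle := ⟨rfl⟩

lemma continuous_circle_zpow (n : ℤ) : Continuous fun z : Circle ↦ (z : ℂ) ^ n :=
  continuous_induced_dom.zpow₀ n fun z ↦ Or.inl z.coe_ne_zero

/- The measure puts on each `2N`-th root of unity the value of the Fejér mean of order `N` of the
Fourier series with coefficients `m`. -/
lemma IsPositiveDefiniteSeq.exists_finiteMeasure_fejer {m : ℤ → ℂ} (hm : IsPositiveDefiniteSeq m)
    {N : ℕ} (hN : N ≠ 0) :
    ∃ μ : FiniteMeasure Circle, ∀ n : ℤ, n.natAbs ≤ N →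
      ∫ z : Circle, (z : ℂ) ^ n ∂(μ : Measure Circle) = (1 - (n.natAbs : ℂ) / N) * m n := by
  have hζ := Complex.isPrimitiveRoot_exp (2 * N) (by omega)
  set ζ := Complex.exp (2 * Real.pi * Complex.I / (2 * N : ℕ))
  have hnorm (l : ℕ) : ‖ζ ^ l‖ = 1 := by
    rw [norm_pow, hζ.norm'_eq_one (by omega), one_pow]
  let z (l : ℕ) : Circle := ⟨ζ ^ l, mem_sphere_zero_iff_norm.2 (hnorm l)⟩
  let F (l : ℕ) : ℂ := toeplitzForm m N fun i ↦ (ζ ^ l)⁻¹ ^ i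
  have hF (l : ℕ) : ((F l).re : ℂ) = F l :=
    (Complex.eq_re_of_ofReal_le (r := 0) (by simpa using hm N _)).symm
  let w (l : ℕ) : ℝ := (F l).re / (2 * N * N)
  have hw (l : ℕ) : 0 ≤ w l := div_nonneg (Complex.nonneg_iff.1 (hm N _)).1 (by positivity)
  let μ : Measure Circle := ∑ l ∈ range (2 * N), ENNReal.ofReal (w l) • Measure.dirac (z l)
  have hμ : IsFiniteMeasure μ := by
    constructor
    simp only [μ, Measure.coe_finsetSum, Finset.sum_apply, Measure.smul_apply, smul_eq_mul,
      measure_univ, mul_one]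
    exact ENNReal.sum_lt_top.2 fun _ _ ↦ ENNReal.ofReal_lt_top
  refine ⟨⟨μ, hμ⟩, fun n hn ↦ ?_⟩
  have hdirac (l : ℕ) :
      ∫ y : Circle, (y : ℂ) ^ n ∂(ENNReal.ofReal (w l) • Measure.dirac (z l)) =
        (2 * N * N : ℂ)⁻¹ * ((ζ ^ l) ^ n * F l) := by
    rw [integral_smul_measure, integral_dirac, ENNReal.toReal_ofReal (hw l), Complex.real_smul,
      Complex.ofReal_div, hF]
    push_cast
    ring
  have hNC : (N : ℂ) ≠ 0 := Nat.cast_ne_zero.2 hN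
  calc ∫ y : Circle, (y : ℂ) ^ n ∂μ
      = ∑ l ∈ range (2 * N), (2 * N * N : ℂ)⁻¹ * ((ζ ^ l) ^ n * F l) := by
        rw [integral_finsetSum_measure fun l _ ↦
          (integrable_dirac (by simp)).smul_measure ENNReal.ofReal_ne_top]
        exact sum_congr rfl fun l _ ↦ hdirac l
    _ = (1 - (n.natAbs : ℂ) / N) * m n := by
        rw [← mul_sum, sum_zpow_mul_toeplitzForm hN hζ m hn]
        field_simp

theorem IsPositiveDefiniteSeq.exists_measure_integral_zpow_eq {m : ℤ → ℂ}
    (hm : IsPositiveDefiniteSeq m) :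
    ∃ μ : Measure Circle, IsFiniteMeasure μ ∧ ∀ n : ℤ, ∫ z : Circle, (z : ℂ) ^ n ∂μ = m n := by
  choose! μ hμ using fun N (hN : N ≠ 0) ↦ hm.exists_finiteMeasure_fejer hN
  have hmass : ∀ N ≠ 0, ((μ N).mass : ℂ) = m 0 := by
    intro N hN
    simpa using hμ N hN 0 (by simp)
  have hbdd : Tendsto μ atTop (𝓟 {ν : FiniteMeasure Circle | ν.mass ≤ (μ 1).mass}) := by
    rw [tendsto_principal]
    filter_upwards [eventually_ne_atTop 0] with N hN
    refine le_of_eq ?_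
    exact_mod_cast (hmass N hN).trans (hmass 1 one_ne_zero).symm
  let U : Ultrafilter ℕ := Ultrafilter.of atTop
  have hU : (U : Filter ℕ) ≤ atTop := Ultrafilter.of_le atTop
  obtain ⟨ν, -, hν⟩ := (isCompact_setOfPred_finiteMeasure_le_of_compactSpace Circle
    (μ 1).mass).ultrafilter_le_nhds (U.map μ) ((map_mono hU).trans hbdd)
  have hweak : Tendsto μ U (𝓝 ν) := hν
  rw [FiniteMeasure.tendsto_iff_forall_integral_rclike_tendsto ℂ] at hweak
  refine ⟨ν, inferInstance, fun n ↦ tendsto_nhds_unique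
    (hweak (BoundedContinuousFunction.mkOfCompact ⟨_, continuous_circle_zpow n⟩)) ?_⟩
  have hlim : Tendsto (fun N : ℕ ↦ (1 - (n.natAbs : ℂ) / N) * m n) atTop (𝓝 (m n)) := by
    simpa using
      ((tendsto_const_div_atTop_nhds_zero_nat (n.natAbs : ℂ)).const_sub 1).mul_const (m n)
  refine (hlim.congr' ?_).mono_left hU
  filter_upwards [eventually_ge_atTop n.natAbs, eventually_ne_atTop 0] with N hN hN0
  exact (hμ N hN0 n hN).symm

end Herglotz

section SpectralMeasure

open MeasureTheory Topology ComplexConjugate Polynomial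
open scoped ComplexOrder

variable {H : Type*} [NormedAddCommGroup H] [InnerProductSpace ℂ H] {T : H →L[ℂ] H} {x : H}

/-- The correlation sequence `n ↦ ⟨T^n x, x⟩` of a vector, extended to negative `n` by
`⟨x, T^(-n) x⟩`; for unitary `T` it is `⟨T^n x, x⟩` for every `n : ℤ`. Since `inner` is linear in
its second argument, the paper's `⟨a, b⟩` is `inner ℂ b a`. -/
noncomputable def powerCorrelation (T : H →L[ℂ] H) (x : H) (n : ℤ) : ℂ :=
  inner ℂ ((T ^ (-n).toNat) x) ((T ^ n.toNat) x)

lemma powerCorrelation_natCast (T : H →L[ℂ] H) (x : H) (n : ℕ) :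
    powerCorrelation T x n = inner ℂ x ((T ^ n) x) := by
  simp [powerCorrelation]

lemma powerCorrelation_neg (T : H →L[ℂ] H) (x : H) (n : ℤ) :
    powerCorrelation T x (-n) = conj (powerCorrelation T x n) := by
  simp [powerCorrelation]

lemma toeplitzForm_powerCorrelation_succ (T : H →L[ℂ] H) (x : H) (N : ℕ) (c : ℕ → ℂ) :
    toeplitzForm (powerCorrelation T x) (N + 1) c =
      toeplitzForm (powerCorrelation T x) N (fun i ↦ c (i + 1)) +
        ‖∑ i ∈ range (N + 1), c i • (T ^ i) x‖ ^ 2 -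
        ‖T (∑ i ∈ range N, c (i + 1) • (T ^ i) x)‖ ^ 2 := by
  have hTv : T (∑ i ∈ range N, c (i + 1) • (T ^ i) x) =
      ∑ i ∈ range N, c (i + 1) • (T ^ (i + 1)) x := by
    simp_rw [map_sum, map_smul, pow_succ', mul_apply_eq_comp]
  have hcol : inner ℂ (c 0 • x) (∑ i ∈ range N, c (i + 1) • (T ^ (i + 1)) x) =
      ∑ i ∈ range N, c (i + 1) * conj (c 0) * powerCorrelation T x (i + 1 : ℕ) := by
    rw [inner_sum]
    refine sum_congr rfl fun i _ ↦ ?_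
    rw [inner_smul_left, inner_smul_right, powerCorrelation_natCast]
    ring
  have hrow : inner ℂ (∑ i ∈ range N, c (i + 1) • (T ^ (i + 1)) x) (c 0 • x) =
      ∑ j ∈ range N, c 0 * conj (c (j + 1)) * powerCorrelation T x (-(j + 1 : ℕ)) := by
    rw [← inner_conj_symm, hcol, map_sum]
    refine sum_congr rfl fun i _ ↦ ?_
    rw [powerCorrelation_neg, map_mul, map_mul, Complex.conj_conj]
    ring
  have hdiag : inner ℂ (c 0 • x) (c 0 • x) = c 0 * conj (c 0) * powerCorrelation T x 0 := by
    rw [inner_smul_left, inner_smul_right, powerCorrelation]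
    simp only [neg_zero, Int.toNat_zero, pow_zero, one_apply_eq_self]
    ring
  rw [hTv, sum_range_succ' (fun i ↦ c i • (T ^ i) x), pow_zero, one_apply_eq_self]
  have hsq (v : H) : (‖v‖ ^ 2 : ℂ) = inner ℂ v v := (inner_self_eq_norm_sq_to_K v).symm
  rw [hsq, hsq, inner_add_add_self, hcol, hrow, hdiag]
  simp only [toeplitzForm, sum_range_succ', sum_add_distrib, Nat.cast_add, Nat.cast_one,
    Nat.cast_zero, add_sub_add_right_eq_sub, sub_zero, zero_sub]
  ring

/- For a unitary `T` this is an equality; each step of the induction loses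
`‖v‖ ^ 2 - ‖T v‖ ^ 2 ≥ 0`. -/
lemma norm_sum_pow_apply_sq_le_toeplitzForm (hT : ‖T‖ ≤ 1) (x : H) (N : ℕ) (c : ℕ → ℂ) :
    (‖∑ i ∈ range N, c i • (T ^ i) x‖ ^ 2 : ℂ) ≤ toeplitzForm (powerCorrelation T x) N c := by
  induction N generalizing c with
  | zero => simp [toeplitzForm]
  | succ N ih =>
    have hloss : (‖T (∑ i ∈ range N, c (i + 1) • (T ^ i) x)‖ ^ 2 : ℂ) ≤
        ‖∑ i ∈ range N, c (i + 1) • (T ^ i) x‖ ^ 2 := by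
      exact_mod_cast pow_le_pow_left₀ (norm_nonneg _) (T.le_of_opNorm_le_of_le hT le_rfl |>.trans_eq
        (one_mul _)) 2
    rw [toeplitzForm_powerCorrelation_succ, add_sub_right_comm]
    exact le_add_of_nonneg_left (sub_nonneg.2 (hloss.trans (ih _)))

lemma isPositiveDefiniteSeq_powerCorrelation (hT : ‖T‖ ≤ 1) (x : H) :
    IsPositiveDefiniteSeq (powerCorrelation T x) := fun N c ↦
  le_trans (by positivity) (norm_sum_pow_apply_sq_le_toeplitzForm hT x N c)

/-- The measure `μ` on the circle is the spectral measure of `x` with respect to the contraction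
`T`: its Fourier coefficients are the correlations of `x`. -/
def IsSpectralMeasure (T : H →L[ℂ] H) (x : H) (μ : Measure Circle) : Prop :=
  ∀ n : ℤ, ∫ z : Circle, (z : ℂ) ^ n ∂μ = powerCorrelation T x n

lemma exists_isSpectralMeasure (hT : ‖T‖ ≤ 1) (x : H) :
    ∃ μ : Measure Circle, IsFiniteMeasure μ ∧ IsSpectralMeasure T x μ :=
  (isPositiveDefiniteSeq_powerCorrelation hT x).exists_measure_integral_zpow_eq

lemma aeval_apply_eq_sum_range (T : H →L[ℂ] H) (x : H) (p : ℂ[X]) :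
    aeval T p x = ∑ i ∈ range (p.natDegree + 1), p.coeff i • (T ^ i) x := by
  simp [aeval_eq_sum_range]

lemma integrable_circle_of_continuous {μ : Measure Circle} [IsFiniteMeasure μ] {E : Type*}
    [NormedAddCommGroup E] {f : Circle → E} (hf : Continuous f) : Integrable f μ :=
  hf.integrable_of_hasCompactSupport (.of_compactSpace f)

variable {μ : Measure Circle} [IsFiniteMeasure μ]

lemma IsSpectralMeasure.integral_eval (hμ : IsSpectralMeasure T x μ) (p : ℂ[X]) :
    ∫ z : Circle, p.eval (z : ℂ) ∂μ = inner ℂ x (aeval T p x) := by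
  simp_rw [aeval_apply_eq_sum_range, eval_eq_sum_range, inner_sum, inner_smul_right,
    ← powerCorrelation_natCast, ← hμ _, zpow_natCast, ← integral_const_mul]
  exact integral_finsetSum _ fun i _ ↦ integrable_circle_of_continuous (by fun_prop)

lemma norm_eval_sq_eq_sum_zpow (p : ℂ[X]) (z : Circle) :
    ((‖p.eval (z : ℂ)‖ ^ 2 : ℝ) : ℂ) = ∑ i ∈ range (p.natDegree + 1),
      ∑ j ∈ range (p.natDegree + 1), p.coeff i * conj (p.coeff j) * (z : ℂ) ^ (i - j : ℤ) := by
  rw [Complex.ofReal_pow, ← Complex.mul_conj', eval_eq_sum_range, map_sum, sum_mul_sum]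
  refine sum_congr rfl fun i _ ↦ sum_congr rfl fun j _ ↦ ?_
  rw [map_mul, map_pow, ← Circle.coe_inv_eq_conj, zpow_sub₀ z.coe_ne_zero, zpow_natCast,
    zpow_natCast, Circle.coe_inv, inv_pow]
  ring

lemma IsSpectralMeasure.norm_aeval_apply_sq_le (hT : ‖T‖ ≤ 1) (hμ : IsSpectralMeasure T x μ)
    (p : ℂ[X]) : ‖aeval T p x‖ ^ 2 ≤ ∫ z : Circle, ‖p.eval (z : ℂ)‖ ^ 2 ∂μ := by
  have hint (i j : ℕ) :
      Integrable (fun z : Circle ↦ p.coeff i * conj (p.coeff j) * (z : ℂ) ^ (i - j : ℤ)) μ :=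
    (integrable_circle_of_continuous (continuous_circle_zpow _)).const_mul _
  have hform : toeplitzForm (powerCorrelation T x) (p.natDegree + 1) p.coeff =
      ∫ z : Circle, ‖p.eval (z : ℂ)‖ ^ 2 ∂μ := by
    rw [← integral_complex_ofReal]
    simp_rw [norm_eval_sq_eq_sum_zpow]
    rw [integral_finsetSum _ fun i _ ↦ integrable_finsetSum _ fun j _ ↦ hint i j]
    simp_rw [integral_finsetSum _ fun j _ ↦ hint _ j, integral_const_mul, hμ _]
    rfl
  have hle := norm_sum_pow_apply_sq_le_toeplitzForm hT x (p.natDegree + 1) p.coeff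
  rw [hform, ← aeval_apply_eq_sum_range] at hle
  exact_mod_cast hle

lemma IsSpectralMeasure.tendsto_aeval_apply_zero (hT : ‖T‖ ≤ 1) (hμ : IsSpectralMeasure T x μ)
    {ι : Type*} {l : Filter ι} [l.IsCountablyGenerated] {p : ι → ℂ[X]} {C : ℝ}
    (hbdd : ∀ i, ∀ z : Circle, ‖(p i).eval (z : ℂ)‖ ≤ C)
    (hlim : ∀ᵐ z : Circle ∂μ, Tendsto (fun i ↦ (p i).eval (z : ℂ)) l (𝓝 0)) :
    Tendsto (fun i ↦ aeval T (p i) x) l (𝓝 0) := by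
  have hint : Tendsto (fun i ↦ ∫ z : Circle, ‖(p i).eval (z : ℂ)‖ ^ 2 ∂μ) l
      (𝓝 (∫ _ : Circle, (0 : ℝ) ∂μ)) := by
    refine tendsto_integral_filter_of_dominated_convergence (fun _ ↦ C ^ 2)
      (Eventually.of_forall fun i ↦ Continuous.aestronglyMeasurable (by fun_prop))
      (Eventually.of_forall fun i ↦ Eventually.of_forall fun z ↦ ?_) (integrable_const _) ?_
    · rw [norm_pow, norm_norm]
      exact pow_le_pow_left₀ (norm_nonneg _) (hbdd i z) 2
    · filter_upwards [hlim] with z hz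
      simpa using hz.norm.pow 2
  rw [integral_zero] at hint
  rw [tendsto_zero_iff_norm_tendsto_zero]
  refine squeeze_zero (fun _ ↦ norm_nonneg _) (fun i ↦ ?_) (by simpa using hint.sqrt)
  exact Real.le_sqrt_of_sq_le (hμ.norm_aeval_apply_sq_le hT (p i))

theorem exists_tendsto_aeval_apply [CompleteSpace H] (hT : ‖T‖ ≤ 1) (x : H) {p : ℕ → ℂ[X]} {C : ℝ}
    (hbdd : ∀ N, ∀ z : Circle, ‖(p N).eval (z : ℂ)‖ ≤ C)
    (hlim : ∀ z : Circle, ∃ L, Tendsto (fun N ↦ (p N).eval (z : ℂ)) atTop (𝓝 L)) :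
    ∃ y, Tendsto (fun N ↦ aeval T (p N) x) atTop (𝓝 y) := by
  obtain ⟨μ, _, hμ⟩ := exists_isSpectralMeasure hT x
  have hsub : Tendsto (fun n : ℕ × ℕ ↦ aeval T (p n.1 - p n.2) x) atTop (𝓝 0) := by
    refine hμ.tendsto_aeval_apply_zero hT (C := C + C) (fun n z ↦ ?_)
      (Eventually.of_forall fun z ↦ ?_)
    · rw [eval_sub]
      exact (norm_sub_le _ _).trans (add_le_add (hbdd _ z) (hbdd _ z))
    · obtain ⟨L, hL⟩ := hlim z
      simp_rw [eval_sub, ← prod_atTop_atTop_eq]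
      simpa using (hL.comp tendsto_fst).sub (hL.comp tendsto_snd)
  refine cauchySeq_tendsto_of_complete (cauchySeq_iff_tendsto_dist_atTop_0.2 ?_)
  refine (tendsto_zero_iff_norm_tendsto_zero.1 hsub).congr fun n ↦ ?_
  rw [dist_eq_norm, map_sub, sub_apply]

end SpectralMeasure

section PointMasses

open MeasureTheory Topology ComplexConjugate Polynomial

lemma finite_setOf_circle_pow_eq_one {n : ℕ} (hn : n ≠ 0) : {z : Circle | z ^ n = 1}.Finite := by
  refine ((nthRootsFinset n (1 : ℂ)).finite_toSet.preimage Circle.coe_injective.injOn).subset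
    fun z (hz : z ^ n = 1) ↦ ?_
  rw [Set.mem_preimage, mem_coe, mem_nthRootsFinset (Nat.pos_of_ne_zero hn)]
  exact congrArg (fun w : Circle ↦ (w : ℂ)) hz

lemma countable_setOf_isOfFinOrder_circle : {z : Circle | IsOfFinOrder z}.Countable := by
  simp_rw [isOfFinOrder_iff_pow_eq_one, Set.ofPred_exists, Set.ofPred_and]
  refine Set.countable_iUnion fun n ↦ ?_
  rcases eq_or_ne n 0 with rfl | hn
  · simp
  · exact ((finite_setOf_circle_pow_eq_one hn).subset Set.inter_subset_right).countable

lemma tendsto_inv_mul_geom_sum {u : ℂ} (hu : ‖u‖ ≤ 1) (hu1 : u ≠ 1) :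
    Tendsto (fun N : ℕ ↦ (N : ℂ)⁻¹ * ∑ k ∈ range N, u ^ k) atTop (𝓝 0) := by
  refine squeeze_zero_norm (fun N ↦ ?_) (tendsto_const_div_atTop_nhds_zero_nat (2 / ‖u - 1‖))
  have hnum : ‖u ^ N - 1‖ ≤ 2 := by
    refine (norm_sub_le _ _).trans ?_
    rw [norm_pow, norm_one]
    linarith [pow_le_one₀ (n := N) (norm_nonneg u) hu]
  rw [geom_sum_eq hu1, norm_mul, norm_inv, Complex.norm_natCast, norm_div, div_eq_inv_mul _ (N : ℝ)]
  gcongr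

lemma norm_inv_mul_geom_sum_le {u : ℂ} (hu : ‖u‖ ≤ 1) (N : ℕ) :
    ‖(N : ℂ)⁻¹ * ∑ k ∈ range N, u ^ k‖ ≤ 1 := by
  have hsum : ‖∑ k ∈ range N, u ^ k‖ ≤ N := by
    simpa using norm_sum_le_of_le (range N) fun k _ ↦ (norm_pow u k).trans_le
      (pow_le_one₀ (norm_nonneg u) hu)
  rw [norm_mul, norm_inv, Complex.norm_natCast]
  exact inv_mul_le_one_of_le₀ hsum N.cast_nonneg

variable {H : Type*} [NormedAddCommGroup H] [InnerProductSpace ℂ H] {T : H →L[ℂ] H} {x : H}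
  {μ : Measure Circle} [IsFiniteMeasure μ]

lemma tendsto_inv_smul_sum_pow_apply_zero [CompleteSpace H] (hT : ‖T‖ ≤ 1)
    (hx : ∀ e, T e = e → inner ℂ x e = 0) :
    Tendsto (fun N : ℕ ↦ (N : ℂ)⁻¹ • ∑ k ∈ range N, (T ^ k) x) atTop (𝓝 0) := by
  have hproj : (T.eqLocus (1 : H →L[ℂ] H)).orthogonalProjectionOnto x = 0 := by
    refine Submodule.orthogonalProjectionOnto_eq_zero_iff.2
      ((Submodule.mem_orthogonal' _ _).2 fun e he ↦ hx e ?_)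
    simpa using he
  have hmean := T.tendsto_birkhoffAverage_orthogonalProjection hT x
  rw [hproj] at hmean
  refine hmean.congr fun N ↦ ?_
  simp [birkhoffAverage, birkhoffSum]

lemma IsSpectralMeasure.measure_singleton_eq_zero [CompleteSpace H] (hT : ‖T‖ ≤ 1)
    (hμ : IsSpectralMeasure T x μ) {ω : Circle}
    (hx : ∀ e, T e = (ω : ℂ) • e → inner ℂ x e = 0) : μ {ω} = 0 := by
  let p (N : ℕ) : ℂ[X] := C (N : ℂ)⁻¹ * ∑ k ∈ range N, (C (ω : ℂ)⁻¹ * X) ^ k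
  have heval (N : ℕ) (z : Circle) :
      (p N).eval (z : ℂ) = (N : ℂ)⁻¹ * ∑ k ∈ range N, ((z / ω : Circle) : ℂ) ^ k := by
    simp [p, eval_finsetSum, div_eq_inv_mul]
  have haeval (N : ℕ) :
      aeval T (p N) x = (N : ℂ)⁻¹ • ∑ k ∈ range N, (((ω : ℂ)⁻¹ • T) ^ k) x := by
    simp [p, ← Algebra.smul_def]
  have hrot : ‖(ω : ℂ)⁻¹ • T‖ ≤ 1 := by simpa only [norm_smul, norm_inv, Circle.norm_coe,
    inv_one, one_mul] using hT
  have hmean : Tendsto (fun N ↦ ∫ z : Circle, (p N).eval (z : ℂ) ∂μ) atTop (𝓝 0) := by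
    simp_rw [hμ.integral_eval, haeval]
    rw [← inner_zero_right x]
    refine tendsto_const_nhds.inner (tendsto_inv_smul_sum_pow_apply_zero hrot fun e he ↦ hx e ?_)
    conv_rhs => rw [← he, smul_apply, smul_inv_smul₀ ω.coe_ne_zero]
  have hmass : Tendsto (fun N ↦ ∫ z : Circle, (p N).eval (z : ℂ) ∂μ) atTop
      (𝓝 (∫ z : Circle, Set.indicator {ω} (fun _ ↦ (1 : ℂ)) z ∂μ)) := by
    refine tendsto_integral_of_dominated_convergence (fun _ ↦ 1)
      (fun N ↦ Continuous.aestronglyMeasurable (by fun_prop)) (integrable_const _)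
      (fun N ↦ Eventually.of_forall fun z ↦ ?_) (Eventually.of_forall fun z ↦ ?_)
    · rw [heval]
      exact norm_inv_mul_geom_sum_le (Circle.norm_coe _).le N
    · simp_rw [heval]
      rcases eq_or_ne z ω with rfl | hz
      · rw [Set.indicator_of_mem (Set.mem_singleton _)]
        refine tendsto_const_nhds.congr' ?_
        filter_upwards [eventually_ne_atTop 0] with N hN
        simp [hN]
      · rw [Set.indicator_of_notMem (by simpa using hz)]
        refine tendsto_inv_mul_geom_sum (Circle.norm_coe _).le ?_
        rwa [ne_eq, Circle.coe_eq_one, div_eq_one]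
  have hzero := tendsto_nhds_unique hmass hmean
  rw [integral_indicator_const _ (measurableSet_singleton ω)] at hzero
  simpa [measureReal_eq_zero_iff] using hzero

lemma adjoint_apply_of_apply_eq_smul [CompleteSpace H] (hT : ‖T‖ ≤ 1) {ω : Circle} {e : H}
    (he : T e = (ω : ℂ) • e) : T.adjoint e = conj (ω : ℂ) • e := by
  have hnorm : ‖T.adjoint e‖ ≤ ‖e‖ := by
    simpa using T.adjoint.le_of_opNorm_le ((LinearIsometryEquiv.norm_map _ T).trans_le hT) e
  have hinner : inner ℂ (T.adjoint e) (conj (ω : ℂ) • e) = ((‖e‖ ^ 2 : ℝ) : ℂ) := by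
    rw [ContinuousLinearMap.adjoint_inner_left, map_smul, he, smul_smul, Complex.conj_mul',
      Circle.norm_coe]
    simp
  have hsq : ‖T.adjoint e - conj (ω : ℂ) • e‖ ^ 2 ≤ 0 := by
    rw [norm_sub_sq (𝕜 := ℂ), hinner, norm_smul, RCLike.norm_conj, Circle.norm_coe, one_mul,
      RCLike.re_to_complex, Complex.ofReal_re]
    linarith [pow_le_pow_left₀ (norm_nonneg _) hnorm 2]
  exact sub_eq_zero.1 (norm_eq_zero.1 (pow_eq_zero_iff two_ne_zero |>.1
    (le_antisymm hsq (sq_nonneg _))))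

lemma norm_inner_pow_apply_of_apply_eq_smul [CompleteSpace H] (hT : ‖T‖ ≤ 1) {ω : Circle} {e : H}
    (he : T e = (ω : ℂ) • e) (v : H) (n : ℕ) : ‖(inner ℂ ((T ^ n) v) e : ℂ)‖ = ‖inner ℂ v e‖ := by
  induction n with
  | zero => simp
  | succ n ih =>
    rw [pow_succ', mul_apply_eq_comp, ← ContinuousLinearMap.adjoint_inner_right,
      adjoint_apply_of_apply_eq_smul hT he, inner_smul_right, norm_mul, RCLike.norm_conj,
      Circle.norm_coe, one_mul, ih]

lemma inner_eq_zero_of_tendsto_inner_pow_apply [CompleteSpace H] (hT : ‖T‖ ≤ 1) {ω : Circle}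
    {e : H} (he : T e = (ω : ℂ) • e) {ι : Type*} {l : Filter ι} [l.NeBot] {n : ι → ℕ}
    (hn : Tendsto (fun i ↦ inner ℂ ((T ^ n i) x) e) l (𝓝 0)) : inner ℂ x e = 0 := by
  have hnorm := hn.norm
  simp_rw [norm_inner_pow_apply_of_apply_eq_smul hT he, norm_zero] at hnorm
  exact norm_eq_zero.1 (tendsto_nhds_unique tendsto_const_nhds hnorm)

end PointMasses

section VonMangoldtAverages

open MeasureTheory Topology Polynomial ArithmeticFunction

/-- The polynomial `N⁻¹ ∑_{k ≤ N} Λ(k) X^k`. Evaluating it at a point of the circle and at a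
contraction gives the averages compared through the spectral measure. -/
noncomputable def vonMangoldtPolynomial (N : ℕ) : ℂ[X] :=
  C (N : ℂ)⁻¹ * ∑ k ∈ Icc 1 N, C (vonMangoldt k : ℂ) * X ^ k

lemma eval_vonMangoldtPolynomial (N : ℕ) (z : ℂ) :
    (vonMangoldtPolynomial N).eval z = (N : ℂ)⁻¹ * ∑ k ∈ Icc 1 N, (vonMangoldt k : ℂ) * z ^ k := by
  simp [vonMangoldtPolynomial, eval_finsetSum]

lemma norm_eval_vonMangoldtPolynomial_le (N : ℕ) {z : ℂ} (hz : ‖z‖ ≤ 1) :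
    ‖(vonMangoldtPolynomial N).eval z‖ ≤ Real.log 4 + 4 := by
  have hterm (k : ℕ) : ‖(vonMangoldt k : ℂ) * z ^ k‖ ≤ vonMangoldt k := by
    rw [norm_mul, norm_pow, Complex.norm_real, Real.norm_of_nonneg vonMangoldt_nonneg]
    exact mul_le_of_le_one_right vonMangoldt_nonneg (pow_le_one₀ (norm_nonneg z) hz)
  have hsum : ‖∑ k ∈ Icc 1 N, (vonMangoldt k : ℂ) * z ^ k‖ ≤ (Real.log 4 + 4) * N :=
    calc _ ≤ ∑ k ∈ Icc 1 N, vonMangoldt k := norm_sum_le_of_le _ fun k _ ↦ hterm k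
      _ = Chebyshev.psi N := sum_vonMangoldt_eq_psi N
      _ ≤ (Real.log 4 + 4) * N := Chebyshev.psi_le_const_mul_self N.cast_nonneg
  rw [eval_vonMangoldtPolynomial, norm_mul, norm_inv, Complex.norm_natCast, ← div_eq_inv_mul]
  exact div_le_of_le_mul₀ N.cast_nonneg (by positivity) hsum

lemma tendsto_eval_vonMangoldtPolynomial_zero {z : Circle} (hz : ¬IsOfFinOrder z) :
    Tendsto (fun N ↦ (vonMangoldtPolynomial N).eval (z : ℂ)) atTop (𝓝 0) := by
  refine squeeze_zero_norm (fun N ↦ le_of_eq ?_) (tendsto_norm_sum_vonMangoldt_mul_pow_div hz)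
  rw [eval_vonMangoldtPolynomial, norm_mul, norm_inv, Complex.norm_natCast, ← div_eq_inv_mul]
  rfl

lemma exists_tendsto_eval_vonMangoldtPolynomial (z : Circle) :
    ∃ L, Tendsto (fun N ↦ (vonMangoldtPolynomial N).eval (z : ℂ)) atTop (𝓝 L) := by
  by_cases hz : IsOfFinOrder z
  · obtain ⟨q, hq, hzq⟩ := isOfFinOrder_iff_pow_eq_one.1 hz
    have : NeZero q := ⟨hq.ne'⟩
    simp_rw [eval_vonMangoldtPolynomial]
    exact exists_tendsto_sum_vonMangoldt_mul_pow (by rw [← Circle.coe_pow, hzq, Circle.coe_one])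
  · exact ⟨0, tendsto_eval_vonMangoldtPolynomial_zero hz⟩

variable {H : Type*} [NormedAddCommGroup H] [InnerProductSpace ℂ H] {T : H →L[ℂ] H}

lemma aeval_vonMangoldtPolynomial_apply (T : H →L[ℂ] H) (x : H) (N : ℕ) :
    aeval T (vonMangoldtPolynomial N) x =
      (N : ℂ)⁻¹ • ∑ k ∈ Icc 1 N, (vonMangoldt k : ℂ) • (T ^ k) x := by
  simp [vonMangoldtPolynomial, ← Algebra.smul_def]

theorem exists_tendsto_sum_vonMangoldt_smul_pow_apply [CompleteSpace H] (hT : ‖T‖ ≤ 1) (x : H) :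
    ∃ y, Tendsto (fun N : ℕ ↦ (N : ℂ)⁻¹ • ∑ k ∈ Icc 1 N, (vonMangoldt k : ℂ) • (T ^ k) x)
      atTop (𝓝 y) := by
  simp_rw [← aeval_vonMangoldtPolynomial_apply]
  exact exists_tendsto_aeval_apply hT x
    (fun N z ↦ norm_eval_vonMangoldtPolynomial_le N (Circle.norm_coe z).le)
    exists_tendsto_eval_vonMangoldtPolynomial

theorem tendsto_sum_vonMangoldt_smul_pow_apply_zero [CompleteSpace H] (hT : ‖T‖ ≤ 1) {x : H}
    (hx : ∀ ω : Circle, IsOfFinOrder ω → ∀ e, T e = (ω : ℂ) • e → inner ℂ x e = 0) :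
    Tendsto (fun N : ℕ ↦ (N : ℂ)⁻¹ • ∑ k ∈ Icc 1 N, (vonMangoldt k : ℂ) • (T ^ k) x)
      atTop (𝓝 0) := by
  obtain ⟨μ, _, hμ⟩ := exists_isSpectralMeasure hT x
  have hae : ∀ᵐ z : Circle ∂μ, ¬IsOfFinOrder z := by
    refine measure_mono_null (fun z hz ↦ ?_)
      ((measure_biUnion_null_iff countable_setOf_isOfFinOrder_circle).2 fun ω hω ↦
        hμ.measure_singleton_eq_zero hT (hx ω hω))
    simpa using hz
  simp_rw [← aeval_vonMangoldtPolynomial_apply]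
  refine hμ.tendsto_aeval_apply_zero hT
    (fun N z ↦ norm_eval_vonMangoldtPolynomial_le N (Circle.norm_coe z).le) ?_
  filter_upwards [hae] with z hz using tendsto_eval_vonMangoldtPolynomial_zero hz

end VonMangoldtAverages

section PrimeAverages

open Topology ArithmeticFunction

lemma sum_range_primeCounting_nth {M : Type*} [AddCommMonoid M] (f : ℕ → M) (N : ℕ) :
    ∑ j ∈ range (Nat.primeCounting N), f (Nat.nth Nat.Prime j) = ∑ p ∈ Nat.primesLE N, f p := by
  induction N with
  | zero => simp
  | succ N ih =>
    rw [Nat.primesLE_succ, Nat.primeCounting, Nat.primeCounting', Nat.count_succ]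
    split_ifs with hN
    · rw [sum_range_succ, Nat.nth_count hN, sum_insert (Nat.notMem_primesLE N), ← ih, add_comm]
      rfl
    · exact ih

lemma primeCounting_nth_prime (n : ℕ) : Nat.primeCounting (Nat.nth Nat.Prime n) = n + 1 :=
  Nat.count_nth_succ_of_infinite Nat.infinite_setOfPred_prime n

lemma tendsto_psi_sub_theta_div :
    Tendsto (fun N : ℕ ↦ (Chebyshev.psi N - Chebyshev.theta N) / N) atTop (𝓝 0) := by
  obtain ⟨C, hC⟩ := Chebyshev.psi_sub_theta_le_mul_sqrt
  have hsqrt : Tendsto (fun N : ℕ ↦ C * (√(N : ℝ))⁻¹) atTop (𝓝 (C * 0)) :=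
    (tendsto_inv_atTop_zero.comp
      (Real.tendsto_sqrt_atTop.comp tendsto_natCast_atTop_atTop)).const_mul C
  rw [mul_zero] at hsqrt
  refine squeeze_zero (fun N ↦ ?_) (fun N ↦ ?_) hsqrt
  · exact div_nonneg (sub_nonneg.2 (Chebyshev.theta_le_psi _)) N.cast_nonneg
  · rw [← one_div, ← Real.sqrt_div_self', ← mul_div_assoc]
    exact div_le_div_of_nonneg_right (hC N) N.cast_nonneg

lemma tendsto_theta_div : Tendsto (fun N : ℕ ↦ Chebyshev.theta N / N) atTop (𝓝 1) := by
  have h := tendsto_sum_vonMangoldt_div.sub tendsto_psi_sub_theta_div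
  rw [sub_zero] at h
  refine h.congr fun N ↦ ?_
  rw [sum_vonMangoldt_eq_psi]
  ring

lemma tendsto_primeCounting_sub_theta_div_log :
    Tendsto (fun N : ℕ ↦ (Nat.primeCounting N - Chebyshev.theta N / Real.log N) *
      (Real.log N / N)) atTop (𝓝 0) := by
  obtain ⟨C, hC⟩ := (Chebyshev.primeCounting_sub_theta_div_log_isBigO.comp_tendsto
    tendsto_natCast_atTop_atTop).bound
  have hlog : Tendsto (fun N : ℕ ↦ C * (Real.log N)⁻¹) atTop (𝓝 (C * 0)) :=
    (tendsto_inv_atTop_zero.comp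
      (Real.tendsto_log_atTop.comp tendsto_natCast_atTop_atTop)).const_mul C
  rw [mul_zero] at hlog
  refine squeeze_zero_norm' ?_ hlog
  filter_upwards [hC, eventually_gt_atTop 1] with N hCN hN
  have hL : 0 < Real.log N := Real.log_pos (by exact_mod_cast hN)
  simp only [Function.comp, Nat.floor_natCast] at hCN
  rw [Real.norm_of_nonneg (by positivity : (0 : ℝ) ≤ N / Real.log N ^ 2)] at hCN
  rw [norm_mul, Real.norm_of_nonneg (by positivity : (0 : ℝ) ≤ Real.log N / N)]
  refine (mul_le_mul_of_nonneg_right hCN (by positivity)).trans_eq ?_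
  field_simp

lemma eventually_inv_primeCounting_le :
    ∀ᶠ N : ℕ in atTop, (Nat.primeCounting N : ℝ)⁻¹ ≤ 2 * (Real.log N / N) := by
  filter_upwards [tendsto_theta_div.eventually_const_lt one_half_lt_one, eventually_gt_atTop 1]
    with N hθ hN
  have hN₀ : (0 : ℝ) < N := by positivity
  have hL : 0 < Real.log N := Real.log_pos (by exact_mod_cast hN)
  have hle : N / 2 ≤ Nat.primeCounting N * Real.log N := by
    rw [lt_div_iff₀ hN₀] at hθ
    linarith [Chebyshev.theta_le_pi_mul_log N]
  have hπ : (0 : ℝ) < Nat.primeCounting N := by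
    refine pos_of_mul_pos_left (lt_of_lt_of_le (by positivity) hle) hL.le
  rw [inv_le_iff_one_le_mul₀ hπ, ← mul_div_assoc, div_mul_eq_mul_div, le_div_iff₀ hN₀]
  linarith

variable {E : Type*} [NormedAddCommGroup E] [NormedSpace ℂ E] {u : ℕ → E} {y : E} {B : ℝ}

lemma tendsto_sum_not_prime_vonMangoldt_smul_zero (hu : ∀ k, ‖u k‖ ≤ B) :
    Tendsto (fun N : ℕ ↦ (N : ℂ)⁻¹ • ∑ k ∈ Icc 1 N with ¬k.Prime, (vonMangoldt k : ℂ) • u k)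
      atTop (𝓝 0) := by
  have hdiff := tendsto_psi_sub_theta_div.mul_const B
  rw [zero_mul] at hdiff
  refine squeeze_zero_norm (fun N ↦ ?_) hdiff
  rw [norm_smul, norm_inv, Complex.norm_natCast, Chebyshev.psi_sub_theta_eq_sum_not_prime,
    Nat.floor_natCast, div_mul_eq_mul_div, div_eq_inv_mul, sum_mul]
  refine mul_le_mul_of_nonneg_left (norm_sum_le_of_le _ fun k _ ↦ ?_) (by positivity)
  rw [norm_smul, Complex.norm_real, Real.norm_of_nonneg vonMangoldt_nonneg]
  exact mul_le_mul_of_nonneg_left (hu k) vonMangoldt_nonneg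

theorem tendsto_sum_log_smul_primesLE (hu : ∀ k, ‖u k‖ ≤ B)
    (h : Tendsto (fun N : ℕ ↦ (N : ℂ)⁻¹ • ∑ k ∈ Icc 1 N, (vonMangoldt k : ℂ) • u k)
      atTop (𝓝 y)) :
    Tendsto (fun N : ℕ ↦ (N : ℂ)⁻¹ • ∑ p ∈ Nat.primesLE N, (Real.log p : ℂ) • u p)
      atTop (𝓝 y) := by
  have hsub := h.sub (tendsto_sum_not_prime_vonMangoldt_smul_zero hu)
  rw [sub_zero] at hsub
  refine hsub.congr fun N ↦ ?_
  rw [← smul_sub, ← sum_filter_add_sum_filter_not (Icc 1 N) Nat.Prime, add_sub_cancel_right,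
    Nat.primesLE_eq_filter_Icc_one]
  refine congrArg _ (sum_congr rfl fun p hp ↦ ?_)
  rw [vonMangoldt_apply_prime (mem_filter.1 hp).2]

lemma tendsto_sum_log_smul_sub_zero
    (h : Tendsto (fun N : ℕ ↦ (N : ℂ)⁻¹ • ∑ p ∈ Nat.primesLE N, (Real.log p : ℂ) • u p)
      atTop (𝓝 y)) :
    Tendsto (fun N : ℕ ↦ (N : ℂ)⁻¹ • ∑ p ∈ Nat.primesLE N, (Real.log p : ℂ) • (u p - y))
      atTop (𝓝 0) := by
  have hθ : Tendsto (fun N : ℕ ↦ ((Chebyshev.theta N / N : ℝ) : ℂ) • y) atTop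
      (𝓝 (((1 : ℝ) : ℂ) • y)) :=
    ((Complex.continuous_ofReal.tendsto 1).comp tendsto_theta_div).smul_const y
  have hsub := h.sub hθ
  rw [Complex.ofReal_one, one_smul, sub_self] at hsub
  refine hsub.congr fun N ↦ ?_
  simp_rw [smul_sub, sum_sub_distrib, ← sum_smul]
  rw [smul_sub, smul_smul, Chebyshev.theta_eq_sum_primesLE_log, Complex.ofReal_div,
    Complex.ofReal_sum, Complex.ofReal_natCast, div_eq_inv_mul]

lemma sum_one_sub_log_div_log (N : ℕ) :
    ∑ p ∈ Nat.primesLE N, (1 - Real.log p / Real.log N) =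
      Nat.primeCounting N - Chebyshev.theta N / Real.log N := by
  rw [sum_sub_distrib, ← sum_div, ← Chebyshev.theta_eq_sum_primesLE_log, sum_const,
    Nat.primesLE_card_eq_primeCounting, nsmul_one]

lemma norm_sum_primesLE_le (hu : ∀ k, ‖u k‖ ≤ B) {N : ℕ} (hN : 1 < N) :
    ‖∑ p ∈ Nat.primesLE N, u p‖ ≤
      (Real.log N)⁻¹ * ‖∑ p ∈ Nat.primesLE N, (Real.log p : ℂ) • u p‖ +
        (Nat.primeCounting N - Chebyshev.theta N / Real.log N) * B := by
  have hL : 0 < Real.log N := Real.log_pos (by exact_mod_cast hN)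
  have hsplit : ∑ p ∈ Nat.primesLE N, u p =
      (((Real.log N)⁻¹ : ℝ) : ℂ) • ∑ p ∈ Nat.primesLE N, (Real.log p : ℂ) • u p +
        ∑ p ∈ Nat.primesLE N, ((1 - Real.log p / Real.log N : ℝ) : ℂ) • u p := by
    rw [smul_sum, ← sum_add_distrib]
    refine sum_congr rfl fun p _ ↦ ?_
    rw [smul_smul, ← add_smul, ← Complex.ofReal_mul, ← Complex.ofReal_add, ← div_eq_inv_mul,
      add_sub_cancel, Complex.ofReal_one, one_smul]
  have hrest : ‖∑ p ∈ Nat.primesLE N, ((1 - Real.log p / Real.log N : ℝ) : ℂ) • u p‖ ≤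
      (Nat.primeCounting N - Chebyshev.theta N / Real.log N) * B := by
    rw [← sum_one_sub_log_div_log, sum_mul]
    refine norm_sum_le_of_le _ fun p hp ↦ ?_
    obtain ⟨hpN, hp⟩ := Nat.mem_primesLE.1 hp
    have hle : 0 ≤ 1 - Real.log p / Real.log N := by
      rw [sub_nonneg, div_le_one hL]
      exact Real.log_le_log (by exact_mod_cast hp.pos) (by exact_mod_cast hpN)
    rw [norm_smul, Complex.norm_real, Real.norm_of_nonneg hle]
    exact mul_le_mul_of_nonneg_left (hu p) hle
  rw [hsplit]
  refine (norm_add_le _ _).trans (add_le_add ?_ hrest)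
  rw [norm_smul, Complex.norm_real, Real.norm_of_nonneg (inv_nonneg.2 hL.le)]

lemma tendsto_inv_primeCounting_smul_sum_zero (hu : ∀ k, ‖u k‖ ≤ B)
    (h : Tendsto (fun N : ℕ ↦ (N : ℂ)⁻¹ • ∑ p ∈ Nat.primesLE N, (Real.log p : ℂ) • u p)
      atTop (𝓝 0)) :
    Tendsto (fun N : ℕ ↦ (Nat.primeCounting N : ℂ)⁻¹ • ∑ p ∈ Nat.primesLE N, u p)
      atTop (𝓝 0) := by
  have hbound := (h.norm.const_mul 2).add
    (tendsto_primeCounting_sub_theta_div_log.const_mul (2 * B))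
  rw [norm_zero, mul_zero, mul_zero, add_zero] at hbound
  refine squeeze_zero_norm' ?_ hbound
  filter_upwards [eventually_inv_primeCounting_le, eventually_gt_atTop 1] with N hπ hN
  have hL : 0 < Real.log N := Real.log_pos (by exact_mod_cast hN)
  rw [norm_smul, norm_smul, norm_inv, norm_inv, Complex.norm_natCast, Complex.norm_natCast]
  refine (mul_le_mul hπ (norm_sum_primesLE_le hu hN) (norm_nonneg _)
    (by positivity)).trans_eq ?_
  rw [mul_add]
  congr 1
  · field_simp
  · ring

theorem tendsto_inv_primeCounting_smul_sum (hu : ∀ k, ‖u k‖ ≤ B)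
    (h : Tendsto (fun N : ℕ ↦ (N : ℂ)⁻¹ • ∑ p ∈ Nat.primesLE N, (Real.log p : ℂ) • u p)
      atTop (𝓝 y)) :
    Tendsto (fun N : ℕ ↦ (Nat.primeCounting N : ℂ)⁻¹ • ∑ p ∈ Nat.primesLE N, u p)
      atTop (𝓝 y) := by
  have hdiff := (tendsto_inv_primeCounting_smul_sum_zero
    (fun k ↦ norm_sub_le_of_le (hu k) le_rfl) (tendsto_sum_log_smul_sub_zero h)).add_const y
  rw [zero_add] at hdiff
  refine hdiff.congr' ?_
  filter_upwards [eventually_ge_atTop 2] with N hN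
  have hπ : (Nat.primeCounting N : ℂ) ≠ 0 := by
    rw [Nat.cast_ne_zero, ne_eq, Nat.primeCounting_eq_zero_iff]
    lia
  rw [sum_sub_distrib, sum_const, Nat.primesLE_card_eq_primeCounting, ← Nat.cast_smul_eq_nsmul ℂ,
    smul_sub, inv_smul_smul₀ hπ, sub_add_cancel]

theorem tendsto_inv_smul_sum_nth_prime (hu : ∀ k, ‖u k‖ ≤ B)
    (h : Tendsto (fun N : ℕ ↦ (N : ℂ)⁻¹ • ∑ p ∈ Nat.primesLE N, (Real.log p : ℂ) • u p)
      atTop (𝓝 y)) :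
    Tendsto (fun n : ℕ ↦ (n : ℂ)⁻¹ • ∑ j ∈ range n, u (Nat.nth Nat.Prime j)) atTop (𝓝 y) := by
  rw [← tendsto_add_atTop_iff_nat 1]
  refine ((tendsto_inv_primeCounting_smul_sum hu h).comp
    (Nat.nth_strictMono Nat.infinite_setOfPred_prime).tendsto_atTop).congr fun n ↦ ?_
  rw [Function.comp_apply, ← sum_range_primeCounting_nth, primeCounting_nth_prime]

end PrimeAverages

lemma norm_pow_apply_le {H : Type*} [NormedAddCommGroup H] [NormedSpace ℂ H] {T : H →L[ℂ] H}
    (hT : ‖T‖ ≤ 1) (x : H) (k : ℕ) : ‖(T ^ k) x‖ ≤ ‖x‖ := by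
  induction k with
  | zero => simp
  | succ k ih =>
    rw [pow_succ', mul_apply_eq_comp]
    exact (T.le_of_opNorm_le hT _).trans ((one_mul _).trans_le ih)

/-- Let `T` be a contraction on a complex Hilbert space `H`. Then for every
`x ∈ H` the averages along the primes `(1/n) ∑_{j=1}^n T^{p_j} x` converge in norm; the limit
equals `lim_N (1/N) ∑_{j=1}^{π(N)} (log p_j) T^{p_j} x = lim_N (1/N) ∑_{k=1}^N Λ(k) T^k x`,
and it is `0` whenever `x` is a flight vector of `T` (i.e. `T^{n_j} x → 0` weakly along some
strictly increasing `(n_j)`). -/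
theorem stmt13 {H : Type*} [NormedAddCommGroup H] [InnerProductSpace ℂ H] [CompleteSpace H]
    (T : H →L[ℂ] H) (hT : ‖T‖ ≤ 1) (x : H) :
    ∃ y : H,
      Tendsto (fun n : ℕ =>
          (n : ℂ)⁻¹ • ∑ j ∈ range n, (T ^ (Nat.nth Nat.Prime j)) x) atTop (nhds y) ∧
      Tendsto (fun N : ℕ =>
          (N : ℂ)⁻¹ • ∑ j ∈ range (Nat.primeCounting N),
            ((Real.log (Nat.nth Nat.Prime j) : ℝ) : ℂ) • (T ^ (Nat.nth Nat.Prime j)) x)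
        atTop (nhds y) ∧
      Tendsto (fun N : ℕ =>
          (N : ℂ)⁻¹ • ∑ k ∈ Icc 1 N, ((ArithmeticFunction.vonMangoldt k : ℝ) : ℂ) • (T ^ k) x)
        atTop (nhds y) ∧
      ((∃ n : ℕ → ℕ, StrictMono n ∧
          ∀ z : H, Tendsto (fun j : ℕ => (inner ℂ ((T ^ n j) x) z : ℂ)) atTop (nhds 0)) →
        y = 0) := by
  have hbound := norm_pow_apply_le hT x
  obtain ⟨y, hy⟩ := exists_tendsto_sum_vonMangoldt_smul_pow_apply hT x
  have hlog := tendsto_sum_log_smul_primesLE hbound hy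
  have hprime := tendsto_inv_smul_sum_nth_prime hbound hlog
  refine ⟨y, hprime, hlog.congr fun N ↦ ?_, hy, ?_⟩
  · rw [sum_range_primeCounting_nth fun p ↦ (Real.log p : ℂ) • (T ^ p) x]
  · rintro ⟨n, -, hn⟩
    exact tendsto_nhds_unique hy (tendsto_sum_vonMangoldt_smul_pow_apply_zero hT
      fun ω _ e he ↦ inner_eq_zero_of_tendsto_inner_pow_apply hT he (hn e))
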